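/- arXiv:2101.11094 — 7 statements merged into one kernel-verified Lean document; each statement's English description precedes it below -/
import Mathlib

section
/- Let M, N be positive integers, let φ : [0,∞) → (0,1] be non-increasing, and let L ∈ ℝ^{M×N} be φ-multiplicatively badly approximable, with each row's entries together with 1 linearly independent over ℚ. Then there exists a constant c₀ > 0 depending only on M and N such that for all Q = (Q_1,…,Q_N) ∈ [1,∞)^N with Q := (Q_1⋯Q_N)^{1/N} ≥ 2 one has S_L(Q) ≤ c₀ [ Q^N (log(Q/φ(Q)))^M + (Q^N/φ(Q)) (log(Q/φ(Q)))^{M−1} ]. -/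
/-- Distance from a real number to the nearest integer. -/
noncomputable def distNearestInt (x : ℝ) : ℝ := |x - round x|

/-- The geometric mean `(Q₁ ⋯ Q_N)^(1/N)`. -/
noncomputable def geomMean (N : ℕ) (Q : Fin N → ℝ) : ℝ := (∏ j, Q j) ^ ((1 : ℝ) / (N : ℝ))

/-- `L` is `φ`-multiplicatively badly approximable. -/
def multBadlyApprox (M N : ℕ) (φ : ℝ → ℝ) (L : Matrix (Fin M) (Fin N) ℝ) : Prop :=
  ∀ q : Fin N → ℤ, q ≠ 0 →
    φ ((∏ j, max 1 |(q j : ℝ)|) ^ ((1 : ℝ) / (N : ℝ))) ≤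
      (∏ j, max 1 |(q j : ℝ)|) * ∏ i, distNearestInt (∑ j, L i j * (q j : ℝ))

/-- The entries of each row of `L`, together with `1`, are linearly independent over `ℚ`. -/
def rowUnitIndep (M N : ℕ) (L : Matrix (Fin M) (Fin N) ℝ) : Prop :=
  ∀ i, LinearIndependent ℚ (Fin.cons (1 : ℝ) (fun j => L i j) : Fin (N + 1) → ℝ)

/-- The sum `S_L(Q)` of reciprocals of fractional parts over the aligned box `∏ [-Q_j, Q_j]`. -/
noncomputable def SLQ (M N : ℕ) (L : Matrix (Fin M) (Fin N) ℝ) (Q : Fin N → ℝ) : ℝ :=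
  ∑ q ∈ (Fintype.piFinset fun j => Finset.Icc ⌈-Q j⌉ ⌊Q j⌋).erase 0,
    ∏ i, (distNearestInt (∑ j, L i j * (q j : ℝ)))⁻¹


theorem card_hyperplane {ι : Type*} [Fintype ι] [DecidableEq ι] (S : Finset (ι → ℝ)) (a : ι → ℝ) (ha : a ≠ 0)
    (t : ℝ) (ht : 0 < t) (ht1 : t ≤ 1)
    (h0 : ∀ x ∈ S, ∑ i, a i * x i = 0) (h1 : ∀ x ∈ S, ∀ i, |x i| ≤ 1)
    (hs : ∀ x ∈ S, ∀ y ∈ S, x ≠ y → ∃ i, t ≤ |x i - y i|) :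
    (S.card : ℝ) ≤ ((2 * Fintype.card ι + 2) / t) ^ (Fintype.card ι - 1) := by
  classical
  obtain ⟨i0, hi0⟩ : ∃ i, a i ≠ 0 := by
    by_contra! h; exact ha (funext h)
  obtain ⟨m, -, hm⟩ := Finset.exists_max_image Finset.univ (fun i => |a i|) ⟨i0, Finset.mem_univ _⟩
  have ham : 0 < |a m| := lt_of_lt_of_le (abs_pos.2 hi0) (hm i0 (Finset.mem_univ _))
  set d : ℝ := ((Fintype.card ι : ℕ) : ℝ) with hd
  have hdpos : 1 ≤ d := by
    have : 0 < Fintype.card ι := Fintype.card_pos_iff.2 ⟨m⟩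
    rw [hd]; exact_mod_cast this
  have hcard : S.card ≤ (Fintype.piFinset (fun _ : {i // i ≠ m} => Finset.Icc ⌊-(d / t)⌋ ⌊d / t⌋)).card := by
    apply Finset.card_le_card_of_injOn (fun x => fun i : {i // i ≠ m} => ⌊x i * (d / t)⌋)
    · intro x hx
      simp only [Finset.mem_coe, Fintype.mem_piFinset, Finset.mem_Icc]
      intro i
      have := abs_le.1 (h1 x hx i)
      have hp : 0 < d / t := by positivity
      constructor
      · apply Int.floor_le_floor; nlinarith
      · apply Int.floor_le_floor; nlinarith
    · intro x hx y hy hxy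
      by_contra hne
      obtain ⟨i, hi⟩ := hs x hx y hy hne
      have hlt : ∀ j, j ≠ m → |x j - y j| < t / d := by
        intro j hj
        have h2 := congrFun hxy ⟨j, hj⟩
        have h3 := Int.abs_sub_lt_one_of_floor_eq_floor h2
        rw [← sub_mul, abs_mul, abs_of_pos (by positivity : 0 < d / t)] at h3
        rw [lt_div_iff₀ (by positivity)]
        have : |x j - y j| * d = (|x j - y j| * (d / t)) * t := by field_simp
        rw [this]; nlinarith
      have hmm : |x m - y m| ≤ (d - 1) * (t / d) := by
        have e : a m * (x m - y m) = - ∑ j ∈ Finset.univ.erase m, a j * (x j - y j) := by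
          have e1 : ∑ j, a j * (x j - y j) = 0 := by
            simp only [mul_sub, Finset.sum_sub_distrib]
            rw [h0 x hx, h0 y hy]; ring
          rw [← Finset.add_sum_erase _ _ (Finset.mem_univ m)] at e1
          linarith
        have e2 : |a m| * |x m - y m| ≤ |a m| * ((d - 1) * (t / d)) := by
          rw [← abs_mul, e, abs_neg]
          refine (Finset.abs_sum_le_sum_abs _ _).trans ?_
          have : ∀ j ∈ Finset.univ.erase m, |a j * (x j - y j)| ≤ |a m| * (t / d) := by
            intro j hj
            rw [abs_mul]
            exact mul_le_mul (hm j (Finset.mem_univ _)) (hlt j (Finset.ne_of_mem_erase hj)).le (abs_nonneg _) (abs_nonneg _)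
          refine (Finset.sum_le_card_nsmul _ _ _ this).trans ?_
          rw [Finset.card_erase_of_mem (Finset.mem_univ _), Finset.card_univ, nsmul_eq_mul,
            Nat.cast_sub (Fintype.card_pos_iff.2 ⟨m⟩)]
          apply le_of_eq; push_cast; ring
        exact le_of_mul_le_mul_left e2 ham
      have hfin : |x i - y i| < t := by
        by_cases him : i = m
        · subst him
          refine lt_of_le_of_lt hmm ?_
          have : (d - 1) * (t / d) = t - t / d := by field_simp
          rw [this]
          have : 0 < t / d := by positivity
          linarith
        · exact (hlt i him).trans_le (div_le_self ht.le hdpos)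
      linarith
  rw [Fintype.card_piFinset, Finset.prod_const, Finset.card_univ, Fintype.card_subtype_compl,
    Fintype.card_subtype_eq, Int.card_Icc] at hcard
  have : (S.card : ℝ) ≤ ((⌊d / t⌋ + 1 - ⌊-(d / t)⌋).toNat : ℝ) ^ (Fintype.card ι - 1) := by exact_mod_cast hcard
  refine this.trans ?_
  gcongr
  have hnn : 0 ≤ ⌊d / t⌋ + 1 - ⌊-(d / t)⌋ := by
    have : ⌊-(d / t)⌋ ≤ ⌊d / t⌋ := Int.floor_le_floor (by have : 0 < d / t := by positivity
                                                          linarith)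
    linarith
  have e : ((⌊d / t⌋ + 1 - ⌊-(d / t)⌋).toNat : ℝ) = ((⌊d / t⌋ + 1 - ⌊-(d / t)⌋ : ℤ) : ℝ) := by
    exact_mod_cast Int.toNat_of_nonneg hnn
  rw [e]; push_cast
  have h1 := Int.floor_le (d / t)
  have h2 := Int.lt_floor_add_one (-(d / t))
  have h3 : 1 ≤ 1 / t := by rw [le_div_iff₀ ht]; linarith
  have h4 : (2 * d + 2) / t = 2 * (d / t) + 2 * (1 / t) := by ring
  rw [h4]; linarith
open MeasureTheory in
theorem card_spanning {ι : Type*} [Fintype ι] [DecidableEq ι] (A : (ι → ℝ) →ₗ[ℝ] (ι → ℝ))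
    (hA : LinearMap.det A ≠ 0) (S : Finset (ι → ℤ))
    (h1 : ∀ z ∈ S, ‖A (fun i => (z i : ℝ))‖ ≤ 1)
    (hspan : Submodule.span ℝ ((fun z : ι → ℤ => A (fun i => (z i : ℝ))) '' (S : Set (ι → ℤ))) = ⊤) :
    (S.card : ℝ) ≤ (2 * (Fintype.card ι + 1)) ^ Fintype.card ι * |LinearMap.det A|⁻¹ := by
  classical
  obtain ⟨f, hf, hfs, -⟩ := Submodule.exists_fun_fin_finrank_span_eq ℝ
    ((fun z : ι → ℤ => A (fun i => (z i : ℝ))) '' (S : Set (ι → ℤ)))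
  have hrank : Module.finrank ℝ (Submodule.span ℝ ((fun z : ι → ℤ => A (fun i => (z i : ℝ))) '' (S : Set (ι → ℤ)))) = Fintype.card ι := by
    rw [hspan, finrank_top, Module.finrank_fintype_fun_eq_card]
  replace hfs := hfs.trans hspan
  generalize Module.finrank ℝ (Submodule.span ℝ ((fun z : ι → ℤ => A (fun i => (z i : ℝ))) '' (S : Set (ι → ℤ)))) = n at f hf hfs hrank
  subst hrank
  choose v hvS hv using hf
  set b := Pi.basisFun ℝ ι with hb
  let G := (Submodule.span ℤ (Set.range b)).toAddSubgroup
  have memG : ∀ z : ι → ℤ, (fun i => (z i : ℝ)) ∈ G := by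
    intro z
    change _ ∈ Submodule.span ℤ (Set.range b)
    rw [Module.Basis.mem_span_iff_repr_mem]
    intro i
    exact ⟨z i, by simp [hb]⟩
  let T : Set (ι → ℝ) := A ⁻¹' Metric.closedBall 0 (Fintype.card ι + 1)
  have hAcont : Continuous A := LinearMap.continuous_of_finiteDimensional A
  have hT : MeasurableSet T := (Metric.isClosed_closedBall.preimage hAcont).measurableSet
  have hvol : volume T = ENNReal.ofReal ((2 * (Fintype.card ι + 1)) ^ Fintype.card ι * |LinearMap.det A|⁻¹) := by
    rw [Measure.addHaar_preimage_linearMap _ hA, Real.volume_pi_closedBall _ (by positivity),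
      ← ENNReal.ofReal_mul (abs_nonneg _), abs_inv, mul_comm]
  have hF := ZSpan.isAddFundamentalDomain' b (volume : Measure (ι → ℝ))
  have hFvol : volume (ZSpan.fundamentalDomain b) = 1 := by
    rw [hb, ZSpan.fundamentalDomain_pi_basisFun, Real.volume_pi_Ico]; simp
  have : Countable (Submodule.span ℤ (Set.range b)).toAddSubgroup :=
    inferInstanceAs (Countable (Submodule.span ℤ (Set.range b)))
  have key := hF.lintegral_eq_tsum'' (T.indicator 1)
  rw [lintegral_indicator_one hT, ← lintegral_tsum] at key
  swap
  · intro g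
    apply Measurable.aemeasurable
    exact (measurable_one.indicator hT).comp (measurable_const_vadd g)
  have hpt : ∀ y : ι → ℝ, (S.card : ENNReal) ≤ ∑' g : G, T.indicator 1 (g +ᵥ y) := by
    intro y
    have hy : A y ∈ Submodule.span ℝ (Set.range f) := by rw [hfs]; trivial
    obtain ⟨c, hc⟩ := (Submodule.mem_span_range_iff_exists_fun ℝ).1 hy
    let x0 : ι → ℤ := fun i => - ∑ k, ⌊c k⌋ * v k i
    let e : (ι → ℤ) → G := fun z => ⟨fun i => ((z i + x0 i : ℤ) : ℝ), memG (fun i => z i + x0 i)⟩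
    have he : Function.Injective e := by
      intro z z' h
      funext i
      have := congrFun (Subtype.ext_iff.1 h) i
      simp only [e] at this
      have h2 : z i + x0 i = z' i + x0 i := by exact_mod_cast this
      linarith
    refine le_trans ?_ (ENNReal.sum_le_tsum (S.image e))
    rw [Finset.sum_image (fun a _ b _ h => he h)]
    have : ∀ z ∈ S, T.indicator (1 : (ι → ℝ) → ENNReal) (e z +ᵥ y) = 1 := by
      intro z hz
      rw [Set.indicator_of_mem]; · rfl
      change A (e z +ᵥ y) ∈ Metric.closedBall 0 _
      rw [mem_closedBall_zero_iff]
      have e1 : (e z +ᵥ y : ι → ℝ) = (fun i => (z i : ℝ)) + (y - ∑ k, (⌊c k⌋ : ℝ) • (fun i => (v k i : ℝ))) := by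
        funext i
        simp [e, x0, AddSubgroup.vadd_def]
        ring
      have e2 : A (e z +ᵥ y) = A (fun i => (z i : ℝ)) + ∑ k, Int.fract (c k) • f k := by
        rw [e1, map_add, map_sub, map_sum, ← hc, ← Finset.sum_sub_distrib]
        congr 1
        apply Finset.sum_congr rfl
        intro k _
        rw [map_smul, ← hv k, ← sub_smul]; rfl
      rw [e2]
      refine (norm_add_le _ _).trans ?_
      have n2 : ‖∑ k, Int.fract (c k) • f k‖ ≤ Fintype.card ι := by
        refine (norm_sum_le _ _).trans ?_
        have : ∀ k ∈ (Finset.univ : Finset (Fin (Fintype.card ι))), ‖Int.fract (c k) • f k‖ ≤ 1 := by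
          intro k _
          rw [norm_smul, ← hv k, Real.norm_eq_abs, abs_of_nonneg (Int.fract_nonneg _)]
          have := h1 _ (hvS k)
          have := (Int.fract_lt_one (c k)).le
          exact mul_le_one₀ this (norm_nonneg _) (h1 _ (hvS k))
        refine (Finset.sum_le_card_nsmul _ _ _ this).trans ?_
        simp
      have := h1 z hz
      linarith
    rw [Finset.sum_congr rfl this]; simp
  have h3 : (S.card : ENNReal) ≤ volume T := by
    rw [key]
    calc (S.card : ENNReal) = ∫⁻ y in ZSpan.fundamentalDomain b, (S.card : ENNReal) := by
          rw [lintegral_const]; simp [hFvol]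
      _ ≤ _ := lintegral_mono hpt
  rw [hvol, ← ENNReal.ofReal_natCast] at h3
  exact (ENNReal.ofReal_le_ofReal_iff (by positivity)).1 h3

theorem card_lattice {ι : Type*} [Fintype ι] [DecidableEq ι] (A : (ι → ℝ) →ₗ[ℝ] (ι → ℝ))
    (hA : LinearMap.det A ≠ 0) (S : Finset (ι → ℤ)) (t : ℝ) (ht : 0 < t) (ht1 : t ≤ 1)
    (h1 : ∀ z ∈ S, ∀ i, |A (fun i => (z i : ℝ)) i| ≤ 1)
    (hs : ∀ x ∈ S, ∀ y ∈ S, x ≠ y → ∃ i, t ≤ |A (fun i => (x i : ℝ)) i - A (fun i => (y i : ℝ)) i|) :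
    (S.card : ℝ) ≤ (2 * (Fintype.card ι + 1)) ^ Fintype.card ι *
      (|LinearMap.det A|⁻¹ + (t⁻¹) ^ (Fintype.card ι - 1)) := by
  classical
  have hbig : (1 : ℝ) ≤ 2 * (Fintype.card ι + 1) := by
    have : (0 : ℝ) ≤ Fintype.card ι := Nat.cast_nonneg _
    linarith
  by_cases hspan : Submodule.span ℝ ((fun z : ι → ℤ => A (fun i => (z i : ℝ))) '' (S : Set (ι → ℤ))) = ⊤
  · refine (card_spanning A hA S (fun z hz => ?_) hspan).trans ?_
    · rw [pi_norm_le_iff_of_nonneg zero_le_one]; exact h1 z hz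
    · apply mul_le_mul_of_nonneg_left _ (by positivity)
      exact le_add_of_nonneg_right (by positivity)
  · obtain ⟨f, hf0, hf⟩ := Submodule.exists_le_ker_of_lt_top _ (lt_top_iff_ne_top.2 hspan)
    have hinj : Set.InjOn (fun z : ι → ℤ => A (fun i => (z i : ℝ))) S := by
      intro x hx y hy hxy
      by_contra hne
      obtain ⟨i, hi⟩ := hs x hx y hy hne
      have := congrFun hxy i
      simp only at this
      rw [this] at hi; simp at hi; linarith
    have := card_hyperplane (S.image (fun z : ι → ℤ => A (fun i => (z i : ℝ))))
      (fun i => f (fun j => if i = j then 1 else 0)) ?_ t ht ht1 ?_ ?_ ?_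
    · rw [Finset.card_image_of_injOn hinj] at this
      refine this.trans ?_
      rw [div_eq_mul_inv, mul_pow, mul_add]
      have e : (2 * (Fintype.card ι : ℝ) + 2) ^ (Fintype.card ι - 1) ≤ (2 * (Fintype.card ι + 1)) ^ Fintype.card ι := by
        rw [show 2 * (Fintype.card ι : ℝ) + 2 = 2 * (Fintype.card ι + 1) by ring]
        exact pow_le_pow_right₀ hbig (Nat.sub_le _ _)
      have e2 := mul_le_mul_of_nonneg_right e (by positivity : 0 ≤ t⁻¹ ^ (Fintype.card ι - 1))
      have : 0 ≤ (2 * ((Fintype.card ι : ℝ) + 1)) ^ Fintype.card ι * |LinearMap.det A|⁻¹ := by positivity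
      linarith
    · intro h
      apply hf0
      ext x
      simp only [LinearMap.coe_comp, Function.comp_apply, LinearMap.coe_single, LinearMap.zero_comp, LinearMap.zero_apply]
      have := congrFun h x
      simp only [Pi.zero_apply] at this
      rw [← this]; congr 1; funext j; simp [Pi.single_apply, eq_comm]
    · intro x hx
      obtain ⟨z, hz, rfl⟩ := Finset.mem_image.1 hx
      have : f (A (fun i => (z i : ℝ))) = 0 := hf (Submodule.subset_span ⟨z, hz, rfl⟩)
      rw [LinearMap.pi_apply_eq_sum_univ] at this
      refine Eq.trans ?_ this; apply Finset.sum_congr rfl; intro i _; rw [smul_eq_mul, mul_comm]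
    · intro x hx
      obtain ⟨z, hz, rfl⟩ := Finset.mem_image.1 hx
      exact h1 z hz
    · intro x hx y hy hne
      obtain ⟨z, hz, rfl⟩ := Finset.mem_image.1 hx
      obtain ⟨w, hw, rfl⟩ := Finset.mem_image.1 hy
      exact hs z hz w hw (by rintro rfl; exact hne rfl)

theorem card_linear_forms {J I : Type*} [Fintype J] [DecidableEq J] [Fintype I] [DecidableEq I]
    (L : I → J → ℝ) (Q : J → ℝ) (δ : I → ℝ) (hQ : ∀ j, 0 < Q j) (hδ : ∀ i, 0 < δ i)
    (S : Finset (J ⊕ I → ℤ)) (t : ℝ) (ht : 0 < t) (ht1 : t ≤ 1)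
    (h1 : ∀ z ∈ S, ∀ j, |(z (Sum.inl j) : ℝ)| ≤ Q j)
    (h2 : ∀ z ∈ S, ∀ i, |∑ j, L i j * (z (Sum.inl j) : ℝ) - z (Sum.inr i)| ≤ δ i)
    (hs : ∀ x ∈ S, ∀ y ∈ S, x ≠ y →
      (∃ j, t * Q j ≤ |(x (Sum.inl j) : ℝ) - y (Sum.inl j)|) ∨
      ∃ i, t * δ i ≤ |(∑ j, L i j * (x (Sum.inl j) : ℝ) - x (Sum.inr i)) - (∑ j, L i j * (y (Sum.inl j) : ℝ) - y (Sum.inr i))|) :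
    (S.card : ℝ) ≤ (2 * ((Fintype.card J + Fintype.card I : ℕ) + 1)) ^ (Fintype.card J + Fintype.card I) *
      ((∏ j, Q j) * (∏ i, δ i) + (t⁻¹) ^ (Fintype.card J + Fintype.card I - 1)) := by
  classical
  let B : Matrix (J ⊕ I) (J ⊕ I) ℝ := Matrix.fromBlocks (Matrix.diagonal fun j => (Q j)⁻¹) 0
    (Matrix.of fun i j => L i j * (δ i)⁻¹) (Matrix.diagonal fun i => - (δ i)⁻¹)
  have hdet : |B.det| = ((∏ j, Q j) * (∏ i, δ i))⁻¹ := by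
    simp only [B]
    rw [Matrix.det_fromBlocks_zero₁₂, Matrix.det_diagonal, Matrix.det_diagonal, abs_mul, Finset.abs_prod, Finset.abs_prod,
      mul_inv, ← Finset.prod_inv_distrib, ← Finset.prod_inv_distrib]
    congr 1
    · apply Finset.prod_congr rfl; intro j _; rw [abs_inv, abs_of_pos (hQ j)]
    · apply Finset.prod_congr rfl; intro j _; rw [abs_neg, abs_inv, abs_of_pos (hδ j)]
  have hpos : 0 < (∏ j, Q j) * (∏ i, δ i) :=
    mul_pos (Finset.prod_pos fun j _ => hQ j) (Finset.prod_pos fun j _ => hδ j)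
  have hBl : ∀ (z : J ⊕ I → ℝ) j, Matrix.toLin' B z (Sum.inl j) = z (Sum.inl j) / Q j := by
    intro z j
    simp [B, Matrix.mulVec, dotProduct, Matrix.diagonal_apply, div_eq_inv_mul]
  have hBr : ∀ (z : J ⊕ I → ℝ) i, Matrix.toLin' B z (Sum.inr i) = (∑ j, L i j * z (Sum.inl j) - z (Sum.inr i)) / δ i := by
    intro z i
    simp [B, Matrix.mulVec, dotProduct, Matrix.diagonal_apply, sub_div, Finset.sum_div]
    rw [sub_eq_add_neg]
    congr 1
    · apply Finset.sum_congr rfl; intro j _; ring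
    · ring
  have := card_lattice (Matrix.toLin' B) ?_ S t ht ht1 ?_ ?_
  · rw [LinearMap.det_toLin', hdet, inv_inv, Fintype.card_sum] at this
    exact this
  · rw [LinearMap.det_toLin', ← abs_pos, hdet]; positivity
  · rintro z hz (j | i)
    · rw [hBl, abs_div, abs_of_pos (hQ j)]; exact div_le_one_of_le₀ (h1 z hz j) (hQ j).le
    · rw [hBr, abs_div, abs_of_pos (hδ i)]; exact div_le_one_of_le₀ (h2 z hz i) (hδ i).le
  · intro x hx y hy hne
    rcases hs x hx y hy hne with ⟨j, hj⟩ | ⟨i, hi⟩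
    · refine ⟨Sum.inl j, ?_⟩
      rw [hBl, hBl, ← sub_div, abs_div, abs_of_pos (hQ j), le_div_iff₀ (hQ j)]; exact hj
    · refine ⟨Sum.inr i, ?_⟩
      rw [hBr, hBr, ← sub_div, abs_div, abs_of_pos (hδ i), le_div_iff₀ (hδ i)]; exact hi

theorem pow_ineq (P u X : ℝ) (e n : ℕ) (hP : 0 ≤ P) (hu : 0 ≤ u) (hPu : P ≤ u ^ n)
    (hX : P * u ^ (e + 1) ≤ X) :
    P * u ^ e ≤ X ^ (1 - 1 / ((n + (e + 1) : ℕ) : ℝ)) := by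
  have hd : 0 < ((n + (e + 1) : ℕ) : ℝ) := by positivity
  have hX0 : 0 ≤ X := le_trans (by positivity) hX
  have h1 : (P * u ^ e) ^ (n + (e + 1)) ≤ X ^ (n + e) := by
    calc (P * u ^ e) ^ (n + (e + 1)) = P * (P ^ (n + e) * u ^ (e * (n + (e + 1)))) := by
          rw [mul_pow, ← pow_mul]; ring
      _ ≤ u ^ n * (P ^ (n + e) * u ^ (e * (n + (e + 1)))) := by gcongr
      _ = (P * u ^ (e + 1)) ^ (n + e) := by
          rw [mul_pow, ← pow_mul]; ring
      _ ≤ X ^ (n + e) := by gcongr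
  have h2 : P * u ^ e = ((P * u ^ e) ^ (n + (e + 1))) ^ (1 / ((n + (e + 1) : ℕ) : ℝ)) := by
    rw [one_div, Real.pow_rpow_inv_natCast (by positivity) (by omega)]
  rw [h2]
  refine (Real.rpow_le_rpow (by positivity) h1 (by positivity)).trans (le_of_eq ?_)
  rw [← Real.rpow_natCast X, ← Real.rpow_mul hX0]
  congr 1
  field_simp
  push_cast; ring

theorem card_class {N M : ℕ} (hM : 0 < M) (L : Fin M → Fin N → ℝ) (Q : Fin N → ℝ) (δ : Fin M → ℝ)
    (hQ : ∀ j, 1 ≤ Q j) (hδ : ∀ i, 0 < δ i) (c : ℝ) (hc : 0 < c)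
    (bad : ∀ w : Fin N → ℤ, w ≠ 0 → (∀ j, |(w j : ℝ)| ≤ Q j) → ∀ r : Fin M → ℤ,
      c ≤ (∏ j, max 1 |(w j : ℝ)|) * ∏ i, |∑ j, L i j * (w j : ℝ) - r i|)
    (S : Finset (Fin N → ℤ)) (p : (Fin N → ℤ) → Fin M → ℤ)
    (hS : ∀ s ∈ S, ∀ j, |(s j : ℝ)| ≤ Q j)
    (hS1 : ∀ s ∈ S, ∀ s' ∈ S, ∀ j, |(s j : ℝ) - s' j| ≤ Q j)
    (hS2 : ∀ s ∈ S, ∀ s' ∈ S, ∀ i,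
      |(∑ j, L i j * (s j : ℝ) - p s i) - (∑ j, L i j * (s' j : ℝ) - p s' i)| ≤ δ i) :
    (S.card : ℝ) ≤ 3 ^ N * (2 * ((N + M : ℕ) + 1)) ^ (N + M) *
      (1 + (∏ j, Q j) * (∏ i, δ i) +
        ((∏ j, Q j) * (∏ i, δ i) / c) ^ (1 - 1 / ((N + M : ℕ) : ℝ))) := by
  classical
  have hQ0 : ∀ j, 0 < Q j := fun j => zero_lt_one.trans_le (hQ j)
  have hV : 0 < (∏ j, Q j) * (∏ i, δ i) :=
    mul_pos (Finset.prod_pos fun j _ => hQ0 j) (Finset.prod_pos fun j _ => hδ j)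
  have hX : 0 ≤ ((∏ j, Q j) * (∏ i, δ i) / c) ^ (1 - 1 / ((N + M : ℕ) : ℝ)) := by positivity
  have hC2 : (1 : ℝ) ≤ 2 * ((N + M : ℕ) + 1) := by
    have : (0 : ℝ) ≤ ((N + M : ℕ) : ℝ) := Nat.cast_nonneg _
    linarith
  have hC : (1 : ℝ) ≤ 3 ^ N * (2 * ((N + M : ℕ) + 1)) ^ (N + M) :=
    one_le_mul_of_one_le_of_one_le (one_le_pow₀ (by norm_num)) (one_le_pow₀ hC2)
  by_cases hcard : S.card ≤ 1
  · have : (S.card : ℝ) ≤ 1 := by exact_mod_cast hcard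
    nlinarith
  push Not at hcard
  let E : (Fin N → ℤ) → Fin M → ℝ := fun s i => ∑ j, L i j * (s j : ℝ) - p s i
  let g : (Fin N → ℤ) × (Fin N → ℤ) → Fin N ⊕ Fin M → ℝ := fun x =>
    Sum.elim (fun j => |(x.1 j : ℝ) - x.2 j| / Q j) (fun i => |E x.1 i - E x.2 i| / δ i)
  have hne : (Finset.univ : Finset (Fin N ⊕ Fin M)).Nonempty := ⟨Sum.inr ⟨0, hM⟩, Finset.mem_univ _⟩
  let n : (Fin N → ℤ) × (Fin N → ℤ) → ℝ := fun x => Finset.univ.sup' hne (g x)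
  have hoff : S.offDiag.Nonempty := by
    obtain ⟨a, ha, b, hb, hab⟩ := Finset.one_lt_card.1 hcard
    exact ⟨(a, b), by simp [ha, hb, hab]⟩
  obtain ⟨⟨a, b⟩, hab, hmin⟩ := Finset.exists_min_image S.offDiag n hoff
  obtain ⟨ha, hb, hne'⟩ := Finset.mem_offDiag.1 hab
  simp only at ha hb hne'
  set t := n (a, b) with ht_def
  have hgt : ∀ k, g (a, b) k ≤ t := fun k => Finset.le_sup' (g (a, b)) (Finset.mem_univ k)
  have htj : ∀ j, |(a j : ℝ) - b j| ≤ t * Q j := fun j => by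
    have := hgt (Sum.inl j); simp only [g, Sum.elim_inl] at this
    exact (div_le_iff₀ (hQ0 j)).1 this
  have hti : ∀ i, |E a i - E b i| ≤ t * δ i := fun i => by
    have := hgt (Sum.inr i); simp only [g, Sum.elim_inr] at this
    exact (div_le_iff₀ (hδ i)).1 this
  have htpos : 0 < t := by
    obtain ⟨j, hj⟩ := Function.ne_iff.1 hne'
    have h1 : 0 < |(a j : ℝ) - b j| := by
      rw [abs_pos, sub_ne_zero]; exact_mod_cast hj
    have := htj j
    have h3 := hQ0 j
    by_contra hcon
    push Not at hcon
    nlinarith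
  have ht1 : t ≤ 1 := by
    apply Finset.sup'_le
    rintro (j | i) _
    · exact div_le_one_of_le₀ (hS1 a ha b hb j) (hQ0 j).le
    · exact div_le_one_of_le₀ (hS2 a ha b hb i) (hδ i).le
  let pr : Fin N → Prop := fun j => 1 ≤ t * Q j
  let J := {j // pr j}
  let J' := {j // ¬ pr j}
  have hsplit : (∏ j : J, Q j) * (∏ j : J', Q j) = ∏ j, Q j :=
    Fintype.prod_subtype_mul_prod_subtype pr Q
  have hcardJ : Fintype.card J' + Fintype.card J = N := by
    have := Fintype.card_subtype_compl pr
    have h2 := Fintype.card_subtype_le pr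
    simp only [Fintype.card_fin] at this h2
    simp only [J, J']
    omega
  -- lower bound
  have hlow : c ≤ t ^ (Fintype.card J + M) * ((∏ j : J, Q j) * ∏ i, δ i) := by
    have hb1 := bad (fun j => a j - b j) ?_ ?_ (fun i => p a i - p b i)
    · refine hb1.trans ?_
      have e1 : (∏ j, max 1 |((a j - b j : ℤ) : ℝ)|) ≤ t ^ (Fintype.card J) * ∏ j : J, Q j := by
        rw [← Fintype.prod_subtype_mul_prod_subtype pr]
        have f1 : (∏ j : J', max 1 |((a j - b j : ℤ) : ℝ)|) = 1 := by
          apply Finset.prod_eq_one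
          rintro ⟨j, hj⟩ _
          simp only [pr] at hj
          have h1 := htj j
          push Not at hj
          apply max_eq_left
          push_cast; linarith
        have f2 : (∏ j : J, max 1 |((a j - b j : ℤ) : ℝ)|) ≤ ∏ j : J, (t * Q j) := by
          apply Finset.prod_le_prod
          · intro j _; positivity
          · rintro ⟨j, hj⟩ _
            apply max_le hj
            push_cast; exact htj j
        rw [f1, mul_one]
        refine f2.trans (le_of_eq ?_)
        rw [Finset.prod_mul_distrib, Finset.prod_const, Finset.card_univ]
      have e2 : (∏ i, |∑ j, L i j * ((a j - b j : ℤ) : ℝ) - (p a i - p b i : ℤ)|) ≤ t ^ M * ∏ i, δ i := by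
        have : t ^ M * ∏ i, δ i = ∏ i, (t * δ i) := by
          rw [Finset.prod_mul_distrib, Finset.prod_const, Finset.card_univ, Fintype.card_fin]
        rw [this]
        apply Finset.prod_le_prod
        · intro i _; positivity
        · intro i _
          refine le_trans (le_of_eq ?_) (hti i)
          simp only [E]
          push_cast
          simp only [mul_sub, Finset.sum_sub_distrib]
          congr 1; ring
      refine (mul_le_mul e1 e2 (Finset.prod_nonneg fun i _ => abs_nonneg _) ?_).trans (le_of_eq ?_)
      · have : 0 ≤ ∏ j : J, Q j := Finset.prod_nonneg fun j _ => (hQ0 j).le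
        positivity
      · rw [pow_add]; ring
    · intro h
      apply hne'
      funext j
      have := congrFun h j
      simp only [Pi.zero_apply] at this
      linarith
    · intro j; push_cast; exact hS1 a ha b hb j
  -- fibres
  set Bd : ℝ := (2 * ((N + M : ℕ) + 1)) ^ (N + M) *
      ((∏ j : J, Q j) * (∏ i, δ i) + (t⁻¹) ^ (Fintype.card J + M - 1)) with hBd
  have hPJ : 0 < ∏ j : J, Q j := Finset.prod_pos fun j _ => hQ0 j
  have hPJ' : 0 < ∏ j : J', Q j := Finset.prod_pos fun j _ => hQ0 j
  have hΔ : 0 < ∏ i, δ i := Finset.prod_pos fun j _ => hδ j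
  have hBd0 : 0 ≤ Bd := by positivity
  have hfib : ∀ s0 : J' → ℤ, ((S.filter (fun s => (fun j : J' => s j) = s0)).card : ℝ) ≤ Bd := by
    intro s0
    rcases (S.filter (fun s => (fun j : J' => s j) = s0)).eq_empty_or_nonempty with h | ⟨o, ho⟩
    · rw [h]; simpa using hBd0
    obtain ⟨hoS, ho0⟩ := Finset.mem_filter.1 ho
    let ψ : (Fin N → ℤ) → (J ⊕ Fin M → ℤ) := fun s =>
      Sum.elim (fun j => s j - o j) (fun i => p s i - p o i)
    have hJ' : ∀ s ∈ S.filter (fun s => (fun j : J' => s j) = s0), ∀ j, ¬ pr j → s j = o j := by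
      intro s hs j hj
      have h1 := congrFun ((Finset.mem_filter.1 hs).2.trans ho0.symm) ⟨j, hj⟩
      exact h1
    have hinj : Set.InjOn ψ (S.filter (fun s => (fun j : J' => s j) = s0)) := by
      intro x hx y hy hxy
      funext j
      by_cases hj : pr j
      · have := congrFun hxy (Sum.inl ⟨j, hj⟩)
        simp only [ψ, Sum.elim_inl] at this
        linarith
      · rw [hJ' x hx j hj, hJ' y hy j hj]
    have hform : ∀ s ∈ S.filter (fun s => (fun j : J' => s j) = s0), ∀ i,
        ∑ j : J, L i j * (ψ s (Sum.inl j) : ℝ) - ψ s (Sum.inr i) = E s i - E o i := by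
      intro s hs i
      have h1 : ∑ j : J, L i j * (ψ s (Sum.inl j) : ℝ) = ∑ j, L i j * ((s j : ℝ) - o j) := by
        rw [← Fintype.sum_subtype_add_sum_subtype pr]
        have : ∑ j : J', L i j * ((s j : ℝ) - o j) = 0 := by
          apply Finset.sum_eq_zero
          rintro ⟨j, hj⟩ _
          simp only
          rw [hJ' s hs j hj]; ring
        rw [this, add_zero]
        apply Finset.sum_congr rfl
        intro j _; simp [ψ]
      rw [h1]
      simp only [E, ψ, Sum.elim_inr, mul_sub, Finset.sum_sub_distrib]
      push_cast; ring
    have := card_linear_forms (fun (i : Fin M) (j : J) => L i j) (fun j : J => Q j) δ (fun j => hQ0 j) hδ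
      ((S.filter (fun s => (fun j : J' => s j) = s0)).image ψ) t htpos ht1 ?_ ?_ ?_
    · rw [Finset.card_image_of_injOn hinj, Fintype.card_fin] at this
      refine this.trans ?_
      rw [hBd]
      have hle : Fintype.card J + M ≤ N + M := by omega
      have hle' : ((Fintype.card J + M : ℕ) : ℝ) ≤ ((N + M : ℕ) : ℝ) := by exact_mod_cast hle
      apply mul_le_mul_of_nonneg_right _ (by positivity)
      calc (2 * (((Fintype.card J + M : ℕ) : ℝ) + 1)) ^ (Fintype.card J + M)
          ≤ (2 * (((N + M : ℕ) : ℝ) + 1)) ^ (Fintype.card J + M) := by gcongr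
        _ ≤ _ := pow_le_pow_right₀ hC2 hle
    · intro z hz j
      obtain ⟨s, hs, rfl⟩ := Finset.mem_image.1 hz
      simp only [ψ, Sum.elim_inl]
      push_cast
      exact hS1 s (Finset.mem_filter.1 hs).1 o hoS j
    · intro z hz i
      obtain ⟨s, hs, rfl⟩ := Finset.mem_image.1 hz
      rw [hform s hs i]
      exact hS2 s (Finset.mem_filter.1 hs).1 o hoS i
    · intro x hx y hy hxy
      obtain ⟨s, hs, rfl⟩ := Finset.mem_image.1 hx
      obtain ⟨s', hs', rfl⟩ := Finset.mem_image.1 hy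
      have hss : s ≠ s' := by rintro rfl; exact hxy rfl
      have hm := hmin (s, s') (by
        rw [Finset.mem_offDiag]; exact ⟨(Finset.mem_filter.1 hs).1, (Finset.mem_filter.1 hs').1, hss⟩)
      obtain ⟨k, -, hk⟩ := Finset.exists_mem_eq_sup' hne (g (s, s'))
      have hk' : t ≤ g (s, s') k := by rw [← hk]; exact hm
      rcases k with j | i
      · left
        simp only [g, Sum.elim_inl] at hk'
        rw [le_div_iff₀ (hQ0 j)] at hk'
        have hj : pr j := by
          by_contra hj
          rw [hJ' s hs j hj, hJ' s' hs' j hj] at hk'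
          simp at hk'
          have := mul_pos htpos (hQ0 j)
          linarith
        refine ⟨⟨j, hj⟩, ?_⟩
        simp only [ψ, Sum.elim_inl]
        push_cast
        rw [sub_sub_sub_cancel_right]
        exact hk'
      · right
        simp only [g, Sum.elim_inr] at hk'
        rw [le_div_iff₀ (hδ i)] at hk'
        refine ⟨i, ?_⟩
        rw [hform s hs i, hform s' hs' i, sub_sub_sub_cancel_right]
        exact hk'
  have hmaps : ∀ s ∈ S, (fun j : J' => s j) ∈ Fintype.piFinset (fun j : J' => Finset.Icc ⌈-Q j⌉ ⌊Q j⌋) := by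
    intro s hs
    rw [Fintype.mem_piFinset]
    intro j
    have := abs_le.1 (hS s hs j)
    rw [Finset.mem_Icc]
    exact ⟨Int.ceil_le.2 this.1, Int.le_floor.2 this.2⟩
  have hcnt := Finset.card_le_mul_card_image_of_maps_to hmaps ⌊Bd⌋₊ (fun s0 _ => Nat.le_floor (hfib s0))
  have hbox : ((Fintype.piFinset (fun j : J' => Finset.Icc ⌈-Q j⌉ ⌊Q j⌋)).card : ℝ) ≤ 3 ^ N * ∏ j : J', Q j := by
    rw [Fintype.card_piFinset]
    push_cast
    calc ∏ j : J', ((Finset.Icc ⌈-Q j⌉ ⌊Q j⌋).card : ℝ) ≤ ∏ j : J', (3 * Q j) := by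
          apply Finset.prod_le_prod
          · intro j _; positivity
          · intro j _
            rw [Int.card_Icc, Int.ceil_neg, sub_neg_eq_add]
            have h0 : 0 ≤ ⌊Q j⌋ := Int.floor_nonneg.2 (hQ0 j).le
            have e : (((⌊Q j⌋ + 1 + ⌊Q j⌋).toNat : ℕ) : ℝ) = ((⌊Q j⌋ + 1 + ⌊Q j⌋ : ℤ) : ℝ) := by
              exact_mod_cast Int.toNat_of_nonneg (by omega)
            rw [e]; push_cast
            have := Int.floor_le (Q j)
            have := hQ j
            linarith
      _ = 3 ^ (Fintype.card J') * ∏ j : J', Q j := by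
          rw [Finset.prod_mul_distrib, Finset.prod_const, Finset.card_univ]
      _ ≤ _ := by
          apply mul_le_mul_of_nonneg_right _ hPJ'.le
          exact pow_le_pow_right₀ (by norm_num) (by omega)
  have hfinal : (S.card : ℝ) ≤ Bd * (3 ^ N * ∏ j : J', Q j) := by
    calc (S.card : ℝ) ≤ (⌊Bd⌋₊ : ℝ) * ((Fintype.piFinset (fun j : J' => Finset.Icc ⌈-Q j⌉ ⌊Q j⌋)).card : ℝ) := by
          exact_mod_cast hcnt
      _ ≤ Bd * (3 ^ N * ∏ j : J', Q j) := by
          apply mul_le_mul (Nat.floor_le hBd0) hbox (by positivity) hBd0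
  obtain ⟨e, he⟩ : ∃ e, Fintype.card J + M = e + 1 := ⟨Fintype.card J + M - 1, by omega⟩
  have hpow := pow_ineq (∏ j : J', Q j) t⁻¹ ((∏ j, Q j) * (∏ i, δ i) / c) e (Fintype.card J') hPJ'.le
    (by positivity) ?_ ?_
  · rw [show Fintype.card J' + (e + 1) = N + M by omega] at hpow
    refine hfinal.trans ?_
    rw [hBd, he, Nat.add_sub_cancel, ← hsplit]
    rw [← hsplit] at hpow
    set K : ℝ := (2 * (((N + M : ℕ) : ℝ) + 1)) ^ (N + M) with hK
    have hK0 : 0 ≤ 3 ^ N * K := by positivity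
    calc K * ((∏ j : J, Q j) * (∏ i, δ i) + t⁻¹ ^ e) * (3 ^ N * ∏ j : J', Q j)
        = 3 ^ N * K * (0 + (∏ j : J, Q j) * (∏ j : J', Q j) * (∏ i, δ i) + (∏ j : J', Q j) * t⁻¹ ^ e) := by ring
      _ ≤ _ := by gcongr; norm_num
  · rw [← Finset.card_univ, ← Finset.prod_const]
    apply Finset.prod_le_prod
    · intro j _; exact (hQ0 j).le
    · rintro ⟨j, hj⟩ _
      simp only [pr] at hj
      push Not at hj
      rw [← one_div, le_div_iff₀ htpos]
      simp only; linarith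
  · rw [he] at hlow
    rw [le_div_iff₀ hc, ← hsplit]
    have hu : t⁻¹ ^ (e + 1) * t ^ (e + 1) = 1 := by
      rw [← mul_pow, inv_mul_cancel₀ htpos.ne', one_pow]
    calc (∏ j : J', Q j) * t⁻¹ ^ (e + 1) * c
        ≤ (∏ j : J', Q j) * t⁻¹ ^ (e + 1) * (t ^ (e + 1) * ((∏ j : J, Q j) * ∏ i, δ i)) := by gcongr
      _ = (t⁻¹ ^ (e + 1) * t ^ (e + 1)) * ((∏ j : J, Q j) * (∏ j : J', Q j) * ∏ i, δ i) := by ring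
      _ = _ := by rw [hu, one_mul]

theorem card_box {N M : ℕ} (hM : 0 < M) (L : Fin M → Fin N → ℝ) (Q : Fin N → ℝ) (δ : Fin M → ℝ)
    (hQ : ∀ j, 1 ≤ Q j) (hδ : ∀ i, 0 < δ i) (c : ℝ) (hc : 0 < c)
    (bad : ∀ w : Fin N → ℤ, w ≠ 0 → (∀ j, |(w j : ℝ)| ≤ Q j) → ∀ r : Fin M → ℤ,
      c ≤ (∏ j, max 1 |(w j : ℝ)|) * ∏ i, |∑ j, L i j * (w j : ℝ) - r i|)
    (S : Finset (Fin N → ℤ)) (p : (Fin N → ℤ) → Fin M → ℤ)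
    (hS : ∀ s ∈ S, ∀ j, |(s j : ℝ)| ≤ Q j)
    (hS2 : ∀ s ∈ S, ∀ i, |∑ j, L i j * (s j : ℝ) - p s i| ≤ δ i) :
    (S.card : ℝ) ≤ 2 ^ (N + M) * (3 ^ N * (2 * ((N + M : ℕ) + 1)) ^ (N + M)) *
      (1 + (∏ j, Q j) * (∏ i, δ i) +
        ((∏ j, Q j) * (∏ i, δ i) / c) ^ (1 - 1 / ((N + M : ℕ) : ℝ))) := by
  classical
  set R : ℝ := 3 ^ N * (2 * ((N + M : ℕ) + 1)) ^ (N + M) *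
      (1 + (∏ j, Q j) * (∏ i, δ i) +
        ((∏ j, Q j) * (∏ i, δ i) / c) ^ (1 - 1 / ((N + M : ℕ) : ℝ))) with hR
  have hV : 0 < (∏ j, Q j) * (∏ i, δ i) :=
    mul_pos (Finset.prod_pos fun j _ => zero_lt_one.trans_le (hQ j)) (Finset.prod_pos fun j _ => hδ j)
  have hR0 : 0 ≤ R := by positivity
  have habs : ∀ x y D : ℝ, |x| ≤ D → |y| ≤ D → (0 ≤ x ↔ 0 ≤ y) → |x - y| ≤ D := by
    intro x y D hx hy h
    rw [abs_le] at *
    by_cases h0 : 0 ≤ x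
    · have := h.1 h0; constructor <;> linarith
    · have h1 : ¬ 0 ≤ y := fun h' => h0 (h.2 h')
      push Not at h0 h1
      constructor <;> linarith
  let sg : (Fin N → ℤ) → (Fin N ⊕ Fin M → Bool) := fun s =>
    Sum.elim (fun j => decide (0 ≤ (s j : ℝ))) (fun i => decide (0 ≤ ∑ j, L i j * (s j : ℝ) - p s i))
  have hcl : ∀ σ, ((S.filter (fun s => sg s = σ)).card : ℝ) ≤ R := by
    intro σ
    apply card_class hM L Q δ hQ hδ c hc bad _ p
    · intro s hs; exact hS s (Finset.mem_filter.1 hs).1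
    · intro s hs s' hs' j
      obtain ⟨h1, h2⟩ := Finset.mem_filter.1 hs
      obtain ⟨h1', h2'⟩ := Finset.mem_filter.1 hs'
      have := congrFun (h2.trans h2'.symm) (Sum.inl j)
      simp only [sg, Sum.elim_inl, decide_eq_decide] at this
      exact habs _ _ _ (hS s h1 j) (hS s' h1' j) this
    · intro s hs s' hs' i
      obtain ⟨h1, h2⟩ := Finset.mem_filter.1 hs
      obtain ⟨h1', h2'⟩ := Finset.mem_filter.1 hs'
      have := congrFun (h2.trans h2'.symm) (Sum.inr i)
      simp only [sg, Sum.elim_inr, decide_eq_decide] at this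
      exact habs _ _ _ (hS2 s h1 i) (hS2 s' h1' i) this
  have hcnt := Finset.card_le_mul_card_image_of_maps_to (f := sg) (s := S) (t := Finset.univ)
    (fun _ _ => Finset.mem_univ _) ⌊R⌋₊ (fun σ _ => Nat.le_floor (hcl σ))
  have hcu : (Finset.univ : Finset (Fin N ⊕ Fin M → Bool)).card = 2 ^ (N + M) := by simp
  rw [hcu] at hcnt
  have h1 : (S.card : ℝ) ≤ (⌊R⌋₊ : ℝ) * 2 ^ (N + M) := by exact_mod_cast hcnt
  have h2 := mul_le_mul_of_nonneg_right (Nat.floor_le hR0) (by positivity : (0 : ℝ) ≤ 2 ^ (N + M))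
  calc (S.card : ℝ) ≤ R * 2 ^ (N + M) := h1.trans h2
    _ = _ := by rw [hR]; ring

theorem sum_geom_simplex (M m : ℕ) (r : ℝ) (hr : 1 < r) :
    ∑ k ∈ (Fintype.piFinset fun _ : Fin (M + 1) => Finset.Icc 1 m).filter (fun k => ∑ i, k i ≤ m),
      r ^ (∑ i, k i) ≤ (m : ℝ) ^ M * (r ^ m * (r / (r - 1))) := by
  classical
  set T := (Fintype.piFinset fun _ : Fin (M + 1) => Finset.Icc 1 m).filter (fun k => ∑ i, k i ≤ m) with hT
  have hmaps : ∀ k ∈ T, ∑ i, k i ∈ Finset.range (m + 1) := by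
    intro k hk
    have := (Finset.mem_filter.1 hk).2
    exact Finset.mem_range.2 (by omega)
  rw [← Finset.sum_fiberwise_of_maps_to hmaps]
  have hf : ∀ s ∈ Finset.range (m + 1), ∑ k ∈ T with ∑ i, k i = s, r ^ (∑ i, k i) ≤ (m : ℝ) ^ M * r ^ s := by
    intro s _
    have h1 : ∑ k ∈ T with ∑ i, k i = s, r ^ (∑ i, k i) = ((T.filter (fun k => ∑ i, k i = s)).card : ℝ) * r ^ s := by
      rw [Finset.sum_congr rfl (fun k hk => by rw [(Finset.mem_filter.1 hk).2]), Finset.sum_const, nsmul_eq_mul]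
    rw [h1]
    gcongr
    have : (T.filter (fun k => ∑ i, k i = s)).card ≤ (Fintype.piFinset fun _ : Fin M => Finset.Icc 1 m).card := by
      apply Finset.card_le_card_of_injOn (fun k => Fin.tail k)
      · intro k hk
        have hk1 := (Finset.mem_filter.1 (Finset.mem_filter.1 hk).1).1
        rw [Fintype.mem_piFinset] at hk1
        simp only [Finset.mem_coe, Fintype.mem_piFinset]
        intro i; exact hk1 i.succ
      · intro k hk k' hk' h
        have e1 := (Finset.mem_filter.1 hk).2
        have e2 := (Finset.mem_filter.1 hk').2
        rw [Fin.sum_univ_succ] at e1 e2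
        have e3 : ∀ i : Fin M, k i.succ = k' i.succ := fun i => congrFun h i
        simp only [e3] at e1
        funext i
        refine Fin.cases ?_ e3 i
        omega
    rw [Fintype.card_piFinset, Finset.prod_const, Finset.card_univ, Fintype.card_fin, Nat.card_Icc] at this
    exact_mod_cast this
  refine (Finset.sum_le_sum hf).trans ?_
  rw [← Finset.mul_sum, geom_sum_eq hr.ne']
  have : 0 < r - 1 := by linarith
  gcongr
  rw [← mul_div_assoc, ← pow_succ]
  gcongr
  linarith

theorem stmt0 (M N : ℕ) (hM : 0 < M) (hN : 0 < N) :
    ∃ c₀ : ℝ, 0 < c₀ ∧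
      ∀ φ : ℝ → ℝ, AntitoneOn φ (Set.Ici 0) → (∀ x : ℝ, 0 ≤ x → φ x ∈ Set.Ioc (0 : ℝ) 1) →
      ∀ L : Matrix (Fin M) (Fin N) ℝ, rowUnitIndep M N L → multBadlyApprox M N φ L →
      ∀ Q : Fin N → ℝ, (∀ j, 1 ≤ Q j) → 2 ≤ geomMean N Q →
        SLQ M N L Q ≤
          c₀ * (geomMean N Q ^ N *
                  Real.log (geomMean N Q / φ (geomMean N Q)) ^ M +
                geomMean N Q ^ N / φ (geomMean N Q) *
                  Real.log (geomMean N Q / φ (geomMean N Q)) ^ (M - 1)) := by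
  classical
  set d : ℝ := ((N + M : ℕ) : ℝ) with hd
  have hd1 : 1 ≤ d := by rw [hd]; exact_mod_cast (by omega : 1 ≤ N + M)
  set r : ℝ := (2 : ℝ) ^ (1 / d) with hr
  have hr1 : 1 < r := Real.one_lt_rpow (by norm_num) (by positivity)
  have hr1' : 0 < r - 1 := by linarith
  set C : ℝ := 2 ^ (N + M) * (3 ^ N * (2 * (d + 1)) ^ (N + M)) with hC
  have hC0 : 0 < C := by positivity
  set a : ℝ := N / Real.log 2 + 1 with ha
  have hlog2 : 0 < Real.log 2 := Real.log_pos (by norm_num)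
  have ha1 : 1 ≤ a := by
    have : 0 ≤ N / Real.log 2 := by positivity
    linarith
  refine ⟨2 ^ M * C * (1 + 2 * (r / (r - 1))) * a ^ M, by positivity, ?_⟩
  intro φ hφ hφ1 L _ hbad Q hQ hG
  set G := geomMean N Q with hGdef
  have hQ0 : ∀ j, 0 < Q j := fun j => zero_lt_one.trans_le (hQ j)
  have hPQ : 0 < ∏ j, Q j := Finset.prod_pos fun j _ => hQ0 j
  have hG0 : 0 < G := by linarith
  have hGN : G ^ N = ∏ j, Q j := by
    rw [hGdef, geomMean, one_div, Real.rpow_inv_natCast_pow hPQ.le hN.ne']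
  obtain ⟨hc0, hc1⟩ := hφ1 G hG0.le
  set c := φ G with hc
  set Y : ℝ := G ^ N / c with hY
  have hGN1 : 1 ≤ G ^ N := one_le_pow₀ (by linarith)
  have hY1 : 1 ≤ Y := by
    rw [hY, le_div_iff₀ hc0]; linarith
  set Λ := Real.log (G / c) with hΛ
  have hGc : 2 ≤ G / c := by
    rw [le_div_iff₀ hc0]; nlinarith
  have hΛ0 : 0 ≤ Λ := Real.log_nonneg (by linarith)
  -- badness on the box
  have hbox : ∀ w : Fin N → ℤ, w ≠ 0 → (∀ j, |(w j : ℝ)| ≤ Q j) →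
      c ≤ (∏ j, max 1 |(w j : ℝ)|) * ∏ i, distNearestInt (∑ j, L i j * (w j : ℝ)) := by
    intro w hw hwQ
    refine le_trans ?_ (hbad w hw)
    have hp : ∏ j, max 1 |(w j : ℝ)| ≤ ∏ j, Q j := by
      apply Finset.prod_le_prod
      · intro j _; positivity
      · intro j _; exact max_le (hQ j) (hwQ j)
    have hp0 : 0 ≤ ∏ j, max 1 |(w j : ℝ)| := Finset.prod_nonneg fun j _ => by positivity
    apply hφ
    · exact Real.rpow_nonneg hp0 _
    · exact hG0.le
    · rw [hGdef, geomMean]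
      exact Real.rpow_le_rpow hp0 hp (by positivity)
  have hbad' : ∀ w : Fin N → ℤ, w ≠ 0 → (∀ j, |(w j : ℝ)| ≤ Q j) → ∀ z : Fin M → ℤ,
      c ≤ (∏ j, max 1 |(w j : ℝ)|) * ∏ i, |∑ j, L i j * (w j : ℝ) - z i| := by
    intro w hw hwQ z
    refine (hbox w hw hwQ).trans ?_
    apply mul_le_mul_of_nonneg_left _ (Finset.prod_nonneg fun j _ => by positivity)
    apply Finset.prod_le_prod
    · intro i _; exact abs_nonneg _
    · intro i _; exact round_le _ _
  have hκ : ∀ x : ℝ, ∃ n : ℕ, 0 < x → x ≤ 1 / 2 → 1 ≤ n ∧ (1 / 2 : ℝ) ^ (n + 1) < x ∧ x ≤ (1 / 2) ^ n := by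
    intro x
    by_cases hx : 0 < x ∧ x ≤ 1 / 2
    · obtain ⟨n, h1, h2⟩ := exists_nat_pow_near_of_lt_one (K := ℝ) (y := 1 / 2) hx.1 (by linarith [hx.2]) (by norm_num) (by norm_num)
      refine ⟨n, fun _ _ => ⟨?_, h1, h2⟩⟩
      by_contra h0
      have : n = 0 := by omega
      subst this
      norm_num at h1
      linarith [hx.2]
    · exact ⟨0, fun h1 h2 => absurd ⟨h1, h2⟩ hx⟩
  choose κ hκ using hκ
  let D : (Fin N → ℤ) → Fin M → ℝ := fun q i => distNearestInt (∑ j, L i j * (q j : ℝ))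
  set m := Nat.log 2 ⌊Y⌋₊ with hm
  have hmY : (2 : ℝ) ^ m ≤ Y := by
    have h1 : ⌊Y⌋₊ ≠ 0 := (Nat.floor_pos.2 hY1).ne'
    have h2 : 2 ^ m ≤ ⌊Y⌋₊ := Nat.pow_log_le_self 2 h1
    calc (2 : ℝ) ^ m ≤ (⌊Y⌋₊ : ℝ) := by exact_mod_cast h2
      _ ≤ Y := Nat.floor_le (by linarith)
  have hsm : ∀ s : ℕ, (2 : ℝ) ^ s ≤ Y → s ≤ m := by
    intro s hs
    apply Nat.le_log_of_pow_le (by norm_num)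
    apply Nat.le_floor
    exact_mod_cast hs
  set B := (Fintype.piFinset fun j => Finset.Icc ⌈-Q j⌉ ⌊Q j⌋).erase 0 with hB
  have hBmem : ∀ q ∈ B, q ≠ 0 ∧ ∀ j, |(q j : ℝ)| ≤ Q j := by
    intro q hq
    obtain ⟨h0, h1⟩ := Finset.mem_erase.1 hq
    refine ⟨h0, fun j => ?_⟩
    have := Finset.mem_Icc.1 (Fintype.mem_piFinset.1 h1 j)
    rw [abs_le]
    exact ⟨Int.ceil_le.1 this.1, Int.le_floor.1 this.2⟩
  have hD : ∀ q ∈ B, ∀ i, 0 < D q i ∧ D q i ≤ 1 / 2 := by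
    intro q hq i
    refine ⟨?_, abs_sub_round _⟩
    have h0 : 0 ≤ D q i := abs_nonneg _
    rcases h0.lt_or_eq with h | h
    · exact h
    · exfalso
      have h1 := hbox q (hBmem q hq).1 (hBmem q hq).2
      rw [Finset.prod_eq_zero (Finset.mem_univ i) h.symm, mul_zero] at h1
      linarith
  let K : (Fin N → ℤ) → Fin M → ℕ := fun q i => κ (D q i)
  have hK : ∀ q ∈ B, ∀ i, 1 ≤ K q i ∧ (1 / 2 : ℝ) ^ (K q i + 1) < D q i ∧ D q i ≤ (1 / 2) ^ (K q i) :=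
    fun q hq i => hκ _ (hD q hq i).1 (hD q hq i).2
  have hKsum : ∀ q ∈ B, (2 : ℝ) ^ (∑ i, K q i) ≤ Y := by
    intro q hq
    have h1 := hbox q (hBmem q hq).1 (hBmem q hq).2
    have h2 : ∏ j, max 1 |(q j : ℝ)| ≤ G ^ N := by
      rw [hGN]
      apply Finset.prod_le_prod
      · intro j _; positivity
      · intro j _; exact max_le (hQ j) ((hBmem q hq).2 j)
    have h3 : ∏ i, D q i ≤ (1 / 2) ^ (∑ i, K q i) := by
      rw [← Finset.prod_pow_eq_pow_sum]
      exact Finset.prod_le_prod (fun i _ => (hD q hq i).1.le) (fun i _ => (hK q hq i).2.2)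
    have h4 : c ≤ G ^ N * (1 / 2) ^ (∑ i, K q i) :=
      h1.trans (mul_le_mul h2 h3 (Finset.prod_nonneg fun i _ => (hD q hq i).1.le) (by positivity))
    rw [hY, le_div_iff₀ hc0]
    have h5 : (2 : ℝ) ^ (∑ i, K q i) * (1 / 2) ^ (∑ i, K q i) = 1 := by
      rw [← mul_pow]; norm_num
    calc (2 : ℝ) ^ (∑ i, K q i) * c ≤ 2 ^ (∑ i, K q i) * (G ^ N * (1 / 2) ^ (∑ i, K q i)) := by gcongr
      _ = G ^ N * (2 ^ (∑ i, K q i) * (1 / 2) ^ (∑ i, K q i)) := by ring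
      _ = G ^ N := by rw [h5, mul_one]
  obtain ⟨M', rfl⟩ : ∃ M', M = M' + 1 := ⟨M - 1, by omega⟩
  set T := (Fintype.piFinset fun _ : Fin (M' + 1) => Finset.Icc 1 m).filter (fun k => ∑ i, k i ≤ m) with hT
  have hmaps : ∀ q ∈ B, K q ∈ T := by
    intro q hq
    have h1 := hsm _ (hKsum q hq)
    refine Finset.mem_filter.2 ⟨Fintype.mem_piFinset.2 fun i => Finset.mem_Icc.2 ⟨(hK q hq i).1, ?_⟩, h1⟩
    exact (Finset.single_le_sum (f := K q) (fun _ _ => Nat.zero_le _) (Finset.mem_univ i)).trans h1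
  have hterm : ∀ k ∈ T, ∑ q ∈ B with K q = k, ∏ i, (D q i)⁻¹ ≤
      2 ^ (M' + 1) * C * (G ^ N + 2 * Y ^ (1 - 1 / d) * r ^ (∑ i, k i)) := by
    intro k hk
    set s := ∑ i, k i with hs
    have hsm' : s ≤ m := (Finset.mem_filter.1 hk).2
    have h2s : (2 : ℝ) ^ s ≤ Y := (pow_le_pow_right₀ (by norm_num) hsm').trans hmY
    have hsum : ∀ q ∈ B.filter (fun q => K q = k), ∏ i, (D q i)⁻¹ ≤ 2 ^ (s + (M' + 1)) := by
      intro q hq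
      obtain ⟨hqB, hqk⟩ := Finset.mem_filter.1 hq
      have : (2 : ℝ) ^ (s + (M' + 1)) = ∏ i, (2 : ℝ) ^ (k i + 1) := by
        rw [Finset.prod_pow_eq_pow_sum, Finset.sum_add_distrib]; simp [hs]
      rw [this]
      apply Finset.prod_le_prod
      · intro i _; exact inv_nonneg.2 (hD q hqB i).1.le
      · intro i _
        have h1 := (hK q hqB i).2.1
        rw [hqk] at h1
        rw [one_div, inv_pow] at h1
        exact inv_le_of_inv_le₀ (by positivity) h1.le
    refine (Finset.sum_le_card_nsmul _ _ _ hsum).trans ?_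
    have hcard := card_box hM L Q (fun i => (1 / 2 : ℝ) ^ (k i)) hQ (fun i => by positivity) c hc0 hbad'
      (B.filter (fun q => K q = k)) (fun q i => round (∑ j, L i j * (q j : ℝ)))
      (fun q hq => (hBmem q (Finset.mem_filter.1 hq).1).2)
      (fun q hq i => by
        obtain ⟨hqB, hqk⟩ := Finset.mem_filter.1 hq
        have := (hK q hqB i).2.2
        rw [hqk] at this
        exact this)
    rw [Finset.prod_pow_eq_pow_sum, ← hGN, ← hd, ← hC, ← hs] at hcard
    have hX : G ^ N * (1 / 2) ^ s / c = Y / 2 ^ s := by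
      rw [hY, one_div, inv_pow]; field_simp
    rw [hX] at hcard
    have hβ : 0 ≤ 1 - 1 / d := by
      rw [sub_nonneg, div_le_one (by linarith)]; exact hd1
    have hX1 : 1 ≤ Y / 2 ^ s := by rw [le_div_iff₀ (by positivity)]; linarith
    have hXβ : 1 ≤ (Y / 2 ^ s) ^ (1 - 1 / d) := Real.one_le_rpow hX1 hβ
    have hkey : (2 : ℝ) ^ s * (Y / 2 ^ s) ^ (1 - 1 / d) = Y ^ (1 - 1 / d) * r ^ s := by
      rw [Real.div_rpow (by linarith) (by positivity)]
      have e1 : ((2 : ℝ) ^ s) ^ (1 - 1 / d) = 2 ^ s / r ^ s := by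
        rw [Real.rpow_sub (by positivity), Real.rpow_one, hr, ← Real.rpow_natCast (2 ^ (1 / d)), ← Real.rpow_mul (by norm_num),
          ← Real.rpow_natCast, ← Real.rpow_mul (by norm_num), mul_comm (s : ℝ) (1 / d)]
      rw [e1]
      field_simp
    have hhalf : (2 : ℝ) ^ s * (1 / 2) ^ s = 1 := by rw [← mul_pow]; norm_num
    rw [nsmul_eq_mul]
    calc ((B.filter (fun q => K q = k)).card : ℝ) * 2 ^ (s + (M' + 1))
        ≤ (C * (1 + G ^ N * (1 / 2) ^ s + (Y / 2 ^ s) ^ (1 - 1 / d))) * 2 ^ (s + (M' + 1)) := by gcongr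
      _ ≤ (C * ((Y / 2 ^ s) ^ (1 - 1 / d) + G ^ N * (1 / 2) ^ s + (Y / 2 ^ s) ^ (1 - 1 / d))) * 2 ^ (s + (M' + 1)) := by gcongr
      _ = 2 ^ (M' + 1) * C * (G ^ N * (2 ^ s * (1 / 2) ^ s) + 2 * (2 ^ s * (Y / 2 ^ s) ^ (1 - 1 / d))) := by
          rw [pow_add]; ring
      _ = _ := by rw [hhalf, hkey]; ring
  have hTcard : (T.card : ℝ) ≤ (m : ℝ) ^ (M' + 1) := by
    have : T.card ≤ (Fintype.piFinset fun _ : Fin (M' + 1) => Finset.Icc 1 m).card := Finset.card_filter_le _ _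
    rw [Fintype.card_piFinset, Finset.prod_const, Finset.card_univ, Fintype.card_fin, Nat.card_Icc] at this
    exact_mod_cast this
  have hgeo := sum_geom_simplex M' m r hr1
  rw [← hT] at hgeo
  have hmΛ : (m : ℝ) ≤ a * Λ := by
    have h1 : (m : ℝ) * Real.log 2 ≤ Real.log Y := by
      rw [← Real.log_pow]; exact Real.log_le_log (by positivity) hmY
    have h2 : Y ≤ (G / c) ^ N := by
      rw [hY, div_pow]
      apply div_le_div_of_nonneg_left (by positivity) (by positivity)
      exact pow_le_of_le_one hc0.le hc1 hN.ne'
    have h3 : Real.log Y ≤ N * Λ := by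
      rw [hΛ, ← Real.log_pow]; exact Real.log_le_log (by linarith) h2
    have h4 : (m : ℝ) ≤ N / Real.log 2 * Λ := by
      rw [div_mul_eq_mul_div, le_div_iff₀ hlog2]; linarith
    rw [ha]; linarith
  have hrm : r ^ m ≤ Y ^ (1 / d) := by
    have : r ^ m = ((2 : ℝ) ^ m) ^ (1 / d) := by
      rw [hr, ← Real.rpow_natCast (2 ^ (1 / d)), ← Real.rpow_mul (by norm_num), ← Real.rpow_natCast, ← Real.rpow_mul (by norm_num), mul_comm]
    rw [this]
    exact Real.rpow_le_rpow (by positivity) hmY (by positivity)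
  have hYY : Y ^ (1 - 1 / d) * Y ^ (1 / d) = Y := by
    rw [← Real.rpow_add (by linarith)]; simp
  have hY0 : 0 < Y := by linarith
  have hS : SLQ (M' + 1) N L Q = ∑ k ∈ T, ∑ q ∈ B with K q = k, ∏ i, (D q i)⁻¹ := by
    rw [Finset.sum_fiberwise_of_maps_to hmaps]; rfl
  rw [hS, Nat.add_sub_cancel]
  have hm1 : (m : ℝ) ^ (M' + 1) ≤ a ^ (M' + 1) * Λ ^ (M' + 1) := by
    rw [← mul_pow]; gcongr
  have hm2 : (m : ℝ) ^ M' ≤ a ^ (M' + 1) * Λ ^ M' := by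
    calc (m : ℝ) ^ M' ≤ (a * Λ) ^ M' := by gcongr
      _ = a ^ M' * Λ ^ M' := mul_pow _ _ _
      _ ≤ _ := by
        apply mul_le_mul_of_nonneg_right _ (by positivity)
        exact pow_le_pow_right₀ ha1 (Nat.le_succ _)
  set ρ := r / (r - 1) with hρ
  have hρ0 : 0 < ρ := by positivity
  calc ∑ k ∈ T, ∑ q ∈ B with K q = k, ∏ i, (D q i)⁻¹
      ≤ ∑ k ∈ T, 2 ^ (M' + 1) * C * (G ^ N + 2 * Y ^ (1 - 1 / d) * r ^ (∑ i, k i)) := Finset.sum_le_sum hterm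
    _ = 2 ^ (M' + 1) * C * (T.card * G ^ N + 2 * Y ^ (1 - 1 / d) * ∑ k ∈ T, r ^ (∑ i, k i)) := by
        rw [← Finset.mul_sum, Finset.sum_add_distrib, ← Finset.mul_sum, Finset.sum_const, nsmul_eq_mul]
    _ ≤ 2 ^ (M' + 1) * C * (m ^ (M' + 1) * G ^ N + 2 * Y ^ (1 - 1 / d) * (m ^ M' * (Y ^ (1 / d) * ρ))) := by
        gcongr
        exact hgeo.trans (by gcongr)
    _ = 2 ^ (M' + 1) * C * (m ^ (M' + 1) * G ^ N + 2 * ρ * (Y ^ (1 - 1 / d) * Y ^ (1 / d)) * m ^ M') := by ring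
    _ ≤ 2 ^ (M' + 1) * C * (a ^ (M' + 1) * Λ ^ (M' + 1) * G ^ N + 2 * ρ * Y * (a ^ (M' + 1) * Λ ^ M')) := by
        rw [hYY]; gcongr
    _ = 2 ^ (M' + 1) * C * a ^ (M' + 1) * (1 * (G ^ N * Λ ^ (M' + 1)) + (2 * ρ) * (Y * Λ ^ M')) := by ring
    _ ≤ 2 ^ (M' + 1) * C * a ^ (M' + 1) * ((1 + 2 * ρ) * (G ^ N * Λ ^ (M' + 1)) + (1 + 2 * ρ) * (Y * Λ ^ M')) := by
        gcongr <;> linarith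
    _ = _ := by ring
end

section
/- Let M, N be positive integers, let φ : [0,∞) → (0,1] be non-increasing, and let L ∈ ℝ^{M×N} be φ-multiplicatively badly approximable, with each row's entries together with 1 linearly independent over ℚ. Let Q = (Q_1,…,Q_N) ∈ [1,∞)^N and let ε, T > 0 satisfy T^M/ε ≥ e^M (e the base of the natural logarithm). Then there exists a constant c₀ > 0 depending only on M and N such that #((Λ_L ∩ Z) \ C) ≤ c₀ (1+T)^{M+N−1} (log(T^M/ε))^{M−1} [ ε Q^N + (ε Q^N/φ(Q))^{(M+N−1)/(M+N)} ], where Q := (Q_1⋯Q_N)^{1/N}. -/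
/-- The lattice `Λ_L = A_L ℤ^(M+N)`, as a set of vectors in `ℝ^M × ℝ^N`. -/
def latticeL (M N : ℕ) (L : Matrix (Fin M) (Fin N) ℝ) : Set (Fin M ⊕ Fin N → ℝ) :=
  {v | ∃ (p : Fin M → ℤ) (q : Fin N → ℤ),
    (∀ i, v (Sum.inl i) = (∑ j, L i j * (q j : ℝ)) + (p i : ℝ)) ∧
    (∀ j, v (Sum.inr j) = (q j : ℝ))}

/-- The set `Z = H × ∏ [-Q_j, Q_j]`. -/
def setZ (M N : ℕ) (ε T : ℝ) (Q : Fin N → ℝ) : Set (Fin M ⊕ Fin N → ℝ) :=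
  {v | (∏ i, |v (Sum.inl i)|) < ε ∧ (∀ i, |v (Sum.inl i)| ≤ T) ∧ ∀ j, |v (Sum.inr j)| ≤ Q j}

/-- The set `C = {(x, y) : y = 0}`. -/
def setC (M N : ℕ) : Set (Fin M ⊕ Fin N → ℝ) := {v | ∀ j : Fin N, v (Sum.inr j) = 0}


lemma fullrank_count {ι : Type*} [Fintype ι] [DecidableEq ι] (D : Finset (ι → ℤ))
    (f : ι → ι → ℤ) (hdet : (Matrix.of f).det ≠ 0)
    (hmax : ∀ z ∈ D, ∀ i, |((Matrix.of f).updateRow i z).det| ≤ |(Matrix.of f).det|) :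
    D.card ≤ 5 ^ Fintype.card ι * (Matrix.of f).det.natAbs := by
  classical
  have hli : LinearIndependent ℤ f := by
    have := Matrix.linearIndependent_rows_of_det_ne_zero hdet
    exact this
  set S := Submodule.span ℤ (Set.range f) with hS
  let bN := Module.Basis.span hli
  have hcard : (Matrix.of f).det.natAbs = Nat.card ((ι → ℤ) ⧸ S) := by
    rw [← Submodule.natAbs_det_basis_change (Pi.basisFun ℤ ι) S bN]
    congr 1
    rw [Pi.basisFun_det]
    show _ = (Matrix.det _)
    congr 1
    ext i j
    exact (congrFun (congrArg Subtype.val (Module.Basis.span_apply hli i)) j).symm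
  have hfin : Finite ((ι → ℤ) ⧸ S) := Nat.finite_of_card_ne_zero (by
    rw [← hcard]; simpa using hdet)
  have := Fintype.ofFinite ((ι → ℤ) ⧸ S)
  have key := Finset.card_le_mul_card_image (f := fun z : ι → ℤ => (Submodule.Quotient.mk z : (ι → ℤ) ⧸ S)) D
    (5 ^ Fintype.card ι) ?_
  · refine key.trans ?_
    rw [hcard, Nat.card_eq_fintype_card]
    exact Nat.mul_le_mul_left _ (Finset.card_le_univ _)
  · intro c hc
    obtain ⟨z0, hz0, rfl⟩ := Finset.mem_image.1 hc
    have hk : ∀ z : ι → ℤ, ∃ k : ι → ℤ, z ∈ D →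
        (Submodule.Quotient.mk z : (ι → ℤ) ⧸ S) = Submodule.Quotient.mk z0 →
        z = z0 + ∑ i, k i • f i := by
      intro z
      by_cases h : (Submodule.Quotient.mk z : (ι → ℤ) ⧸ S) = Submodule.Quotient.mk z0
      · rw [Submodule.Quotient.eq, hS, Submodule.mem_span_range_iff_exists_fun] at h
        obtain ⟨k, hk⟩ := h
        exact ⟨k, fun _ _ => by rw [hk]; abel⟩
      · exact ⟨0, fun _ h' => absurd h' h⟩
    choose k hk using hk
    have hcc : (Fintype.piFinset (fun _ : ι => Finset.Icc (-2 : ℤ) 2)).card = 5 ^ Fintype.card ι := by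
      simp
    rw [← hcc]
    refine Finset.card_le_card_of_injOn k ?_ ?_
    · intro z hz
      simp only [Finset.coe_filter, Set.mem_ofPred_eq] at hz
      have e := hk z hz.1 hz.2
      simp only [Finset.mem_coe, Fintype.mem_piFinset, Finset.mem_Icc]
      intro i
      have h1 : ((Matrix.of f).updateRow i z).det = ((Matrix.of f).updateRow i z0).det
          + k z i * (Matrix.of f).det := by
        conv_lhs => rw [e]
        rw [Matrix.det_updateRow_add]
        congr 1
        have := Matrix.det_updateRow_sum (Matrix.of f) i (k z)
        exact this
      have h2 := hmax z hz.1 i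
      have h3 := hmax z0 hz0 i
      have h4 : |k z i| * |(Matrix.of f).det| ≤ 2 * |(Matrix.of f).det| := by
        rw [← abs_mul]
        have : k z i * (Matrix.of f).det = ((Matrix.of f).updateRow i z).det - ((Matrix.of f).updateRow i z0).det := by
          rw [h1]; ring
        rw [this]
        have := abs_sub (((Matrix.of f).updateRow i z).det) (((Matrix.of f).updateRow i z0).det)
        linarith
      have h5 := le_of_mul_le_mul_right h4 (abs_pos.2 hdet)
      exact abs_le.1 h5
    · intro z hz z' hz' hzz
      simp only [Finset.coe_filter, Set.mem_ofPred_eq] at hz hz'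
      rw [hk z hz.1 hz.2, hk z' hz'.1 hz'.2, hzz]

lemma dichotomy {ι : Type*} [Fintype ι] [DecidableEq ι] (D : Finset (ι → ℤ))
    (G : Matrix ι ι ℝ) :
    (∃ f : ι → ι → ℤ, (∀ i, f i ∈ D) ∧ (Matrix.of f).det ≠ 0) ∨
    (∃ a : ι → ℝ, a ≠ 0 ∧ ∀ z ∈ D, ∑ i, a i * (G.mulVec (fun j => (z j : ℝ))) i = 0) := by
  classical
  set u : (ι → ℤ) → (ι → ℝ) := fun z => G.mulVec (fun j => (z j : ℝ)) with hu
  by_cases h : Submodule.span ℝ (u '' (D : Set (ι → ℤ))) = ⊤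
  · left
    let b := Module.Basis.ofSpan (K := ℝ) (s := u '' (D : Set (ι → ℤ))) h.ge
    let e := b.indexEquiv (Pi.basisFun ℝ ι)
    let b' := b.reindex e
    have hmem : ∀ i, b' i ∈ u '' (D : Set (ι → ℤ)) := by
      intro i
      apply Module.Basis.ofSpan_subset h.ge
      simp only [b', Module.Basis.reindex_apply]
      exact Set.mem_range_self _
    choose f hf hfu using hmem
    refine ⟨f, hf, ?_⟩
    have hd : (Matrix.of (fun i => b' i)).det ≠ 0 := by
      have h1 := ((Pi.basisFun ℝ ι).is_basis_iff_det (v := b')).1 ⟨b'.linearIndependent, b'.span_eq⟩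
      rw [Pi.basisFun_det] at h1
      exact h1.ne_zero
    have heq : Matrix.of (fun i => b' i) = (Matrix.of f).map (Int.castRingHom ℝ) * G.transpose := by
      ext i j
      rw [Matrix.of_apply, ← hfu i]
      simp [hu, Matrix.mul_apply, Matrix.mulVec, dotProduct, mul_comm]
    intro h0
    apply hd
    rw [heq, Matrix.det_mul]
    have := (Int.castRingHom ℝ).map_det (Matrix.of f)
    rw [RingHom.mapMatrix_apply] at this
    rw [← this, h0]; simp
  · right
    obtain ⟨g, hg, hle⟩ := Submodule.exists_le_ker_of_lt_top _ (lt_top_iff_ne_top.2 h)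
    have hrep : ∀ x : ι → ℝ, g x = ∑ i, g (Pi.single i 1) * x i := by
      intro x
      conv_lhs => rw [pi_eq_sum_univ' x]
      rw [map_sum]
      refine Finset.sum_congr rfl fun i _ => ?_
      rw [map_smul, smul_eq_mul, mul_comm]
      
    refine ⟨fun i => g (Pi.single i 1), ?_, ?_⟩
    · intro h0
      apply hg
      ext i
      simpa using congrFun h0 i
    · intro z hz
      rw [← hrep]
      exact hle (Submodule.subset_span ⟨z, hz, rfl⟩)

lemma full_case {ι : Type*} [Fintype ι] [DecidableEq ι] (D : Finset (ι → ℤ))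
    (G : Matrix ι ι ℝ) (hG : G.det ≠ 0) (f₀ : ι → ι → ℤ) (hf₀ : ∀ i, f₀ i ∈ D)
    (hd₀ : (Matrix.of f₀).det ≠ 0)
    (hle : ∀ z ∈ D, ∀ i, |G.mulVec (fun j => (z j : ℝ)) i| ≤ 1) :
    (D.card : ℝ) ≤ 5 ^ Fintype.card ι * (Fintype.card ι).factorial / |G.det| := by
  classical
  obtain ⟨f, hf, hfmax⟩ := Finset.exists_max_image (Fintype.piFinset fun _ : ι => D)
    (fun f => |(Matrix.of f).det|) ⟨f₀, by simpa using hf₀⟩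
  have hfD : ∀ i, f i ∈ D := by simpa using hf
  have hfd : (Matrix.of f).det ≠ 0 := by
    have := hfmax f₀ (by simpa using hf₀)
    exact abs_pos.1 (lt_of_lt_of_le (abs_pos.2 hd₀) this)
  have h1 := fullrank_count D f hfd (by
    intro z hz i
    refine hfmax (Function.update f i z) ?_
    rw [Fintype.mem_piFinset]
    intro j
    by_cases h : j = i
    · subst h; simpa using hz
    · simpa [h] using hfD j)
  have heq : Matrix.of (fun i => G.mulVec (fun j => (f i j : ℝ)))
      = (Matrix.of f).map (Int.castRingHom ℝ) * G.transpose := by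
    ext i j
    simp [Matrix.mul_apply, Matrix.mulVec, dotProduct, mul_comm]
  have hdetle : |(Matrix.of (fun i => G.mulVec (fun j => (f i j : ℝ)))).det| ≤ (Fintype.card ι).factorial := by
    have := Matrix.det_le (A := Matrix.of (fun i => G.mulVec (fun j => (f i j : ℝ))))
      (abv := AbsoluteValue.abs) (x := 1) (fun i j => hle _ (hfD i) j)
    simpa using this
  rw [heq, Matrix.det_mul, Matrix.det_transpose] at hdetle
  have hm := (Int.castRingHom ℝ).map_det (Matrix.of f)
  rw [RingHom.mapMatrix_apply] at hm
  rw [← hm, abs_mul] at hdetle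
  have hn : ((Matrix.of f).det.natAbs : ℝ) = |(Int.castRingHom ℝ) (Matrix.of f).det| := by
    rw [Nat.cast_natAbs]; simp
  rw [← hn] at hdetle
  have hGp := abs_pos.2 hG
  rw [le_div_iff₀ hGp]
  have h1' : (D.card : ℝ) ≤ 5 ^ Fintype.card ι * ((Matrix.of f).det.natAbs : ℝ) := by exact_mod_cast h1
  calc (D.card : ℝ) * |G.det| ≤ (5 ^ Fintype.card ι * ((Matrix.of f).det.natAbs : ℝ)) * |G.det| := by gcongr
    _ = 5 ^ Fintype.card ι * (((Matrix.of f).det.natAbs : ℝ) * |G.det|) := by ring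
    _ ≤ _ := by gcongr

lemma hyper_case {ι : Type*} [Fintype ι] [DecidableEq ι] [Nonempty ι] {α : Type*} (W : Finset α)
    (u : α → ι → ℝ) (a : ι → ℝ) (ha : a ≠ 0) (z₀ : α)
    (hort : ∀ z ∈ W, ∑ i, a i * (u z i - u z₀ i) = 0)
    (hle : ∀ z ∈ W, ∀ i, |u z i - u z₀ i| ≤ 1) (l : ℝ) (hl : 0 < l) (hl1 : l ≤ 1)
    (hge : ∀ z ∈ W, ∀ z' ∈ W, z ≠ z' → ∃ i, l ≤ |u z i - u z' i|) :
    (W.card : ℝ) ≤ (5 * Fintype.card ι / l) ^ (Fintype.card ι - 1) := by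
  classical
  set n := Fintype.card ι with hn
  have hnpos : 0 < n := Fintype.card_pos
  have hnR : (1 : ℝ) ≤ n := by exact_mod_cast hnpos
  obtain ⟨k, -, hk⟩ := Finset.exists_max_image Finset.univ (fun i => |a i|) Finset.univ_nonempty
  have hak : 0 < |a k| := by
    by_contra h
    apply ha
    ext i
    have := hk i (Finset.mem_univ i)
    have : |a i| ≤ 0 := by linarith
    simpa using this
  set c : ℤ := ⌈(n : ℝ) / l⌉ with hc
  let F : α → ({i // i ≠ k} → ℤ) := fun z i => ⌊(u z i - u z₀ i) * (n / l)⌋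
  have hnl : 1 ≤ (n : ℝ) / l := by rw [le_div_iff₀ hl]; linarith
  have hcard : W.card ≤ (Fintype.piFinset (fun _ : {i // i ≠ k} => Finset.Icc (-c) c)).card := by
    refine Finset.card_le_card_of_injOn F ?_ ?_
    · intro z hz
      simp only [Finset.mem_coe, Fintype.mem_piFinset, Finset.mem_Icc, F]
      intro i
      have h := abs_le.1 (hle z hz i)
      have hcc : (n : ℝ) / l ≤ c := Int.le_ceil _
      constructor
      · rw [Int.le_floor]; push_cast; nlinarith
      · apply Int.cast_le (R := ℝ).1
        refine (Int.floor_le _).trans ?_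
        nlinarith
    · intro z hz z' hz' hzz
      by_contra hne
      obtain ⟨i₀, hi₀⟩ := hge z hz z' hz' hne
      have hsmall : ∀ i, i ≠ k → |u z i - u z' i| < l / n := by
        intro i hi
        have h := Int.abs_sub_lt_one_of_floor_eq_floor (congrFun hzz ⟨i, hi⟩)
        have e : (u z i - u z₀ i) * (n / l) - (u z' i - u z₀ i) * (n / l) = (u z i - u z' i) * (n / l) := by ring
        simp only [e] at h
        rw [abs_mul, abs_of_pos (by linarith : (0:ℝ) < n / l)] at h
        have : l / n = 1 / (n / l) := by field_simp
        rw [this, lt_div_iff₀ (by linarith)]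
        exact h
      have hln : l / n ≤ l := div_le_self hl.le hnR
      by_cases hik : i₀ = k
      · subst hik
        have hs : ∑ i, a i * (u z i - u z' i) = 0 := by
          have h1 := hort z hz
          have h2 := hort z' hz'
          rw [← sub_eq_zero.2 (h1.trans h2.symm), ← Finset.sum_sub_distrib]
          exact Finset.sum_congr rfl fun i _ => by ring
        rw [← Finset.add_sum_erase _ _ (Finset.mem_univ i₀)] at hs
        have h3 : |a i₀| * |u z i₀ - u z' i₀| ≤ |a i₀| * ((n - 1) * (l / n)) := by
          rw [← abs_mul, eq_neg_of_add_eq_zero_left hs, abs_neg]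
          refine (Finset.abs_sum_le_sum_abs _ _).trans ?_
          have : ∑ i ∈ Finset.univ.erase i₀, |a i * (u z i - u z' i)| ≤
              ∑ i ∈ Finset.univ.erase i₀, |a i₀| * (l / n) := by
            refine Finset.sum_le_sum fun i hi => ?_
            rw [abs_mul]
            exact mul_le_mul (hk i (Finset.mem_univ i)) (hsmall i (Finset.ne_of_mem_erase hi)).le
              (abs_nonneg _) (abs_nonneg _)
          refine this.trans ?_
          rw [Finset.sum_const, Finset.card_erase_of_mem (Finset.mem_univ _), Finset.card_univ, ← hn,
            nsmul_eq_mul, Nat.cast_sub hnpos]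
          push_cast
          apply le_of_eq; ring
        have h4 := le_of_mul_le_mul_left h3 hak
        have h5 : ((n : ℝ) - 1) * (l / n) = l - l / n := by field_simp
        have h6 : 0 < l / n := by positivity
        linarith
      · have := hsmall i₀ hik
        linarith
  have hF : (Fintype.piFinset (fun _ : {i // i ≠ k} => Finset.Icc (-c) c)).card
      = (c + 1 + c).toNat ^ (n - 1) := by
    rw [Fintype.card_piFinset]
    simp [← hn, Fintype.card_subtype_compl]
  rw [hF] at hcard
  have hcpos : 0 ≤ c := by
    have : (n : ℝ) / l ≤ c := Int.le_ceil _
    have : (0 : ℝ) ≤ c := by linarith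
    exact_mod_cast this
  have hcn : ((c + 1 + c).toNat : ℝ) = c + 1 + c := by
    have : (((c + 1 + c).toNat : ℤ) : ℝ) = ((c + 1 + c : ℤ) : ℝ) := by rw [Int.toNat_of_nonneg (by omega)]
    push_cast at this
    exact this
  calc (W.card : ℝ) ≤ (((c + 1 + c).toNat ^ (n - 1) : ℕ) : ℝ) := by exact_mod_cast hcard
    _ = (c + 1 + c : ℝ) ^ (n - 1) := by rw [Nat.cast_pow, hcn]
    _ ≤ _ := by
      have : (c : ℝ) < n / l + 1 := Int.ceil_lt_add_one _
      have h0 : (0 : ℝ) ≤ c := by exact_mod_cast hcpos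
      apply pow_le_pow_left₀ (by linarith)
      have : 5 * (n : ℝ) / l = 5 * (n / l) := by ring
      linarith

lemma box_count {ι : Type*} [Fintype ι] [DecidableEq ι] [Nonempty ι] (W : Finset (ι → ℤ))
    (G : Matrix ι ι ℝ) (hG : G.det ≠ 0) (l : ℝ) (hl : 0 < l) (hl1 : l ≤ 1)
    (hle : ∀ z ∈ W, ∀ z' ∈ W, ∀ i, |G.mulVec (fun j => ((z j - z' j : ℤ) : ℝ)) i| ≤ 1)
    (hge : ∀ z ∈ W, ∀ z' ∈ W, z ≠ z' → ∃ i, l ≤ |G.mulVec (fun j => ((z j - z' j : ℤ) : ℝ)) i|) :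
    (W.card : ℝ) ≤ 5 ^ Fintype.card ι * (Fintype.card ι).factorial / |G.det| +
      (5 * Fintype.card ι / l) ^ (Fintype.card ι - 1) := by
  classical
  have hA : 0 ≤ 5 ^ Fintype.card ι * (Fintype.card ι).factorial / |G.det| := by positivity
  have hB : 0 ≤ (5 * Fintype.card ι / l) ^ (Fintype.card ι - 1) := by positivity
  rcases W.eq_empty_or_nonempty with rfl | ⟨z₀, hz₀⟩
  · simp only [Finset.card_empty, Nat.cast_zero]; linarith
  set D := W.image (fun z => z - z₀) with hD
  have hDc : D.card = W.card := Finset.card_image_of_injective _ (sub_left_injective)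
  have hsub : ∀ (z z' : ι → ℤ) (i : ι), G.mulVec (fun j => ((z j - z' j : ℤ) : ℝ)) i
      = G.mulVec (fun j => (z j : ℝ)) i - G.mulVec (fun j => (z' j : ℝ)) i := by
    intro z z' i
    rw [← Pi.sub_apply, ← Matrix.mulVec_sub]
    congr 2
    ext j; simp
  rcases dichotomy D G with ⟨f, hf, hd⟩ | ⟨a, ha, hort⟩
  · have := full_case D G hG f hf hd (by
      intro z hz i
      obtain ⟨w, hw, rfl⟩ := Finset.mem_image.1 hz
      exact hle w hw z₀ hz₀ i)
    rw [hDc] at this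
    linarith
  · have := hyper_case W (fun z => G.mulVec (fun j => (z j : ℝ))) a ha z₀ (by
      intro z hz
      have h := hort (z - z₀) (Finset.mem_image_of_mem _ hz)
      rw [← h]
      refine Finset.sum_congr rfl fun i _ => ?_
      rw [← hsub]; rfl) (by
      intro z hz i
      rw [← hsub]; exact hle z hz z₀ hz₀ i) l hl hl1 (by
      intro z hz z' hz' hne
      obtain ⟨i, hi⟩ := hge z hz z' hz' hne
      exact ⟨i, by rw [← hsub]; exact hi⟩)
    linarith

lemma exists_le_sum_eq (M : ℕ) : ∀ (u : Fin M → ℕ) (s : ℕ), s ≤ ∑ i, u i →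
    ∃ w : Fin M → ℕ, (∀ i, w i ≤ u i) ∧ ∑ i, w i = s := by
  induction M with
  | zero => intro u s hs; exact ⟨u, fun i => le_rfl, by simp at hs ⊢; omega⟩
  | succ m ih =>
    intro u s hs
    rw [Fin.sum_univ_succ] at hs
    obtain ⟨w, hw, hws⟩ := ih (fun i => u i.succ) (s - min s (u 0)) (by omega)
    refine ⟨Fin.cons (min s (u 0)) w, ?_, ?_⟩
    · intro i
      refine Fin.cases ?_ (fun j => ?_) i
      · simp
      · simpa using hw j
    · rw [Fin.sum_univ_succ]; simp [hws]

lemma card_sum_eq (m s : ℕ) :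
    (Finset.piAntidiag (Finset.univ : Finset (Fin (m + 1))) s).card ≤ (s + 1) ^ m := by
  have : (Fintype.piFinset (fun _ : Fin m => Finset.range (s + 1))).card = (s + 1) ^ m := by simp
  rw [← this]
  refine Finset.card_le_card_of_injOn (fun w i => w i.succ) ?_ ?_
  · intro w hw
    simp only [Finset.mem_coe, Finset.mem_piAntidiag] at hw
    simp only [Finset.mem_coe, Fintype.mem_piFinset, Finset.mem_range]
    intro i
    have := Finset.single_le_sum (f := w) (fun i _ => Nat.zero_le _) (Finset.mem_univ i.succ)
    have h : ∑ x, w x = s := hw.1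
    omega
  · intro w hw w' hw' h
    simp only [Finset.mem_coe, Finset.mem_piAntidiag] at hw hw'
    have h1 := hw.1
    have h2 := hw'.1
    rw [Fin.sum_univ_succ] at h1 h2
    have h3 : ∀ i : Fin m, w i.succ = w' i.succ := fun i => congrFun h i
    simp only [h3] at h1
    ext i
    refine Fin.cases ?_ (fun j => ?_) i
    · omega
    · exact h3 j

lemma choose_w (M : ℕ) (x : Fin M → ℝ) (hx : ∀ i, x i ≠ 0) (ε T : ℝ) (hε : 0 < ε) (hT : 0 < T)
    (hxe : ∏ i, |x i| < ε) :
    ∃ w : Fin M → ℕ, ∑ i, w i = ⌊Real.log (T ^ M / ε)⌋₊ - M ∧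
      ((∀ i, |x i| ≤ T) → ∀ i, |x i| ≤ T * Real.exp (-(w i : ℝ))) := by
  set u : Fin M → ℕ := fun i => ⌊Real.log (T / |x i|)⌋₊ with hu
  have hxp : ∀ i, 0 < |x i| := fun i => abs_pos.2 (hx i)
  have hprod : 0 < ∏ i, |x i| := Finset.prod_pos fun i _ => hxp i
  have h1 : Real.log (T ^ M / ε) < ∑ i, ((u i : ℝ) + 1) := by
    have e : Real.log (T ^ M / ∏ i, |x i|) = ∑ i, Real.log (T / |x i|) := by
      rw [← Real.log_prod (fun i _ => (div_pos hT (hxp i)).ne'), Finset.prod_div_distrib]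
      simp
    calc Real.log (T ^ M / ε) < Real.log (T ^ M / ∏ i, |x i|) := by
          apply Real.log_lt_log (by positivity)
          exact div_lt_div_of_pos_left (by positivity) hprod hxe
      _ = ∑ i, Real.log (T / |x i|) := e
      _ ≤ _ := Finset.sum_le_sum fun i _ => (Nat.lt_floor_add_one _).le
  have h2 : ⌊Real.log (T ^ M / ε)⌋₊ - M ≤ ∑ i, u i := by
    rw [Finset.sum_add_distrib] at h1
    simp only [Finset.sum_const, Finset.card_univ, Fintype.card_fin, nsmul_eq_mul, mul_one] at h1
    have h3 : ⌊Real.log (T ^ M / ε)⌋₊ ≤ ∑ i, u i + M := by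
      apply Nat.floor_le_of_le
      push_cast
      exact h1.le
    omega
  obtain ⟨w, hw, hws⟩ := exists_le_sum_eq M u _ h2
  refine ⟨w, hws, fun hxT i => ?_⟩
  have h0 : 0 ≤ Real.log (T / |x i|) := Real.log_nonneg (by rw [le_div_iff₀ (hxp i)]; linarith [hxT i])
  have h3 : (w i : ℝ) ≤ Real.log (T / |x i|) :=
    le_trans (by exact_mod_cast hw i) (Nat.floor_le h0)
  have h4 : Real.exp (w i) ≤ T / |x i| := by
    rw [← Real.exp_log (div_pos hT (hxp i))]
    exact Real.exp_le_exp.2 h3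
  rw [le_div_iff₀ (hxp i)] at h4
  rw [Real.exp_neg, ← div_eq_mul_inv, le_div_iff₀ (Real.exp_pos _)]
  linarith

lemma choose_K (M N : ℕ) (hM : 0 < M) (A : ℝ) (hA : 1 ≤ A) (Q : Fin N → ℝ) (hQ : ∀ j, 1 ≤ Q j) :
    ∃ (K : Finset (Fin N)) (B : ℝ), 1 ≤ B ∧ B ^ (M + (N - K.card)) * ∏ j ∈ K, Q j = A ∧
      (∀ j, j ∉ K → B ≤ Q j) ∧ A ^ ((1 : ℝ) / ((M : ℝ) + N)) ≤ B := by
  classical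
  have hQp : ∀ K : Finset (Fin N), 0 < ∏ j ∈ K, Q j := fun K =>
    Finset.prod_pos fun j _ => lt_of_lt_of_le one_pos (hQ j)
  let b : Finset (Fin N) → ℝ := fun K =>
    (A / ∏ j ∈ K, Q j) ^ ((1 : ℝ) / ((M + (N - K.card) : ℕ) : ℝ))
  have hbpos : ∀ K, 0 < b K := fun K => Real.rpow_pos_of_pos (div_pos (by linarith) (hQp K)) _
  have hbpow : ∀ K, b K ^ (M + (N - K.card)) = A / ∏ j ∈ K, Q j := by
    intro K
    simp only [b]
    rw [one_div, Real.rpow_inv_natCast_pow (div_pos (by linarith) (hQp K)).le (by omega)]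
  obtain ⟨K, -, hK⟩ := Finset.exists_max_image (Finset.univ : Finset (Finset (Fin N))) b
    Finset.univ_nonempty
  have h0 : A ^ ((1 : ℝ) / ((M : ℝ) + N)) ≤ b K := by
    have := hK ∅ (Finset.mem_univ _)
    simpa [b] using this
  refine ⟨K, b K, ?_, ?_, ?_, h0⟩
  · refine le_trans (Real.one_le_rpow hA (by positivity)) h0
  · rw [hbpow, div_mul_cancel₀ _ (hQp K).ne']
  · intro j hj
    have h1 := hK (insert j K) (Finset.mem_univ _)
    have hcard : (insert j K).card = K.card + 1 := Finset.card_insert_of_notMem hj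
    have hle : (insert j K).card ≤ N := by simpa using Finset.card_le_univ (insert j K)
    have h2 := hbpow (insert j K)
    have h3 := hbpow K
    rw [Finset.prod_insert hj, hcard] at h2
    have e : M + (N - K.card) = (M + (N - (K.card + 1))) + 1 := by omega
    rw [e, pow_succ] at h3
    have hQj : 0 < Q j := lt_of_lt_of_le one_pos (hQ j)
    have h4 : b (insert j K) ^ (M + (N - (K.card + 1))) * Q j = b K ^ (M + (N - (K.card + 1))) * b K := by
      rw [h2, h3]; field_simp [(hQp K).ne']
    have h5 : b (insert j K) ^ (M + (N - (K.card + 1))) ≤ b K ^ (M + (N - (K.card + 1))) :=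
      pow_le_pow_left₀ (hbpos _).le h1 _
    have h6 : b K ^ (M + (N - (K.card + 1))) * b K ≤ b K ^ (M + (N - (K.card + 1))) * Q j := by
      rw [← h4]; exact mul_le_mul_of_nonneg_right h5 hQj.le
    exact le_of_mul_le_mul_left h6 (pow_pos (hbpos K) _)

lemma distNearestInt_le (x : ℝ) (p : ℤ) : distNearestInt x ≤ |x + p| := by
  have := round_le x (-p)
  simpa [distNearestInt] using this

lemma fiber_bound (M N : ℕ) (hM : 0 < M) (φQ ε T C1 : ℝ) (hφ : 0 < φQ) (hε : 0 < ε) (hT : 0 < T)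
    (hC1 : 1 ≤ C1)
    (L : Matrix (Fin M) (Fin N) ℝ) (Q : Fin N → ℝ) (hQ : ∀ j, 1 ≤ Q j)
    (hbad : ∀ q : Fin N → ℤ, q ≠ 0 → (∀ j, |(q j : ℝ)| ≤ Q j) →
      φQ ≤ (∏ j, max 1 |(q j : ℝ)|) * ∏ i, distNearestInt (∑ j, L i j * (q j : ℝ)))
    (X : Fin M → ℝ) (hX0 : ∀ i, 0 < X i) (hXT : ∀ i, X i ≤ T) (hX : ∏ i, (2 * X i) ≤ C1 * ε)
    (K : Finset (Fin N)) (B : ℝ) (hB : 1 ≤ B) (hBQ : ∀ j, j ∉ K → B ≤ Q j)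
    (hBA : B ^ (M + (N - K.card)) * (∏ j ∈ K, Q j) * φQ = ε * ∏ j, Q j)
    (W : Finset ((Fin M → ℤ) × (Fin N → ℤ)))
    (hW1 : ∀ r ∈ W, ∀ i, |(∑ j, L i j * (r.2 j : ℝ)) + (r.1 i : ℝ)| ≤ X i)
    (hW2 : ∀ r ∈ W, ∀ r' ∈ W, ∀ j, |((r.2 j - r'.2 j : ℤ) : ℝ)| ≤ Q j)
    (hW3 : ∀ r ∈ W, ∀ r' ∈ W, ∀ j ∈ K, r.2 j = r'.2 j) :
    (W.card : ℝ) ≤ 5 ^ (M + N) * (M + N).factorial * (C1 * ε * ∏ j ∈ Kᶜ, Q j) +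
      (10 * (M + N) * C1 * (1 + T) * B) ^ (M + (N - K.card) - 1) := by
  classical
  have : Nonempty (Fin M ⊕ {j // j ∉ K}) := ⟨Sum.inl ⟨0, hM⟩⟩
  have hQp : ∀ j, 0 < Q j := fun j => lt_of_lt_of_le one_pos (hQ j)
  have hKN : K.card ≤ N := by simpa using Finset.card_le_univ K
  have hcardI : Fintype.card (Fin M ⊕ {j // j ∉ K}) = M + (N - K.card) := by
    simp [Fintype.card_subtype_compl]
  set n' := M + (N - K.card) with hn'
  set l : ℝ := 1 / (2 * C1 * (1 + T) * B) with hl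
  have hlpos : 0 < l := by positivity
  have hden : 1 ≤ 2 * C1 * (1 + T) * B := by nlinarith [mul_pos hT (by linarith : 0 < C1), mul_le_mul hC1 hB (by linarith) (by linarith), mul_nonneg (mul_nonneg (by linarith : 0 ≤ C1) hT.le) (by linarith : 0 ≤ B)]
  have hl1 : l ≤ 1 := by rw [hl, div_le_one (by positivity)]; exact hden
  let g : ((Fin M → ℤ) × (Fin N → ℤ)) → ((Fin M ⊕ {j // j ∉ K}) → ℤ) := fun r => Sum.elim r.1 (fun j => r.2 j)
  have hginj : Set.InjOn g W := by
    intro r hr r' hr' h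
    apply Prod.ext
    · ext i; exact congrFun h (Sum.inl i)
    · ext j
      by_cases hj : j ∈ K
      · exact hW3 r hr r' hr' j hj
      · exact congrFun h (Sum.inr ⟨j, hj⟩)
  let d : (Fin M ⊕ {j // j ∉ K}) → ℝ := Sum.elim (fun i => 1 / (2 * X i)) (fun j => 1 / Q j)
  let L' : Matrix (Fin M) {j // j ∉ K} ℝ := fun i j => L i j
  let G : Matrix (Fin M ⊕ {j // j ∉ K}) (Fin M ⊕ {j // j ∉ K}) ℝ := Matrix.diagonal d * Matrix.fromBlocks 1 L' 0 1
  have hprodsub : ∏ j : {j // j ∉ K}, Q j = ∏ j ∈ Kᶜ, Q j := by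
    rw [Finset.prod_subtype Kᶜ (p := fun j => j ∉ K) (by simp)]
  have hdetG : G.det = 1 / ((∏ i, (2 * X i)) * ∏ j ∈ Kᶜ, Q j) := by
    simp only [G, Matrix.det_mul, Matrix.det_diagonal, Matrix.det_fromBlocks_zero₂₁, Matrix.det_one,
      mul_one, d]
    rw [Fintype.prod_sum_type]
    simp only [Sum.elim_inl, Sum.elim_inr]
    rw [Finset.prod_div_distrib, Finset.prod_div_distrib, hprodsub]
    simp only [Finset.prod_const_one]
    rw [div_mul_div_comm, one_mul]
  have hP1 : 0 < ∏ i, (2 * X i) := Finset.prod_pos fun i _ => by linarith [hX0 i]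
  have hP2 : 0 < ∏ j ∈ Kᶜ, Q j := Finset.prod_pos fun j _ => hQp j
  have hP3 : 0 < ∏ j ∈ K, Q j := Finset.prod_pos fun j _ => hQp j
  have hGpos : 0 < G.det := by rw [hdetG]; positivity
  -- the coordinates
  have hinl : ∀ r ∈ W, ∀ r' ∈ W, ∀ i, G.mulVec (fun a => ((g r a - g r' a : ℤ) : ℝ)) (Sum.inl i)
      = ((∑ j, L i j * ((r.2 j - r'.2 j : ℤ) : ℝ)) + ((r.1 i - r'.1 i : ℤ) : ℝ)) / (2 * X i) := by
    intro r hr r' hr' i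
    have hs : ∑ j, L i j * ((r.2 j - r'.2 j : ℤ) : ℝ)
        = ∑ j : {j // j ∉ K}, L i j * ((r.2 j - r'.2 j : ℤ) : ℝ) := by
      rw [← Finset.sum_subtype Kᶜ (p := fun j => j ∉ K) (by simp)
        (fun j => L i j * ((r.2 j - r'.2 j : ℤ) : ℝ))]
      symm
      apply Finset.sum_subset (Finset.subset_univ _)
      intro j _ hj
      rw [hW3 r hr r' hr' j (by simpa using hj)]
      simp
    rw [hs]
    simp only [G, ← Matrix.mulVec_mulVec, Matrix.mulVec_diagonal, Matrix.fromBlocks_mulVec,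
      Sum.elim_inl, Sum.elim_inr, Pi.add_apply, Matrix.one_mulVec, Matrix.zero_mulVec]
    simp [d, g, L', Matrix.mulVec, dotProduct, Function.comp_def]
    ring
  have hinr : ∀ r ∈ W, ∀ r' ∈ W, ∀ j, G.mulVec (fun a => ((g r a - g r' a : ℤ) : ℝ)) (Sum.inr j)
      = ((r.2 j - r'.2 j : ℤ) : ℝ) / Q j := by
    intro r hr r' hr' j
    simp only [G, ← Matrix.mulVec_mulVec, Matrix.mulVec_diagonal, Matrix.fromBlocks_mulVec,
      Sum.elim_inl, Sum.elim_inr, Pi.add_apply, Matrix.one_mulVec, Matrix.zero_mulVec]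
    simp [d, g, L', Matrix.mulVec, dotProduct, Function.comp_def]
    ring
  have hmain := box_count (W.image g) G hGpos.ne' l hlpos hl1 ?_ ?_
  · rw [Finset.card_image_of_injOn hginj, hcardI, abs_of_pos hGpos, hdetG] at hmain
    refine hmain.trans ?_
    have hn'le : n' ≤ M + N := by omega
    apply add_le_add
    · rw [div_div_eq_mul_div, div_one]
      have hf : ((n'.factorial : ℕ) : ℝ) ≤ ((M + N).factorial : ℕ) := by
        exact_mod_cast Nat.factorial_le hn'le
      have h5 : (5 : ℝ) ^ n' ≤ 5 ^ (M + N) := pow_le_pow_right₀ (by norm_num) hn'le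
      gcongr
    · apply pow_le_pow_left₀ (by positivity)
      have hc : (n' : ℝ) ≤ M + N := by exact_mod_cast hn'le
      rw [hl, div_div_eq_mul_div, div_one]
      have hz : 0 ≤ C1 * (1 + T) * B := by positivity
      nlinarith
  · intro z hz z' hz' a
    obtain ⟨r, hr, rfl⟩ := Finset.mem_image.1 hz
    obtain ⟨r', hr', rfl⟩ := Finset.mem_image.1 hz'
    rcases a with i | j
    · rw [hinl r hr r' hr', abs_div, abs_of_pos (by linarith [hX0 i] : 0 < 2 * X i),
        div_le_one (by linarith [hX0 i])]
      have e : (∑ j, L i j * ((r.2 j - r'.2 j : ℤ) : ℝ)) + ((r.1 i - r'.1 i : ℤ) : ℝ)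
          = ((∑ j, L i j * (r.2 j : ℝ)) + (r.1 i : ℝ)) - ((∑ j, L i j * (r'.2 j : ℝ)) + (r'.1 i : ℝ)) := by
        push_cast
        simp only [mul_sub, Finset.sum_sub_distrib]
        ring
      rw [e]
      refine (abs_sub _ _).trans ?_
      linarith [hW1 r hr i, hW1 r' hr' i]
    · rw [hinr r hr r' hr', abs_div, abs_of_pos (hQp j), div_le_one (hQp j)]
      exact hW2 r hr r' hr' j
  · intro z hz z' hz' hne
    obtain ⟨r, hr, rfl⟩ := Finset.mem_image.1 hz
    obtain ⟨r', hr', rfl⟩ := Finset.mem_image.1 hz'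
    by_contra hcon
    push Not at hcon
    have hx : ∀ i, |(∑ j, L i j * ((r.2 j - r'.2 j : ℤ) : ℝ)) + ((r.1 i - r'.1 i : ℤ) : ℝ)| < l * (2 * X i) := by
      intro i
      have h := hcon (Sum.inl i)
      rw [hinl r hr r' hr', abs_div, abs_of_pos (by linarith [hX0 i] : 0 < 2 * X i),
        div_lt_iff₀ (by linarith [hX0 i])] at h
      exact h
    have hy : ∀ j, j ∉ K → |((r.2 j - r'.2 j : ℤ) : ℝ)| < l * Q j := by
      intro j hj
      have h := hcon (Sum.inr ⟨j, hj⟩)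
      rw [hinr r hr r' hr', abs_div, abs_of_pos (hQp j), div_lt_iff₀ (hQp j)] at h
      exact h
    by_cases hq : r.2 = r'.2
    · have hp : ∃ i, r.1 i ≠ r'.1 i := by
        by_contra hall
        push Not at hall
        apply hne
        have : r = r' := Prod.ext (funext hall) hq
        rw [this]
      obtain ⟨i, hi⟩ := hp
      have h := hx i
      simp only [hq, sub_self, Int.cast_zero, mul_zero, Finset.sum_const_zero, zero_add] at h
      have h1 : (1 : ℝ) ≤ |((r.1 i - r'.1 i : ℤ) : ℝ)| := by
        rw [← Int.cast_abs]
        exact_mod_cast Int.one_le_abs (sub_ne_zero.2 hi)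
      have h2 : l * (2 * X i) < 1 := by
        rw [hl, one_div, inv_mul_lt_iff₀ (by positivity), mul_one]
        have h3 : 1 ≤ C1 * B := one_le_mul_of_one_le_of_one_le hC1 hB
        have := hXT i
        nlinarith
      linarith
    · have hbq := hbad (fun j => r.2 j - r'.2 j) (by
        intro h0
        apply hq
        ext j
        exact sub_eq_zero.1 (congrFun h0 j)) (hW2 r hr r' hr')
      have hlB : l ≤ 1 / B := by
        rw [hl]
        apply one_div_le_one_div_of_le (by linarith)
        have : 1 ≤ 2 * C1 * (1 + T) := by nlinarith
        nlinarith
      have h1 : ∏ j, max 1 |((r.2 j - r'.2 j : ℤ) : ℝ)| ≤ (∏ j ∈ Kᶜ, Q j) / B ^ (N - K.card) := by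
        rw [← Finset.prod_mul_prod_compl K]
        have ha : ∏ j ∈ K, max 1 |((r.2 j - r'.2 j : ℤ) : ℝ)| = 1 := by
          apply Finset.prod_eq_one
          intro j hj
          rw [hW3 r hr r' hr' j hj]; simp
        have hb : (∏ j ∈ Kᶜ, Q j) / B ^ (N - K.card) = ∏ j ∈ Kᶜ, (Q j / B) := by
          rw [Finset.prod_div_distrib, Finset.prod_const, Finset.card_compl, Fintype.card_fin]
        rw [ha, hb, one_mul]
        apply Finset.prod_le_prod
        · intro j _; positivity
        · intro j hj
          have hj' : j ∉ K := by simpa using hj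
          apply max_le
          · rw [le_div_iff₀ (by linarith), one_mul]; exact hBQ j hj'
          · refine (hy j hj').le.trans ?_
            calc l * Q j ≤ 1 / B * Q j := mul_le_mul_of_nonneg_right hlB (hQp j).le
              _ = Q j / B := by ring
      have h2 : ∏ i, distNearestInt (∑ j, L i j * ((r.2 j - r'.2 j : ℤ) : ℝ)) ≤ l ^ M * (C1 * ε) := by
        calc ∏ i, distNearestInt (∑ j, L i j * ((r.2 j - r'.2 j : ℤ) : ℝ)) ≤ ∏ i, (l * (2 * X i)) := by
              apply Finset.prod_le_prod
              · intro i _; exact abs_nonneg _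
              · intro i _
                exact (distNearestInt_le _ (r.1 i - r'.1 i)).trans (hx i).le
          _ = l ^ M * ∏ i, (2 * X i) := by
              rw [Finset.prod_mul_distrib]; simp
          _ ≤ _ := by gcongr
      have h3 : l ^ M * C1 < 1 / B ^ M := by
        have e : l ^ M = 1 / ((2 * C1 * (1 + T)) ^ M * B ^ M) := by
          rw [hl, div_pow, one_pow, mul_pow]
        have h4 : C1 < (2 * C1 * (1 + T)) ^ M := by
          have h5 : 1 ≤ 2 * C1 * (1 + T) := by nlinarith
          have h6 := le_self_pow₀ h5 hM.ne'
          nlinarith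
        rw [e, div_mul_eq_mul_div, one_mul, div_lt_div_iff₀ (by positivity) (by positivity), one_mul]
        exact mul_lt_mul_of_pos_right h4 (by positivity)
      have h4 : φQ < (∏ j ∈ Kᶜ, Q j) / B ^ (N - K.card) * (1 / B ^ M * ε) := by
        refine lt_of_le_of_lt hbq ?_
        refine lt_of_le_of_lt (mul_le_mul h1 h2 (Finset.prod_nonneg fun i _ => abs_nonneg _)
          (by positivity)) ?_
        rw [← mul_assoc (l ^ M)]
        gcongr
      have h5 : (∏ j ∈ Kᶜ, Q j) / B ^ (N - K.card) * (1 / B ^ M * ε) = φQ := by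
        rw [← Finset.prod_mul_prod_compl K Q, hn', pow_add] at hBA
        have hBp : 0 < B := by linarith
        have hBA' : (∏ j ∈ K, Q j) * (B ^ M * B ^ (N - K.card) * φQ)
            = (∏ j ∈ K, Q j) * (ε * ∏ j ∈ Kᶜ, Q j) := by
          linarith
        have h6 := mul_left_cancel₀ hP3.ne' hBA'
        field_simp
        linarith
      linarith

lemma card_sum_eq' (M s : ℕ) (hM : 0 < M) :
    (Finset.piAntidiag (Finset.univ : Finset (Fin M)) s).card ≤ (s + 1) ^ (M - 1) := by
  obtain ⟨m, rfl⟩ : ∃ m, M = m + 1 := ⟨M - 1, by omega⟩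
  exact card_sum_eq m s

lemma geomMean_pow (N : ℕ) (hN : 0 < N) (Q : Fin N → ℝ) (hQ : ∀ j, 1 ≤ Q j) :
    geomMean N Q ^ N = ∏ j, Q j := by
  rw [geomMean, one_div, Real.rpow_inv_natCast_pow _ hN.ne']
  exact Finset.prod_nonneg fun j _ => by linarith [hQ j]

lemma class_card (N : ℕ) (Q : Fin N → ℝ) (hQ : ∀ j, 1 ≤ Q j) (K : Finset (Fin N)) :
    ((Fintype.piFinset (fun j => if j ∈ K then Finset.Icc (-⌊Q j⌋) ⌊Q j⌋ else Finset.Icc 0 1)).card : ℝ)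
      ≤ 3 ^ N * ∏ j ∈ K, Q j := by
  rw [Fintype.card_piFinset]
  push_cast
  have h : 3 ^ N * ∏ j ∈ K, Q j = ∏ j, (3 * if j ∈ K then Q j else 1) := by
    rw [Finset.prod_mul_distrib, Finset.prod_ite_mem]
    simp
  rw [h]
  apply Finset.prod_le_prod
  · intro j _; positivity
  · intro j _
    split_ifs with hj
    · have h1 := hQ j
      have h2 := Int.floor_le (Q j)
      have h3 : 0 ≤ ⌊Q j⌋ := Int.floor_nonneg.2 (by linarith)
      rw [Int.card_Icc]
      have h4 : (((⌊Q j⌋ + 1 - -⌊Q j⌋).toNat : ℤ) : ℝ) = ((⌊Q j⌋ + 1 - -⌊Q j⌋ : ℤ) : ℝ) := by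
        rw [Int.toNat_of_nonneg (by omega)]
      push_cast at h4
      rw [h4]
      linarith
    · norm_num

lemma pairs_bound (M N : ℕ) (hM : 0 < M) (hN : 0 < N) (φQ ε T : ℝ) (hφ : 0 < φQ)
    (hε : 0 < ε) (hT : 0 < T) (hTe : Real.exp 1 ^ M ≤ T ^ M / ε)
    (L : Matrix (Fin M) (Fin N) ℝ) (Q : Fin N → ℝ) (hQ : ∀ j, 1 ≤ Q j)
    (hbad : ∀ q : Fin N → ℤ, q ≠ 0 → (∀ j, |(q j : ℝ)| ≤ Q j) →
      φQ ≤ (∏ j, max 1 |(q j : ℝ)|) * ∏ i, distNearestInt (∑ j, L i j * (q j : ℝ)))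
    (W : Finset ((Fin M → ℤ) × (Fin N → ℤ))) (hne : W.Nonempty)
    (hq0 : ∀ r ∈ W, r.2 ≠ 0)
    (hWe : ∀ r ∈ W, ∏ i, |(∑ j, L i j * (r.2 j : ℝ)) + (r.1 i : ℝ)| < ε)
    (hWT : ∀ r ∈ W, ∀ i, |(∑ j, L i j * (r.2 j : ℝ)) + (r.1 i : ℝ)| ≤ T)
    (hWQ : ∀ r ∈ W, ∀ j, |(r.2 j : ℝ)| ≤ Q j) :
    (W.card : ℝ) ≤ (3 ^ N * (5 ^ (M + N) * (M + N).factorial * (2 ^ M * Real.exp (M + 1)) +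
        (10 * (M + N) * (2 ^ M * Real.exp (M + 1))) ^ (M + N - 1))) * (1 + T) ^ (M + N - 1) *
        Real.log (T ^ M / ε) ^ (M - 1) *
      (ε * ∏ j, Q j + (ε * (∏ j, Q j) / φQ) ^ (((M : ℝ) + (N : ℝ) - 1) / ((M : ℝ) + (N : ℝ)))) := by
  classical
  have hQp : ∀ j, 0 < Q j := fun j => lt_of_lt_of_le one_pos (hQ j)
  have hP : 0 < ∏ j, Q j := Finset.prod_pos fun j _ => hQp j
  set C1 : ℝ := 2 ^ M * Real.exp (M + 1) with hC1d
  have hC1 : 1 ≤ C1 := one_le_mul_of_one_le_of_one_le (one_le_pow₀ (by norm_num))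
    (Real.one_le_exp (by positivity))
  set A : ℝ := ε * (∏ j, Q j) / φQ with hA
  have hA1 : 1 ≤ A := by
    obtain ⟨r, hr⟩ := hne
    rw [hA, le_div_iff₀ hφ, one_mul]
    refine (hbad r.2 (hq0 r hr) (hWQ r hr)).trans ?_
    rw [mul_comm ε]
    apply mul_le_mul
    · apply Finset.prod_le_prod
      · intro j _; positivity
      · intro j _; exact max_le (hQ j) (hWQ r hr j)
    · refine le_trans ?_ (hWe r hr).le
      apply Finset.prod_le_prod
      · intro i _; exact abs_nonneg _
      · intro i _; exact distNearestInt_le _ _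
    · exact Finset.prod_nonneg fun i _ => abs_nonneg _
    · exact hP.le
  obtain ⟨K, B, hB1, hBA, hBQ, hB0⟩ := choose_K M N hM A hA1 Q hQ
  have hBp : 0 < B := by linarith
  have hKN : K.card ≤ N := by simpa using Finset.card_le_univ K
  set PK := ∏ j ∈ K, Q j with hPK
  set PKc := ∏ j ∈ Kᶜ, Q j with hPKc
  have hPP : PK * PKc = ∏ j, Q j := Finset.prod_mul_prod_compl K Q
  have hPK0 : 0 < PK := Finset.prod_pos fun j _ => hQp j
  have hPKc0 : 0 < PKc := Finset.prod_pos fun j _ => hQp j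
  have hBA' : B ^ (M + (N - K.card)) * PK * φQ = ε * ∏ j, Q j := by
    rw [hBA, hA, div_mul_cancel₀ _ hφ.ne']
  set ℓ := Real.log (T ^ M / ε) with hℓ
  have hℓM : (M : ℝ) ≤ ℓ := by
    have h : Real.log (Real.exp 1 ^ M) ≤ ℓ := Real.log_le_log (by positivity) hTe
    rwa [Real.log_pow, Real.log_exp, mul_one] at h
  have hfM : M ≤ ⌊ℓ⌋₊ := Nat.le_floor hℓM
  set s := ⌊ℓ⌋₊ - M with hs
  have hℓ0 : 0 ≤ ℓ := le_trans (by positivity) hℓM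
  have hsℓ : ((s + 1 : ℕ) : ℝ) ≤ ℓ := by
    refine le_trans ?_ (Nat.floor_le hℓ0)
    exact_mod_cast (by omega : s + 1 ≤ ⌊ℓ⌋₊)
  have hℓs : ℓ ≤ s + M + 1 := by
    have h := (Nat.lt_floor_add_one ℓ).le
    have e : ((⌊ℓ⌋₊ : ℕ) : ℝ) = s + M := by
      exact_mod_cast (by omega : ⌊ℓ⌋₊ = s + M)
    rw [e] at h; exact h
  have hx0 : ∀ r ∈ W, ∀ i, (∑ j, L i j * (r.2 j : ℝ)) + (r.1 i : ℝ) ≠ 0 := by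
    intro r hr i h0
    have h := hbad r.2 (hq0 r hr) (hWQ r hr)
    have hd := distNearestInt_le (∑ j, L i j * (r.2 j : ℝ)) (r.1 i)
    rw [h0, abs_zero] at hd
    have hd0 : distNearestInt (∑ j, L i j * (r.2 j : ℝ)) = 0 := le_antisymm hd (abs_nonneg _)
    rw [Finset.prod_eq_zero (Finset.mem_univ i) hd0, mul_zero] at h
    linarith
  have hw : ∀ r : (Fin M → ℤ) × (Fin N → ℤ), ∃ w : Fin M → ℕ, r ∈ W → (∑ i, w i = s ∧
      ∀ i, |(∑ j, L i j * (r.2 j : ℝ)) + (r.1 i : ℝ)| ≤ T * Real.exp (-(w i : ℝ))) := by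
    intro r
    by_cases hr : r ∈ W
    · obtain ⟨w, h1, h2⟩ := choose_w M (fun i => (∑ j, L i j * (r.2 j : ℝ)) + (r.1 i : ℝ))
        (hx0 r hr) ε T hε hT (hWe r hr)
      exact ⟨w, fun _ => ⟨h1, h2 (hWT r hr)⟩⟩
    · exact ⟨0, fun h => absurd h hr⟩
  choose w hw using hw
  let cl : (Fin M → ℤ) × (Fin N → ℤ) → Fin N → ℤ := fun r j =>
    if j ∈ K then r.2 j else if 0 ≤ r.2 j then 1 else 0
  set bd : ℝ := 5 ^ (M + N) * (M + N).factorial * (C1 * ε * PKc) +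
      (10 * (M + N) * C1 * (1 + T) * B) ^ (M + (N - K.card) - 1) with hbd
  have hbd0 : 0 ≤ bd := by positivity
  set t := (Finset.piAntidiag (Finset.univ : Finset (Fin M)) s) ×ˢ
    (Fintype.piFinset (fun j => if j ∈ K then Finset.Icc (-⌊Q j⌋) ⌊Q j⌋ else Finset.Icc 0 1)) with ht
  have hcard := Finset.card_le_mul_card_image_of_maps_to (f := fun r => (w r, cl r)) (s := W) (t := t)
    ?_ ⌊bd⌋₊ ?_
  · have htc : (t.card : ℝ) ≤ ℓ ^ (M - 1) * (3 ^ N * PK) := by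
      rw [ht, Finset.card_product, Nat.cast_mul]
      apply mul_le_mul _ (class_card N Q hQ K) (by positivity) (by positivity)
      calc _ ≤ (((s + 1) ^ (M - 1) : ℕ) : ℝ) := by exact_mod_cast card_sum_eq' M s hM
        _ = ((s + 1 : ℕ) : ℝ) ^ (M - 1) := by push_cast; ring
        _ ≤ _ := pow_le_pow_left₀ (by positivity) hsℓ _
    have h1 : (W.card : ℝ) ≤ bd * (ℓ ^ (M - 1) * (3 ^ N * PK)) := by
      calc (W.card : ℝ) ≤ ((⌊bd⌋₊ * t.card : ℕ) : ℝ) := by exact_mod_cast hcard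
        _ = (⌊bd⌋₊ : ℝ) * t.card := by push_cast; ring
        _ ≤ _ := mul_le_mul (Nat.floor_le hbd0) htc (by positivity) hbd0
    refine h1.trans ?_
    set a5 : ℝ := 5 ^ (M + N) * (M + N).factorial * C1 with ha5
    set a10 : ℝ := 10 * (M + N) * C1 with ha10
    have hM1 : (1 : ℝ) ≤ M := by exact_mod_cast hM
    have ha10' : 1 ≤ a10 := by
      have : (0:ℝ) ≤ N := by positivity
      rw [ha10]; nlinarith
    set k := M + (N - K.card) - 1 with hk
    have hkk : M + (N - K.card) = k + 1 := by omega
    have hkle : k ≤ M + N - 1 := by omega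
    have hpow : (a10 * (1 + T) * B) ^ k * PK ≤ a10 ^ (M + N - 1) * (1 + T) ^ (M + N - 1) *
        A ^ (((M : ℝ) + (N : ℝ) - 1) / ((M : ℝ) + (N : ℝ))) := by
      have hBk : B ^ k * PK ≤ A ^ (((M : ℝ) + (N : ℝ) - 1) / ((M : ℝ) + (N : ℝ))) := by
        have e1 : B ^ k * PK = A / B := by
          rw [eq_div_iff hBp.ne', ← hBA, hkk, pow_succ]; ring
        have hMN : (0 : ℝ) < (M : ℝ) + N := by positivity
        have e2 : ((M : ℝ) + (N : ℝ) - 1) / ((M : ℝ) + (N : ℝ)) = 1 - 1 / ((M : ℝ) + N) := by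
          field_simp
        have hAp : 0 < A := by linarith
        rw [e1, e2, Real.rpow_sub hAp, Real.rpow_one]
        exact div_le_div_of_nonneg_left hAp.le (Real.rpow_pos_of_pos hAp _) hB0
      rw [mul_pow, mul_pow, mul_assoc]
      apply mul_le_mul _ hBk (by positivity) (by positivity)
      apply mul_le_mul (pow_le_pow_right₀ ha10' hkle) (pow_le_pow_right₀ (by linarith) hkle)
        (by positivity) (by positivity)
    have hT1 : 1 ≤ (1 + T) ^ (M + N - 1) := one_le_pow₀ (by linarith)
    have hApow : 0 ≤ A ^ (((M : ℝ) + (N : ℝ) - 1) / ((M : ℝ) + (N : ℝ))) :=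
      Real.rpow_nonneg (by linarith) _
    set R := A ^ (((M : ℝ) + (N : ℝ) - 1) / ((M : ℝ) + (N : ℝ))) with hR
    set TT := (1 + T) ^ (M + N - 1) with hTT
    set b10 := a10 ^ (M + N - 1) with hb10
    have ha50 : 0 ≤ a5 := by positivity
    have hb100 : 0 ≤ b10 := by positivity
    have hTT0 : 0 ≤ TT := by linarith
    have hεP : 0 ≤ ε * ∏ j, Q j := by positivity
    have hfin : bd * PK ≤ (a5 + b10) * TT * (ε * ∏ j, Q j + R) := by
      have e1 : bd * PK = a5 * (ε * ∏ j, Q j) + (a10 * (1 + T) * B) ^ k * PK := by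
        rw [hbd, ← hPP]; ring
      rw [e1]
      have h2 : a5 * (ε * ∏ j, Q j) ≤ a5 * TT * (ε * ∏ j, Q j) := by
        apply mul_le_mul_of_nonneg_right _ hεP
        exact le_mul_of_one_le_right ha50 hT1
      have h3 : 0 ≤ b10 * TT * (ε * ∏ j, Q j) := by positivity
      have h4 : 0 ≤ a5 * TT * R := by positivity
      linarith
    calc bd * (ℓ ^ (M - 1) * (3 ^ N * PK)) = (3 ^ N * ℓ ^ (M - 1)) * (bd * PK) := by ring
      _ ≤ (3 ^ N * ℓ ^ (M - 1)) * ((a5 + b10) * TT * (ε * ∏ j, Q j + R)) :=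
          mul_le_mul_of_nonneg_left hfin (by positivity)
      _ = _ := by ring
  · intro r hr
    rw [ht, Finset.mem_product]
    refine ⟨?_, ?_⟩
    · simp only [Finset.mem_piAntidiag]
      exact ⟨(hw r hr).1, fun i _ => Finset.mem_univ i⟩
    · simp only [Fintype.mem_piFinset, cl]
      intro j
      split_ifs with hj h0
      · have h := abs_le.1 (hWQ r hr j)
        rw [Finset.mem_Icc]
        constructor
        · rw [neg_le, Int.le_floor]; push_cast; linarith
        · rw [Int.le_floor]; exact h.2
      · simp
      · simp
  · intro b hb
    apply Nat.le_floor
    rw [ht, Finset.mem_product, Finset.mem_piAntidiag] at hb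
    have hbs : ∑ i, b.1 i = s := hb.1.1
    have hmem : ∀ r ∈ W.filter (fun r => (w r, cl r) = b), r ∈ W ∧ w r = b.1 ∧ cl r = b.2 := by
      intro r hr
      rw [Finset.mem_filter] at hr
      exact ⟨hr.1, congrArg Prod.fst hr.2, congrArg Prod.snd hr.2⟩
    refine fiber_bound M N hM φQ ε T C1 hφ hε hT hC1 L Q hQ hbad
      (fun i => T * Real.exp (-(b.1 i : ℝ))) (fun i => by positivity) ?_ ?_ K B hB1 hBQ hBA' _ ?_ ?_ ?_
    · intro i
      have : Real.exp (-(b.1 i : ℝ)) ≤ 1 := Real.exp_le_one_iff.2 (by simp)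
      nlinarith
    · rw [Finset.prod_mul_distrib, Finset.prod_mul_distrib, ← Real.exp_sum]
      simp only [Finset.prod_const, Finset.card_univ, Fintype.card_fin, Finset.sum_neg_distrib]
      rw [← Nat.cast_sum, hbs, hC1d, mul_assoc]
      apply mul_le_mul_of_nonneg_left _ (by positivity)
      have h1 : T ^ M / ε ≤ Real.exp (s + M + 1) := by
        rw [← Real.exp_log (by positivity : 0 < T ^ M / ε)]
        exact Real.exp_le_exp.2 hℓs
      rw [div_le_iff₀ hε] at h1
      rw [Real.exp_neg, ← div_eq_mul_inv, div_le_iff₀ (Real.exp_pos _)]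
      refine h1.trans (le_of_eq ?_)
      rw [show (s : ℝ) + M + 1 = (M + 1) + s by ring, Real.exp_add]
      ring
    · intro r hr i
      obtain ⟨hrW, h1, -⟩ := hmem r hr
      rw [← h1]
      exact (hw r hrW).2 i
    · intro r hr r' hr' j
      obtain ⟨hrW, -, h2⟩ := hmem r hr
      obtain ⟨hrW', -, h2'⟩ := hmem r' hr'
      have h := congrFun (h2.trans h2'.symm) j
      simp only [cl] at h
      have ha := abs_le.1 (hWQ r hrW j)
      have ha' := abs_le.1 (hWQ r' hrW' j)
      push_cast
      by_cases hj : j ∈ K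
      · simp only [hj, if_true] at h
        rw [h, sub_self, abs_zero]; exact (hQp j).le
      · simp only [hj, if_false] at h
        by_cases h0 : 0 ≤ r.2 j <;> by_cases h0' : 0 ≤ r'.2 j
        · have b1 : (0 : ℝ) ≤ r.2 j := by exact_mod_cast h0
          have b2 : (0 : ℝ) ≤ r'.2 j := by exact_mod_cast h0'
          rw [abs_le]; constructor <;> linarith
        · simp [h0, h0'] at h
        · simp [h0, h0'] at h
        · have b1 : (r.2 j : ℝ) ≤ 0 := by exact_mod_cast (not_le.1 h0).le
          have b2 : (r'.2 j : ℝ) ≤ 0 := by exact_mod_cast (not_le.1 h0').le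
          rw [abs_le]; constructor <;> linarith
    · intro r hr r' hr' j hj
      obtain ⟨hrW, -, h2⟩ := hmem r hr
      obtain ⟨hrW', -, h2'⟩ := hmem r' hr'
      have h := congrFun (h2.trans h2'.symm) j
      simpa [cl, hj] using h

theorem stmt1 (M N : ℕ) (hM : 0 < M) (hN : 0 < N) :
    ∃ c₀ : ℝ, 0 < c₀ ∧
      ∀ φ : ℝ → ℝ, AntitoneOn φ (Set.Ici 0) → (∀ x : ℝ, 0 ≤ x → φ x ∈ Set.Ioc (0 : ℝ) 1) →
      ∀ L : Matrix (Fin M) (Fin N) ℝ, rowUnitIndep M N L → multBadlyApprox M N φ L →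
      ∀ Q : Fin N → ℝ, (∀ j, 1 ≤ Q j) →
      ∀ ε T : ℝ, 0 < ε → 0 < T → Real.exp 1 ^ M ≤ T ^ M / ε →
        (Set.ncard ((latticeL M N L ∩ setZ M N ε T Q) \ setC M N) : ℝ) ≤
          c₀ * (1 + T) ^ (M + N - 1) * Real.log (T ^ M / ε) ^ (M - 1) *
            (ε * geomMean N Q ^ N +
              (ε * geomMean N Q ^ N / φ (geomMean N Q)) ^
                (((M : ℝ) + (N : ℝ) - 1) / ((M : ℝ) + (N : ℝ)))) := by
  classical
  refine ⟨3 ^ N * (5 ^ (M + N) * (M + N).factorial * (2 ^ M * Real.exp (M + 1)) +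
        (10 * (M + N) * (2 ^ M * Real.exp (M + 1))) ^ (M + N - 1)), by positivity, ?_⟩
  intro φ hanti hφ L _ hL Q hQ ε T hε hT hTe
  rw [geomMean_pow N hN Q hQ]
  have hQp : ∀ j, 0 < Q j := fun j => lt_of_lt_of_le one_pos (hQ j)
  have hP : 0 < ∏ j, Q j := Finset.prod_pos fun j _ => hQp j
  have hg : 0 ≤ geomMean N Q := Real.rpow_nonneg hP.le _
  have hφQ : 0 < φ (geomMean N Q) := (hφ _ hg).1
  have hlog : 0 ≤ Real.log (T ^ M / ε) := Real.log_nonneg (le_trans (one_le_pow₀ (Real.one_le_exp zero_le_one)) hTe)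
  have hbad : ∀ q : Fin N → ℤ, q ≠ 0 → (∀ j, |(q j : ℝ)| ≤ Q j) →
      φ (geomMean N Q) ≤ (∏ j, max 1 |(q j : ℝ)|) * ∏ i, distNearestInt (∑ j, L i j * (q j : ℝ)) := by
    intro q hq hqQ
    refine le_trans ?_ (hL q hq)
    have h0 : 0 ≤ ∏ j, max 1 |(q j : ℝ)| := Finset.prod_nonneg fun j _ => by positivity
    apply hanti
    · exact Real.rpow_nonneg h0 _
    · exact hg
    · apply Real.rpow_le_rpow h0 _ (by positivity)
      apply Finset.prod_le_prod
      · intro j _; positivity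
      · intro j _; exact max_le (hQ j) (hqQ j)
  set F := (latticeL M N L ∩ setZ M N ε T Q) \ setC M N with hF
  have hRHS : 0 ≤ (3 ^ N * (5 ^ (M + N) * (M + N).factorial * (2 ^ M * Real.exp (M + 1)) +
        (10 * (M + N) * (2 ^ M * Real.exp (M + 1))) ^ (M + N - 1))) * (1 + T) ^ (M + N - 1) *
        Real.log (T ^ M / ε) ^ (M - 1) *
      (ε * ∏ j, Q j + (ε * (∏ j, Q j) / φ (geomMean N Q)) ^ (((M : ℝ) + (N : ℝ) - 1) / ((M : ℝ) + (N : ℝ)))) := by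
    positivity
  by_cases hfin : F.Finite
  swap
  · rw [Set.Infinite.ncard hfin]
    simpa using hRHS
  rcases F.eq_empty_or_nonempty with hemp | hnon
  · rw [hemp, Set.ncard_empty]
    simpa using hRHS
  have hrep : ∀ v : Fin M ⊕ Fin N → ℝ, ∃ r : (Fin M → ℤ) × (Fin N → ℤ), v ∈ F →
      (∀ i, v (Sum.inl i) = (∑ j, L i j * (r.2 j : ℝ)) + (r.1 i : ℝ)) ∧
      (∀ j, v (Sum.inr j) = (r.2 j : ℝ)) := by
    intro v
    by_cases hv : v ∈ F
    · obtain ⟨p, q, h1, h2⟩ := hv.1.1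
      exact ⟨(p, q), fun _ => ⟨h1, h2⟩⟩
    · exact ⟨0, fun h => absurd h hv⟩
  choose r hr using hrep
  have hinj : Set.InjOn r F := by
    intro v hv v' hv' h
    have h1 := hr v hv
    have h2 := hr v' hv'
    ext a
    rcases a with i | j
    · rw [h1.1, h2.1, h]
    · rw [h1.2, h2.2, h]
  have hmem : ∀ x ∈ hfin.toFinset.image r, ∃ v ∈ F, r v = x := by
    intro x hx
    obtain ⟨v, hv, rfl⟩ := Finset.mem_image.1 hx
    exact ⟨v, hfin.mem_toFinset.1 hv, rfl⟩
  have hcard : F.ncard = (hfin.toFinset.image r).card := by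
    rw [Set.ncard_eq_toFinset_card F hfin, Finset.card_image_of_injOn]
    simpa using hinj
  rw [hcard]
  refine pairs_bound M N hM hN (φ (geomMean N Q)) ε T hφQ hε hT hTe L Q hQ hbad _ ?_ ?_ ?_ ?_ ?_
  · obtain ⟨v, hv⟩ := hnon
    exact ⟨r v, Finset.mem_image_of_mem _ (hfin.mem_toFinset.2 hv)⟩
  · intro x hx h0
    obtain ⟨v, hv, rfl⟩ := hmem x hx
    apply hv.2
    intro j
    rw [(hr v hv).2, h0]; simp
  · intro x hx
    obtain ⟨v, hv, rfl⟩ := hmem x hx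
    have h := hv.1.2.1
    simpa only [(hr v hv).1] using h
  · intro x hx i
    obtain ⟨v, hv, rfl⟩ := hmem x hx
    have h := hv.1.2.2.1 i
    simpa only [(hr v hv).1] using h
  · intro x hx j
    obtain ⟨v, hv, rfl⟩ := hmem x hx
    have h := hv.1.2.2.2 j
    simpa only [(hr v hv).2] using h
end

section
/- Let M, N be positive integers and let L ∈ ℝ^{M×N} have the property that for each i the entries L_{i1},…,L_{iN} together with 1 are linearly independent over ℚ. Then there exists a constant c₀ > 0 depending only on M and N such that for all Q = (Q_1,…,Q_N) ∈ [1,∞)^N one has S_L(Q) ≥ c₀ Q^N (log Q)^M, where Q := (Q_1⋯Q_N)^{1/N}. -/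
lemma one_le_prod_aux {n : ℕ} (f : Fin n → ℝ) (h : ∀ i, 1 ≤ f i) : 1 ≤ ∏ i, f i := by
  have := Finset.prod_le_prod (s := Finset.univ) (f := fun _ : Fin n => (1 : ℝ)) (g := f)
    (fun _ _ => zero_le_one) (fun i _ => h i)
  simpa using this

open Finset in
lemma dyadic_aux (x : ℝ) (hx : 0 < x) (hx1 : x ≤ 1) (K : ℕ) :
    (∑ k ∈ range (K + 1), (if x * 2 ^ k ≤ 1 then (2 : ℝ) ^ k else 0)) ≤ 2 * x⁻¹ ∧
    (∑ k ∈ range (K + 1), (if x * 2 ^ k ≤ 1 then (2 : ℝ) ^ k else 0)) ≤ 2 ^ (K + 1) := by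
  induction K with
  | zero =>
    have : 1 ≤ x⁻¹ := (one_le_inv₀ hx).2 hx1
    simp [hx1]
    linarith
  | succ K ih =>
    rw [sum_range_succ]
    have hp : (0 : ℝ) < 2 ^ (K + 1) := by positivity
    have e : (2 : ℝ) ^ (K + 1 + 1) = 2 * 2 ^ (K + 1) := by ring
    split_ifs with h
    · have : (2 : ℝ) ^ (K + 1) ≤ x⁻¹ := by
        rw [le_inv_comm₀ hp hx, ← one_div, le_div_iff₀ hp]; exact h
      constructor <;> linarith [ih.1, ih.2]
    · constructor <;> linarith [ih.1, ih.2]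

lemma dist_nonneg_aux (x : ℝ) : 0 ≤ distNearestInt x := abs_nonneg _

open Finset in
lemma count_aux (M N : ℕ) (L : Matrix (Fin M) (Fin N) ℝ) (Q : Fin N → ℝ) (hQ : ∀ j, 1 ≤ Q j)
    (k : Fin M → ℕ) :
    (∏ j, Q j) ≤ (∏ i, (2 : ℝ) ^ (k i)) *
      (#{q ∈ Fintype.piFinset fun j => Finset.Icc ⌈-Q j⌉ ⌊Q j⌋ |
        ∀ i, distNearestInt (∑ j, L i j * (q j : ℝ)) * 2 ^ (k i) ≤ 1} : ℝ) := by
  set s : Finset (Fin N → ℤ) := Fintype.piFinset fun j => Finset.Icc 0 ⌊Q j⌋ with hs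
  set t : Finset (Fin M → ℤ) := Fintype.piFinset fun i => Finset.Ico 0 (2 ^ (k i)) with ht
  set f : (Fin N → ℤ) → (Fin M → ℤ) := fun q i =>
    ⌊2 ^ (k i) * Int.fract (∑ j, L i j * (q j : ℝ))⌋ with hf
  have hP : (0 : ℝ) < ∏ i, (2 : ℝ) ^ (k i) := by positivity
  have hmaps : ∀ q ∈ s, f q ∈ t := by
    intro q _
    rw [ht, Fintype.mem_piFinset]
    intro i
    have h2 : (0 : ℝ) < 2 ^ (k i) := by positivity
    rw [Finset.mem_Ico]
    refine ⟨Int.floor_nonneg.2 (mul_nonneg h2.le (Int.fract_nonneg _)), ?_⟩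
    rw [Int.floor_lt]
    push_cast
    have := Int.fract_lt_one (∑ j, L i j * (q j : ℝ))
    nlinarith
  have htne : t.Nonempty := by
    refine ⟨fun _ => 0, ?_⟩
    rw [ht, Fintype.mem_piFinset]
    intro i
    simp
  have htc : (#t : ℝ) = ∏ i, (2 : ℝ) ^ (k i) := by
    rw [ht, Fintype.card_piFinset]
    push_cast
    refine Finset.prod_congr rfl fun i _ => ?_
    rw [Int.card_Ico, sub_zero]
    have : ((2 : ℤ) ^ k i).toNat = 2 ^ k i := by
      have : ((2 : ℤ) ^ k i) = ((2 ^ k i : ℕ) : ℤ) := by push_cast; rfl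
      rw [this, Int.toNat_natCast]
    rw [this]; push_cast; rfl
  have hsc : (∏ j, Q j) ≤ (#s : ℝ) := by
    rw [hs, Fintype.card_piFinset]
    push_cast
    refine Finset.prod_le_prod (fun j _ => by linarith [hQ j]) fun j _ => ?_
    rw [Int.card_Icc, sub_zero]
    have h0 : (0 : ℤ) ≤ ⌊Q j⌋ + 1 := by
      have : 0 ≤ ⌊Q j⌋ := Int.floor_nonneg.2 (by linarith [hQ j])
      linarith
    have : (((⌊Q j⌋ + 1).toNat : ℤ) : ℝ) = ((⌊Q j⌋ + 1 : ℤ) : ℝ) := by rw [Int.toNat_of_nonneg h0]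
    rw [Int.cast_natCast] at this
    rw [this]; push_cast
    exact (Int.lt_floor_add_one _).le
  obtain ⟨y, -, hy⟩ := Finset.exists_le_card_fiber_of_nsmul_le_card_of_maps_to
    (b := (∏ j, Q j) / ∏ i, (2 : ℝ) ^ (k i)) hmaps htne (by
      rw [nsmul_eq_mul, htc, mul_div_cancel₀ _ hP.ne']
      exact hsc)
  rw [div_le_iff₀' hP] at hy
  refine hy.trans (mul_le_mul_of_nonneg_left ?_ hP.le)
  rw [Nat.cast_le]
  rcases Finset.eq_empty_or_nonempty {x ∈ s | f x = y} with h | ⟨p, hp⟩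
  · rw [h]; simp
  rw [Finset.mem_filter, hs, Fintype.mem_piFinset] at hp
  refine Finset.card_le_card_of_injOn (fun q => q - p) ?_ (fun a _ b _ h => by simpa using h)
  intro q hq
  simp only [Finset.coe_filter, Set.mem_ofPred_eq, hs, Fintype.mem_piFinset] at hq ⊢
  refine ⟨fun j => ?_, fun i => ?_⟩
  · have h1 := hp.1 j
    have h2 := hq.1 j
    rw [Finset.mem_Icc] at h1 h2 ⊢
    rw [Int.ceil_neg]
    simp only [Pi.sub_apply]
    omega
  · have h2 : (0 : ℝ) < 2 ^ (k i) := by positivity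
    have he : f q i = f p i := by rw [hq.2, hp.2]
    have hlt := Int.abs_sub_lt_one_of_floor_eq_floor he
    set a := ∑ j, L i j * (q j : ℝ)
    set b := ∑ j, L i j * (p j : ℝ)
    have hab : ∑ j, L i j * (((q - p) j : ℤ) : ℝ) = a - b := by
      simp only [Pi.sub_apply, Int.cast_sub, mul_sub, Finset.sum_sub_distrib, a, b]
    rw [hab]
    have hr : distNearestInt (a - b) ≤ |(a - b) - ((⌊a⌋ - ⌊b⌋ : ℤ) : ℝ)| := round_le _ _
    have e : (a - b) - ((⌊a⌋ - ⌊b⌋ : ℤ) : ℝ) = Int.fract a - Int.fract b := by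
      push_cast
      rw [← Int.self_sub_floor, ← Int.self_sub_floor]; ring
    rw [e] at hr
    rw [← mul_sub, abs_mul, abs_of_pos h2] at hlt
    nlinarith

lemma dist_pos_aux (M N : ℕ) (L : Matrix (Fin M) (Fin N) ℝ) (hL : rowUnitIndep M N L)
    (q : Fin N → ℤ) (hq : q ≠ 0) (i : Fin M) :
    0 < distNearestInt (∑ j, L i j * (q j : ℝ)) := by
  refine lt_of_le_of_ne (dist_nonneg_aux _) fun h => hq ?_
  have h0 := abs_eq_zero.1 h.symm
  set r := round (∑ j, L i j * (q j : ℝ))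
  have := Fintype.linearIndependent_iff.1 (hL i) (Fin.cons (-(r : ℚ)) fun j => (q j : ℚ)) (by
    rw [Fin.sum_univ_succ]
    simp only [Fin.cons_zero, Fin.cons_succ, Rat.smul_def]
    push_cast
    have : ∑ j, (q j : ℝ) * L i j = ∑ j, L i j * (q j : ℝ) :=
      Finset.sum_congr rfl fun j _ => mul_comm _ _
    rw [this]; linarith)
  funext j
  have := this j.succ
  simpa using this

lemma dist_le_aux (x : ℝ) : distNearestInt x ≤ 1 :=
  (abs_sub_round x).trans (by norm_num)

open Finset in
lemma main_aux (M N : ℕ) (L : Matrix (Fin M) (Fin N) ℝ) (hL : rowUnitIndep M N L)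
    (Q : Fin N → ℝ) (hQ : ∀ j, 1 ≤ Q j) (K : ℕ) (hK : (2 : ℝ) ^ (K * M) * 2 ≤ ∏ j, Q j) :
    ((K : ℝ) + 1) ^ M * ((∏ j, Q j) / 2) ≤ 2 ^ M * SLQ M N L Q := by
  set T := ∏ j, Q j with hT
  set B : Finset (Fin N → ℤ) := Fintype.piFinset fun j => Finset.Icc ⌈-Q j⌉ ⌊Q j⌋ with hB
  set I : Finset (Fin M → ℕ) := Fintype.piFinset fun _ => range (K + 1) with hI
  set d : (Fin N → ℤ) → Fin M → ℝ := fun q i => distNearestInt (∑ j, L i j * (q j : ℝ)) with hd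
  have hpt : ∀ q ∈ B.erase 0, ∑ k ∈ I, (if ∀ i, d q i * 2 ^ k i ≤ 1 then ∏ i, (2 : ℝ) ^ k i else 0)
      ≤ 2 ^ M * ∏ i, (d q i)⁻¹ := by
    intro q hq
    have hq0 := (Finset.mem_erase.1 hq).1
    have : ∑ k ∈ I, (if ∀ i, d q i * 2 ^ k i ≤ 1 then ∏ i, (2 : ℝ) ^ k i else 0)
        = ∏ i, ∑ k ∈ range (K + 1), (if d q i * 2 ^ k ≤ 1 then (2 : ℝ) ^ k else 0) := by
      rw [Finset.prod_univ_sum]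
      refine Finset.sum_congr rfl fun k _ => ?_
      rw [Finset.prod_ite_zero]
      simp
    rw [this]
    have e : (2 : ℝ) ^ M * ∏ i, (d q i)⁻¹ = ∏ i, (2 * (d q i)⁻¹) := by
      rw [Finset.prod_mul_distrib]; simp
    rw [e]
    refine Finset.prod_le_prod (fun i _ => Finset.sum_nonneg fun k _ => by split_ifs <;> positivity)
      fun i _ => ?_
    exact (dyadic_aux (d q i) (dist_pos_aux M N L hL q hq0 i) (dist_le_aux _) K).1
  have hS : SLQ M N L Q = ∑ q ∈ B.erase 0, ∏ i, (d q i)⁻¹ := rfl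
  rw [hS, Finset.mul_sum]
  refine le_trans ?_ (Finset.sum_le_sum hpt)
  rw [Finset.sum_comm]
  have hIc : (#I : ℝ) = ((K : ℝ) + 1) ^ M := by
    rw [hI, Fintype.card_piFinset]; simp
  rw [← hIc, ← nsmul_eq_mul]
  refine Finset.card_nsmul_le_sum _ _ _ fun k hk => ?_
  rw [← Finset.sum_filter, Finset.sum_const, nsmul_eq_mul]
  have hc : T ≤ (∏ i, (2 : ℝ) ^ (k i)) * (#{q ∈ B | ∀ i, d q i * 2 ^ k i ≤ 1} : ℝ) :=
    count_aux M N L Q hQ k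
  have hc2 : (#{q ∈ B | ∀ i, d q i * 2 ^ k i ≤ 1} : ℝ)
      ≤ (#{q ∈ B.erase 0 | ∀ i, d q i * 2 ^ k i ≤ 1} : ℝ) + 1 := by
    rw [Finset.filter_erase]
    have := Finset.pred_card_le_card_erase (s := {q ∈ B | ∀ i, d q i * 2 ^ k i ≤ 1}) (a := 0)
    rw [Nat.sub_le_iff_le_add] at this
    exact_mod_cast this
  have hP : (0 : ℝ) < ∏ i, (2 : ℝ) ^ (k i) := by positivity
  have hPle : ∏ i, (2 : ℝ) ^ (k i) ≤ 2 ^ (K * M) := by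
    have : ∏ i : Fin M, (2 : ℝ) ^ (k i) ≤ ∏ i : Fin M, (2 : ℝ) ^ K := by
      refine Finset.prod_le_prod (fun i _ => by positivity) fun i _ => ?_
      have := Fintype.mem_piFinset.1 hk i
      rw [Finset.mem_range] at this
      exact pow_le_pow_right₀ (by norm_num) (by omega)
    simpa [pow_mul] using this
  nlinarith

theorem stmt2 (M N : ℕ) (hM : 0 < M) (hN : 0 < N) :
    ∃ c₀ : ℝ, 0 < c₀ ∧
      ∀ L : Matrix (Fin M) (Fin N) ℝ, rowUnitIndep M N L →
      ∀ Q : Fin N → ℝ, (∀ j, 1 ≤ Q j) →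
        c₀ * (geomMean N Q ^ N * Real.log (geomMean N Q) ^ M) ≤ SLQ M N L Q := by
  have hM1 : (1 : ℝ) ≤ M := by exact_mod_cast hM
  have hN1 : (1 : ℝ) ≤ N := by exact_mod_cast hN
  have hC : (0 : ℝ) < (4 * M : ℝ) ^ M := by positivity
  refine ⟨1 / (4 * (4 * M : ℝ) ^ M), by positivity, ?_⟩
  intro L hL Q hQ
  set T := ∏ j, Q j with hT
  have hT1 : 1 ≤ T := one_le_prod_aux _ hQ
  have hT0 : 0 < T := by linarith
  have hg : geomMean N Q ^ N = T := by
    unfold geomMean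
    rw [one_div, Real.rpow_inv_natCast_pow hT0.le hN.ne']
  have hlog : Real.log (geomMean N Q) = 1 / N * Real.log T := by
    unfold geomMean
    rw [Real.log_rpow hT0]
  have hl0 : 0 ≤ Real.log T := Real.log_nonneg hT1
  have hlg0 : 0 ≤ Real.log (geomMean N Q) := by rw [hlog]; positivity
  have hlg : Real.log (geomMean N Q) ≤ Real.log T := by
    rw [hlog]
    have : 1 / (N : ℝ) ≤ 1 := by rw [div_le_one (by linarith)]; exact hN1
    nlinarith
  rw [hg, one_div, inv_mul_le_iff₀ (by positivity)]
  have hl2 := Real.log_two_lt_d9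
  have hl2' : 0 < Real.log 2 := Real.log_pos (by norm_num)
  have hl4 : Real.log 4 = 2 * Real.log 2 := by
    rw [show (4 : ℝ) = 2 ^ 2 by norm_num, Real.log_pow]; norm_num
  rcases lt_or_ge T 4 with h4 | h4
  · have hS : 1 ≤ SLQ M N L Q := by
      set q : Fin N → ℤ := fun _ => 1
      have hq : q ≠ 0 := fun h => by simpa [q] using congrFun h ⟨0, hN⟩
      have hmem : q ∈ (Fintype.piFinset fun j => Finset.Icc ⌈-Q j⌉ ⌊Q j⌋).erase 0 := by
        rw [Finset.mem_erase, Fintype.mem_piFinset]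
        refine ⟨hq, fun j => ?_⟩
        rw [Finset.mem_Icc, Int.ceil_le, Int.le_floor]
        have := hQ j
        simp only [q, Int.cast_one]
        constructor <;> linarith
      have h1 : 1 ≤ ∏ i, (distNearestInt (∑ j, L i j * (q j : ℝ)))⁻¹ :=
        one_le_prod_aux _ fun i =>
          (one_le_inv₀ (dist_pos_aux M N L hL q hq i)).2 (dist_le_aux _)
      refine h1.trans ?_
      unfold SLQ
      exact Finset.single_le_sum
        (f := fun q : Fin N → ℤ => ∏ i, (distNearestInt (∑ j, L i j * (q j : ℝ)))⁻¹)
        (fun q _ => Finset.prod_nonneg fun i _ => inv_nonneg.2 (dist_nonneg_aux _)) hmem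
    have hlt : Real.log T ≤ Real.log 4 := Real.log_le_log hT0 h4.le
    have hp : Real.log (geomMean N Q) ^ M ≤ (4 * M : ℝ) ^ M :=
      pow_le_pow_left₀ hlg0 (by linarith) M
    have hp0 : 0 ≤ Real.log (geomMean N Q) ^ M := pow_nonneg hlg0 M
    calc T * Real.log (geomMean N Q) ^ M ≤ 4 * (4 * M : ℝ) ^ M := by gcongr
      _ ≤ 4 * (4 * M : ℝ) ^ M * SLQ M N L Q := le_mul_of_one_le_right (by positivity) hS
  · set u : ℝ := Real.log (T / 2) / (M * Real.log 2) with hu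
    have hlogT2 : Real.log (T / 2) = Real.log T - Real.log 2 :=
      Real.log_div hT0.ne' (by norm_num)
    have hlt : Real.log 4 ≤ Real.log T := Real.log_le_log (by norm_num) h4
    have hML : 0 < M * Real.log 2 := by positivity
    have hu0 : 0 ≤ u := div_nonneg (by linarith) hML.le
    set K := ⌊u⌋₊ with hK
    have hKu : (K : ℝ) ≤ u := Nat.floor_le hu0
    have huK : u < K + 1 := Nat.lt_floor_add_one u
    have hKT : (2 : ℝ) ^ (K * M) * 2 ≤ T := by
      have h1 : (K : ℝ) * (M * Real.log 2) ≤ Real.log (T / 2) := by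
        rwa [hu, le_div_iff₀ hML] at hKu
      have h2 : Real.log ((2 : ℝ) ^ (K * M)) ≤ Real.log (T / 2) := by
        rw [Real.log_pow]; push_cast; linarith
      have := (Real.log_le_log_iff (by positivity) (by positivity)).1 h2
      linarith
    have hmain := main_aux M N L hL Q hQ K hKT
    rw [← hT] at hmain
    have hb : Real.log (geomMean N Q) ≤ 2 * M * (K + 1) := by
      rw [hu, div_lt_iff₀ hML] at huK
      have : (K + 1 : ℝ) * (M * Real.log 2) ≤ (K + 1) * M := by
        have : (0 : ℝ) ≤ (K + 1) * M := by positivity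
        nlinarith
      nlinarith
    have hp : Real.log (geomMean N Q) ^ M ≤ (2 * M * (K + 1) : ℝ) ^ M :=
      pow_le_pow_left₀ hlg0 hb M
    have hS : 0 ≤ SLQ M N L Q :=
      Finset.sum_nonneg fun q _ => Finset.prod_nonneg fun i _ => inv_nonneg.2 (dist_nonneg_aux _)
    calc T * Real.log (geomMean N Q) ^ M ≤ T * (2 * M * (K + 1) : ℝ) ^ M := by gcongr
      _ = 2 * (2 * M : ℝ) ^ M * (((K : ℝ) + 1) ^ M * (T / 2)) := by rw [mul_pow]; ring
      _ ≤ 2 * (2 * M : ℝ) ^ M * (2 ^ M * SLQ M N L Q) := by gcongr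
      _ = 2 * ((4 * M : ℝ) ^ M * SLQ M N L Q) := by
        rw [show (4 * M : ℝ) = (2 * M) * 2 by ring, mul_pow (2 * M : ℝ) 2]; ring
      _ ≤ 4 * (4 * M : ℝ) ^ M * SLQ M N L Q := by
        have : 0 ≤ (4 * M : ℝ) ^ M * SLQ M N L Q := by positivity
        linarith
end

section
/- Let M be a positive integer and let ε, T > 0 satisfy T^M/ε > e^M. Then there exist a finite index set 𝒦, a partition H_+ = ⋃_{k∈𝒦} X_k of H_+ into pairwise disjoint sets, a real constant c depending only on M, and reals a^k_i (k ∈ 𝒦, 1 ≤ i ≤ M) such that, defining linear maps φ_k : ℝ^M → ℝ^M by φ_k(x)_i := e^{a^k_i − c} x_i, the following hold: (i) #𝒦 ≤ c₁ (log(T/ε^{1/M}))^{M−1} for a constant c₁ depending only on M; (ii-a) e^{a^k_i − c} ≥ c₂ ε^{1/M}/T for all k and i, for a constant c₂ > 0 depending only on M; (ii-b) Σ_{i=1}^M a^k_i = 0 for all k; (iii) φ_k(X_k) ⊆ [−ε^{1/M}, ε^{1/M}]^M for all k ∈ 𝒦. -/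
lemma code_exists (m : ℕ) (L : ℝ) (hL : 1 < L) (y : Fin (m+1) → ℝ) (hs : ∑ i, y i ≤ 0)
    (hy : ∀ i, y i ≤ L) :
    ∃ n : Fin m → ℤ, (∀ i, n i ∈ Finset.Icc ⌊-((m:ℝ) * L)⌋ ⌊L⌋) ∧
      (-L - m ≤ ∑ i, (n i : ℝ)) ∧ (∀ i : Fin m, y i.castSucc - n i ≤ 1) ∧
      y (Fin.last m) + ∑ i, (n i : ℝ) ≤ 0 := by
  obtain ⟨z, hz0, hzy, hzL⟩ : ∃ z : Fin (m+1) → ℝ, ∑ i, z i = 0 ∧ (∀ i, y i ≤ z i) ∧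
      ∀ i, z i ≤ L := by
    set S := ∑ i, y i with hS
    have hD : 0 < ((m:ℝ)+1) * L - S := by
      have : 0 < ((m:ℝ)+1) * L := by positivity
      linarith
    set s := -S / (((m:ℝ)+1) * L - S) with hsdef
    have hs0 : 0 ≤ s := div_nonneg (by linarith) hD.le
    have hs1 : s ≤ 1 := by
      rw [hsdef, div_le_one hD]
      have : 0 < ((m:ℝ)+1) * L := by positivity
      linarith
    refine ⟨fun i => y i + s * (L - y i), ?_, ?_, ?_⟩
    · rw [Finset.sum_add_distrib, ← Finset.mul_sum, Finset.sum_sub_distrib, ← hS]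
      simp only [Finset.sum_const, Finset.card_univ, Fintype.card_fin, nsmul_eq_mul]
      push_cast
      rw [hsdef, div_mul_cancel₀ _ hD.ne']
      ring
    · intro i
      have := mul_nonneg hs0 (sub_nonneg.2 (hy i))
      simp only
      linarith
    · intro i
      have := mul_nonneg (sub_nonneg.2 hs1) (sub_nonneg.2 (hy i))
      simp only
      nlinarith
  have hsum := hz0
  rw [Fin.sum_univ_castSucc] at hsum
  have h1 : ∑ i : Fin m, (⌊z i.castSucc⌋ : ℝ) ≤ ∑ i : Fin m, z i.castSucc :=
    Finset.sum_le_sum fun i _ => Int.floor_le _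
  have h2 : ∑ i : Fin m, (z i.castSucc - 1) ≤ ∑ i : Fin m, (⌊z i.castSucc⌋ : ℝ) :=
    Finset.sum_le_sum fun i _ => (Int.sub_one_lt_floor _).le
  rw [Finset.sum_sub_distrib] at h2
  simp only [Finset.sum_const, Finset.card_univ, Fintype.card_fin, nsmul_eq_mul, mul_one] at h2
  have hl := hzL (Fin.last m)
  have hl' := hzy (Fin.last m)
  refine ⟨fun i => ⌊z i.castSucc⌋, ?_, ?_, ?_, ?_⟩
  · intro i
    rw [Finset.mem_Icc]
    refine ⟨Int.floor_le_floor ?_, Int.floor_le_floor (hzL _)⟩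
    have h3 := Fin.sum_univ_succAbove z i.castSucc
    have h4 : ∑ j : Fin m, z (i.castSucc.succAbove j) ≤ ∑ j : Fin m, L :=
      Finset.sum_le_sum fun j _ => hzL _
    simp only [Finset.sum_const, Finset.card_univ, Fintype.card_fin, nsmul_eq_mul] at h4
    linarith
  · linarith
  · intro i
    have := Int.sub_one_lt_floor (z i.castSucc)
    have := hzy i.castSucc
    simp only
    linarith
  · linarith

/-- The set `H₊`: points of `H` with all coordinates non-zero, where
`H = {x ∈ ℝ^M : ∏ |x_i| < ε, |x_i| ≤ T}`. -/
def setHplus (M : ℕ) (ε T : ℝ) : Set (Fin M → ℝ) :=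
  {x | (∏ i, |x i|) < ε ∧ (∀ i, |x i| ≤ T) ∧ ∀ i, x i ≠ 0}

theorem stmt3 (M : ℕ) (hM : 0 < M) :
    ∃ c c₁ c₂ : ℝ, 0 < c₁ ∧ 0 < c₂ ∧
      ∀ ε T : ℝ, 0 < ε → 0 < T → Real.exp 1 ^ M < T ^ M / ε →
        ∃ (K : ℕ) (X : Fin K → Set (Fin M → ℝ)) (a : Fin K → Fin M → ℝ),
          -- `X k` is a partition of `H₊`
          (∀ k l : Fin K, k ≠ l → Disjoint (X k) (X l)) ∧
          (⋃ k, X k) = setHplus M ε T ∧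
          -- (i) bound on the number of pieces
          (K : ℝ) ≤ c₁ * Real.log (T / ε ^ ((1 : ℝ) / (M : ℝ))) ^ (M - 1) ∧
          -- (ii-a) lower bound on the scaling factors
          (∀ k i, c₂ * ε ^ ((1 : ℝ) / (M : ℝ)) / T ≤ Real.exp (a k i - c)) ∧
          -- (ii-b) the maps `φ_k` are unimodular
          (∀ k, ∑ i, a k i = 0) ∧
          -- (iii) `φ_k(X_k) ⊆ [-ε^(1/M), ε^(1/M)]^M`
          (∀ k, ∀ x ∈ X k, ∀ i, |Real.exp (a k i - c) * x i| ≤ ε ^ ((1 : ℝ) / (M : ℝ))) := by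
  obtain ⟨m, rfl⟩ : ∃ m, M = m + 1 := ⟨M - 1, by omega⟩
  refine ⟨1, ((m:ℝ)+3)^m, Real.exp (-(m:ℝ)-1), by positivity, by positivity, ?_⟩
  intro ε T hε hT hTε
  set δ := ε ^ ((1:ℝ) / ((m+1 : ℕ):ℝ)) with hδ
  have hδ0 : 0 < δ := Real.rpow_pos_of_pos hε _
  have hδM : δ ^ (m+1) = ε := by
    rw [hδ, one_div]
    exact Real.rpow_inv_natCast_pow hε.le (by omega)
  have hlt : Real.exp 1 < T / δ := by
    rw [← hδM, ← div_pow] at hTε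
    exact lt_of_pow_lt_pow_left₀ (m+1) (by positivity) hTε
  set L := Real.log (T / δ) with hLdef
  have hL : 1 < L := by
    rw [hLdef, Real.lt_log_iff_exp_lt (by positivity)]
    exact hlt
  have hexpL : Real.exp (-L) = δ / T := by
    rw [Real.exp_neg, hLdef, Real.exp_log (by positivity), inv_div]
  have key : ∀ x : setHplus (m+1) ε T, ∃ n : Fin m → ℤ,
      (∀ i, n i ∈ Finset.Icc ⌊-((m:ℝ) * L)⌋ ⌊L⌋) ∧
      (-L - m ≤ ∑ i, (n i : ℝ)) ∧
      (∀ i : Fin m, Real.log (|x.1 i.castSucc| / δ) - n i ≤ 1) ∧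
      Real.log (|x.1 (Fin.last m)| / δ) + ∑ i, (n i : ℝ) ≤ 0 := by
    rintro ⟨x, hx1, hx2, hx3⟩
    refine code_exists m L hL (fun i => Real.log (|x i| / δ)) ?_ ?_
    · rw [← Real.log_prod (fun i _ => by have := abs_pos.2 (hx3 i); positivity)]
      apply Real.log_nonpos
      · exact Finset.prod_nonneg fun i _ => by positivity
      · rw [Finset.prod_div_distrib]
        simp only [Finset.prod_const, Finset.card_univ, Fintype.card_fin]
        rw [hδM, div_le_one hε]
        exact hx1.le
    · intro i
      have := abs_pos.2 (hx3 i)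
      exact Real.log_le_log (by positivity) (by gcongr; exact hx2 i)
  choose code hc1 hc2 hc3 hc4 using key
  set P : Finset (Fin m → ℤ) := Fintype.piFinset fun _ => Finset.Icc ⌊-((m:ℝ) * L)⌋ ⌊L⌋ with hP
  classical
  set S : Finset (Fin m → ℤ) := P.filter (fun n => ∃ x, code x = n) with hS
  have hScard : (S.card : ℝ) ≤ ((m:ℝ)+3)^m * L ^ m := by
    have h1 : S.card ≤ P.card := Finset.card_filter_le _ _
    have h2 : P.card = (⌊L⌋ + 1 - ⌊-((m:ℝ) * L)⌋).toNat ^ m := by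
      rw [hP, Fintype.card_piFinset]
      simp
    have h3 : ((⌊L⌋ + 1 - ⌊-((m:ℝ) * L)⌋).toNat : ℝ) ≤ ((m:ℝ)+3) * L := by
      have hle : ⌊-((m:ℝ) * L)⌋ ≤ ⌊L⌋ := Int.floor_le_floor (by
        have : 0 ≤ (m:ℝ) * L := by positivity
        linarith)
      have h4 : (((⌊L⌋ + 1 - ⌊-((m:ℝ) * L)⌋).toNat : ℤ) : ℝ)
          = ((⌊L⌋ + 1 - ⌊-((m:ℝ) * L)⌋ : ℤ) : ℝ) := by
        rw [Int.toNat_of_nonneg (by omega)]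
      rw [Int.cast_natCast] at h4
      rw [h4]
      push_cast
      have h5 := Int.floor_le L
      have h6 := Int.sub_one_lt_floor (-((m:ℝ) * L))
      nlinarith
    rw [← mul_pow]
    calc (S.card : ℝ) ≤ (P.card : ℝ) := by exact_mod_cast h1
      _ = ((⌊L⌋ + 1 - ⌊-((m:ℝ) * L)⌋).toNat : ℝ) ^ m := by rw [h2]; push_cast; rfl
      _ ≤ _ := by gcongr
  let e := S.equivFin.symm
  have hwit : ∀ k, ∃ x, code x = (e k).1 := fun k => (Finset.mem_filter.1 (e k).2).2
  refine ⟨S.card, fun k => {x | ∃ h : x ∈ setHplus (m+1) ε T, code ⟨x, h⟩ = (e k).1},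
    fun k => Fin.snoc (α := fun _ => ℝ) (fun i => -(((e k).1 i : ℤ) : ℝ))
      (∑ i, (((e k).1 i : ℤ) : ℝ)), ?_, ?_, ?_, ?_, ?_, ?_⟩
  · intro k l hkl
    rw [Set.disjoint_left]
    rintro x ⟨h, h1⟩ ⟨h', h2⟩
    apply hkl
    apply e.injective
    apply Subtype.ext
    rw [← h1, ← h2]
  · ext x
    simp only [Set.mem_iUnion, Set.mem_ofPred_eq]
    constructor
    · rintro ⟨k, h, -⟩
      exact h
    · intro h
      have hmem : code ⟨x, h⟩ ∈ S :=
        Finset.mem_filter.2 ⟨Fintype.mem_piFinset.2 (hc1 ⟨x, h⟩), ⟨x, h⟩, rfl⟩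
      refine ⟨e.symm ⟨_, hmem⟩, h, ?_⟩
      rw [Equiv.apply_symm_apply]
  · simpa using hScard
  · intro k i
    obtain ⟨x, hx⟩ := hwit k
    have hlow : Real.exp (-(m:ℝ)-1) * δ / T = Real.exp (-L - m - 1) := by
      rw [mul_div_assoc, ← hexpL, ← Real.exp_add]
      congr 1
      ring
    rw [hlow]
    apply Real.exp_le_exp.2
    refine Fin.lastCases ?_ (fun j => ?_) i
    · beta_reduce; rw [Fin.snoc_last, ← hx]
      have := hc2 x
      linarith
    · beta_reduce; rw [Fin.snoc_castSucc, ← hx]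
      have h1 := (Finset.mem_Icc.1 (hc1 x j)).2
      have h2 : ((code x j : ℤ) : ℝ) ≤ L := Int.le_floor.1 h1
      have : (0:ℝ) ≤ m := by positivity
      linarith
  · intro k
    rw [Fin.sum_univ_castSucc]
    simp
  · rintro k x ⟨h, hx⟩ i
    have hxi : 0 < |x i| := abs_pos.2 (h.2.2 i)
    rw [abs_mul, abs_of_pos (Real.exp_pos _)]
    have hlog : ∀ a : ℝ, a + Real.log (|x i| / δ) ≤ 1 → Real.exp (a - 1) * |x i| ≤ δ := by
      intro a ha
      have h1 : |x i| = Real.exp (Real.log (|x i| / δ)) * δ := by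
        rw [Real.exp_log (by positivity)]
        field_simp
      have h2 : Real.exp (a - 1) * |x i| = Real.exp (a - 1 + Real.log (|x i| / δ)) * δ := by
        rw [Real.exp_add, mul_assoc, ← h1]
      rw [h2]
      have h3 : Real.exp (a - 1 + Real.log (|x i| / δ)) ≤ 1 := Real.exp_le_one_iff.2 (by linarith)
      nlinarith
    apply hlog
    clear hlog hxi
    revert i
    refine Fin.lastCases ?_ (fun j => ?_)
    · beta_reduce; rw [Fin.snoc_last, ← hx]
      have := hc4 ⟨x, h⟩
      simp only at this
      linarith
    · beta_reduce; rw [Fin.snoc_castSucc, ← hx]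
      have := hc3 ⟨x, h⟩ j
      simp only at this
      linarith
end

section
/- Let n be a positive integer, let Λ be a lattice of full rank in ℝ^n with successive minima λ_1 ≤ … ≤ λ_n, let P ∈ [0,∞)^n and B_P := ∏_{i=1}^n [−P_i, P_i]. Then there exists a constant c₀ > 0 depending only on n such that #(Λ ∩ B_P) ≤ c₀ (1 + Σ_{s=1}^n 𝒱_s(B_P)/(λ_1⋯λ_s)), where 𝒱_s(B_P) := max{P_{i_1}⋯P_{i_s} : 1 ≤ i_1 < … < i_s ≤ n}. -/
/-- The Euclidean norm of a vector in `ι → ℝ`. -/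
noncomputable def enorm2 {ι : Type*} [Fintype ι] (v : ι → ℝ) : ℝ := Real.sqrt (∑ i, v i ^ 2)

/-- The `s`-th successive minimum of a set `Λ ⊆ ℝ^ι` (with respect to the Euclidean norm):
the infimum of all `r > 0` such that the closed Euclidean ball of radius `r` centred at `0`
contains `s` linearly independent vectors of `Λ`. -/
noncomputable def succMin {ι : Type*} [Fintype ι] (Λ : Set (ι → ℝ)) (s : ℕ) : ℝ :=
  sInf {r : ℝ | 0 < r ∧ ∃ w : Fin s → ι → ℝ,
    (∀ k, w k ∈ Λ) ∧ LinearIndependent ℝ w ∧ ∀ k, enorm2 (w k) ≤ r}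

theorem enorm2_nonneg {n : ℕ} (v : Fin n → ℝ) : 0 ≤ enorm2 v := Real.sqrt_nonneg _

theorem enorm2_half {n : ℕ} (v w : Fin n → ℝ) (h : w = v + v) : enorm2 v = enorm2 w / 2 := by
  subst h
  unfold enorm2
  have : ∑ i, (v + v) i ^ 2 = 2 ^ 2 * ∑ i, v i ^ 2 := by
    rw [Finset.mul_sum]; apply Finset.sum_congr rfl; intro i _; simp; ring
  rw [this, Real.sqrt_mul (by norm_num), Real.sqrt_sq (by norm_num)]
  ring

theorem abs_le_enorm2 {n : ℕ} (v : Fin n → ℝ) (i : Fin n) : |v i| ≤ enorm2 v := by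
  unfold enorm2
  apply Real.abs_le_sqrt
  exact Finset.single_le_sum (f := fun i => v i ^ 2) (fun i _ => sq_nonneg _) (Finset.mem_univ i)

theorem enorm2_lt {n : ℕ} (hn : 0 < n) (v : Fin n → ℝ) (r : ℝ) (h : ∀ i, |v i| < r) :
    enorm2 v < n * r := by
  have hr : 0 < r := lt_of_le_of_lt (abs_nonneg _) (h ⟨0, hn⟩)
  unfold enorm2
  rw [Real.sqrt_lt' (by positivity)]
  calc ∑ i, v i ^ 2 < ∑ i : Fin n, r ^ 2 := by
        apply Finset.sum_lt_sum_of_nonempty ⟨⟨0, hn⟩, Finset.mem_univ _⟩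
        intro i _
        rw [← sq_abs]
        exact pow_lt_pow_left₀ (h i) (abs_nonneg _) (by norm_num)
    _ = n * r ^ 2 := by simp
    _ ≤ (n * r) ^ 2 := by
        have : (1 : ℝ) ≤ n := by exact_mod_cast hn
        have : (0:ℝ) ≤ r^2 * n * (n - 1) := by
          apply mul_nonneg; positivity
          linarith
        nlinarith

theorem succMin_bddBelow {n : ℕ} (Λ : Set (Fin n → ℝ)) (s : ℕ) :
    BddBelow {r : ℝ | 0 < r ∧ ∃ w : Fin s → Fin n → ℝ,
    (∀ k, w k ∈ Λ) ∧ LinearIndependent ℝ w ∧ ∀ k, enorm2 (w k) ≤ r} :=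
  ⟨0, fun _ hr => hr.1.le⟩

theorem succMin_lt {n : ℕ} (Λ : Set (Fin n → ℝ)) (R : ℝ) (i : ℕ) (hi : 1 ≤ i)
    (hk : i ≤ Set.finrank ℝ {x | x ∈ Λ ∧ enorm2 x < R}) : succMin Λ i < R := by
  obtain ⟨f, hf, -, hli⟩ := Submodule.exists_fun_fin_finrank_span_eq ℝ {x | x ∈ Λ ∧ enorm2 x < R}
  change i ≤ Module.finrank ℝ _ at hk
  let w : Fin i → Fin n → ℝ := fun j => f (Fin.castLE hk j)
  have hw : LinearIndependent ℝ w := hli.comp _ (Fin.castLE_injective hk)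
  have hmem : ∀ j, w j ∈ Λ ∧ enorm2 (w j) < R := fun j => hf _
  have hne : (Finset.univ : Finset (Fin i)).Nonempty := ⟨⟨0, hi⟩, Finset.mem_univ _⟩
  have hR : 0 < R := lt_of_le_of_lt (enorm2_nonneg _) (hmem ⟨0, hi⟩).2
  obtain ⟨j, -, hj⟩ := Finset.exists_max_image Finset.univ (fun j => enorm2 (w j)) hne
  refine lt_of_le_of_lt (b := max (enorm2 (w j)) (R / 2)) (csInf_le (succMin_bddBelow Λ i) ?_) ?_
  · exact ⟨lt_max_of_lt_right (half_pos hR), w, fun k => (hmem k).1, hw,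
      fun k => le_max_of_le_left (hj k (Finset.mem_univ _))⟩
  · exact max_lt (hmem j).2 (half_lt_self hR)

theorem halving {n : ℕ} (L : Submodule ℤ (Fin n → ℝ)) [hd : DiscreteTopology L] (R B : ℝ)
    (hB : ∀ A : Finset (Fin n → ℝ), (∀ a ∈ A, a ∈ L) →
      (∀ a ∈ A, ∀ a' ∈ A, enorm2 (a - a') < R / 2) → (A.card : ℝ) ≤ B)
    (A : Finset (Fin n → ℝ)) (hA : ∀ a ∈ A, a ∈ L)
    (hAR : ∀ a ∈ A, ∀ a' ∈ A, enorm2 (a - a') < R) :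
    (A.card : ℝ) ≤ 2 ^ (Set.finrank ℝ {x | x ∈ (L : Set (Fin n → ℝ)) ∧ enorm2 x < R}) * B := by
  classical
  have hB0 : 0 ≤ B := by simpa using hB ∅ (by simp) (by simp)
  rcases A.eq_empty_or_nonempty with rfl | ⟨a0, ha0⟩
  · simp; positivity
  set X := {x | x ∈ (L : Set (Fin n → ℝ)) ∧ enorm2 x < R} with hX
  let Γ := Submodule.span ℤ X
  have hΓL : Γ ≤ L := Submodule.span_le.2 (fun x hx => hx.1)
  have hdΓ : DiscreteTopology Γ := DiscreteTopology.of_subset (s := (L : Set (Fin n → ℝ)))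
    (t := (Γ : Set (Fin n → ℝ))) hd hΓL
  have hfr : Set.finrank ℝ X = Module.finrank ℤ Γ := Real.finrank_eq_int_finrank_of_discrete hdΓ
  rw [hfr]
  have : Module.Finite ℤ Γ := inferInstance
  have : Module.Free ℤ Γ := inferInstance
  let bas := Module.finBasis ℤ Γ
  set k := Module.finrank ℤ Γ with hk
  have hsub : ∀ a ∈ A, a - a0 ∈ Γ := fun a ha =>
    Submodule.subset_span ⟨L.sub_mem (hA a ha) (hA a0 ha0), hAR a ha a0 ha0⟩
  let g : (Fin n → ℝ) → Fin k → ZMod 2 := fun x =>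
    if h : x - a0 ∈ Γ then fun j => ((bas.repr ⟨x - a0, h⟩ j : ℤ) : ZMod 2) else 0
  have key : A.card ≤ ⌊B⌋₊ * (Finset.univ : Finset (Fin k → ZMod 2)).card := by
    apply Finset.card_le_mul_card_image_of_maps_to (f := g) (fun _ _ => Finset.mem_univ _)
    intro t _
    apply Nat.le_floor
    rcases (A.filter (fun a => g a = t)).eq_empty_or_nonempty with h0 | ⟨a1, ha1⟩
    · rw [h0]; simpa using hB0
    have hdiv : ∀ a ∈ A.filter (fun a => g a = t), ∃ γ ∈ L, a - a1 = γ + γ := by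
      intro a ha
      rw [Finset.mem_filter] at ha ha1
      have e : g a = g a1 := ha.2.trans ha1.2.symm
      simp only [g, dif_pos (hsub a ha.1), dif_pos (hsub a1 ha1.1)] at e
      have h2 : ∀ j, ∃ m : ℤ, bas.repr (⟨a - a0, hsub a ha.1⟩ - ⟨a1 - a0, hsub a1 ha1.1⟩) j
          = m + m := by
        intro j
        have := congrFun e j
        rw [ZMod.intCast_eq_intCast_iff_dvd_sub] at this
        obtain ⟨m, hm⟩ := this
        refine ⟨-m, ?_⟩
        rw [map_sub, Finsupp.sub_apply]
        push_cast at hm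
        linarith
      choose m hm using h2
      refine ⟨((∑ j, m j • bas j : Γ) : Fin n → ℝ), hΓL (Subtype.property _), ?_⟩
      have : (⟨a - a0, hsub a ha.1⟩ - ⟨a1 - a0, hsub a1 ha1.1⟩ : Γ) =
          (∑ j, m j • bas j) + ∑ j, m j • bas j := by
        rw [← bas.sum_repr (⟨a - a0, hsub a ha.1⟩ - ⟨a1 - a0, hsub a1 ha1.1⟩ : Γ),
          ← Finset.sum_add_distrib]
        apply Finset.sum_congr rfl
        intro j _
        rw [hm, add_smul]
      have h3 := congrArg (Subtype.val) this
      rw [← Submodule.coe_add, ← h3]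
      simp
    have hcard : ((A.filter (fun a => g a = t)).image (fun a => (1 / 2 : ℝ) • (a - a1))).card
        = (A.filter (fun a => g a = t)).card := by
      apply Finset.card_image_of_injective
      intro x y hxy
      have := smul_right_injective (Fin n → ℝ) (by norm_num : (1 / 2 : ℝ) ≠ 0) hxy
      simpa using this
    rw [← hcard]
    apply hB
    · intro x hx
      obtain ⟨a, ha, rfl⟩ := Finset.mem_image.1 hx
      obtain ⟨γ, hγ, e⟩ := hdiv a ha
      convert hγ using 1
      rw [e, ← two_smul ℝ γ, smul_smul]; norm_num
    · intro x hx y hy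
      obtain ⟨a, ha, rfl⟩ := Finset.mem_image.1 hx
      obtain ⟨a', ha', rfl⟩ := Finset.mem_image.1 hy
      rw [enorm2_half _ (a - a')]
      · have := hAR a (Finset.mem_filter.1 ha).1 a' (Finset.mem_filter.1 ha').1
        linarith
      · ext i; simp; ring
  have h1 : (A.card : ℝ) ≤ ⌊B⌋₊ * 2 ^ k := by
    have := key
    rw [Finset.card_univ] at this
    simp only [Fintype.card_pi, ZMod.card, Finset.prod_const, Finset.card_univ, Fintype.card_fin]
      at this
    exact_mod_cast this
  refine h1.trans ?_
  rw [mul_comm]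
  gcongr
  exact Nat.floor_le hB0

theorem ball_bound {n : ℕ} (L : Submodule ℤ (Fin n → ℝ)) [hd : DiscreteTopology L]
    (hpos : ∀ i ∈ Finset.Icc 1 n, 0 < succMin (L : Set (Fin n → ℝ)) i) (hn : 0 < n) (j : ℕ) :
    ∀ R : ℝ, R ≤ 2 ^ j * succMin (L : Set (Fin n → ℝ)) 1 →
    ∀ A : Finset (Fin n → ℝ), (∀ a ∈ A, a ∈ L) →
      (∀ a ∈ A, ∀ a' ∈ A, enorm2 (a - a') < R) →
      (A.card : ℝ) ≤ ∏ i ∈ Finset.Icc 1 n, max 1 (2 * R / succMin (L : Set (Fin n → ℝ)) i) := by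
  induction j with
  | zero =>
    intro R hR A hA hAR
    have h1 : (1 : ℝ) ≤ ∏ i ∈ Finset.Icc 1 n, max 1 (2 * R / succMin (L : Set (Fin n → ℝ)) i) := by
      calc (1 : ℝ) = ∏ i ∈ Finset.Icc 1 n, (1 : ℝ) := by simp
        _ ≤ _ := Finset.prod_le_prod (by simp) (fun i _ => le_max_left _ _)
    refine le_trans ?_ h1
    have : A.card ≤ 1 := by
      rw [Finset.card_le_one]
      intro a ha a' ha'
      by_contra hne
      have hx : a - a' ∈ {x | x ∈ (L : Set (Fin n → ℝ)) ∧ enorm2 x < R} :=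
        ⟨L.sub_mem (hA a ha) (hA a' ha'), hAR a ha a' ha'⟩
      have hfr : 1 ≤ Set.finrank ℝ {x | x ∈ (L : Set (Fin n → ℝ)) ∧ enorm2 x < R} := by
        rw [Nat.one_le_iff_ne_zero]
        intro h0
        have := Submodule.finrank_eq_zero.1 h0
        have h2 := Submodule.subset_span (R := ℝ) hx
        rw [this] at h2
        exact hne (sub_eq_zero.1 h2)
      have := succMin_lt _ R 1 le_rfl hfr
      simp at hR
      linarith
    exact_mod_cast this
  | succ j ih =>
    intro R hR A hA hAR
    have hhalf := halving L R _ (ih (R / 2) (by rw [pow_succ] at hR; linarith)) A hA hAR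
    refine hhalf.trans ?_
    set k := Set.finrank ℝ {x | x ∈ (L : Set (Fin n → ℝ)) ∧ enorm2 x < R} with hk
    have hkn : k ≤ n := by
      have := Submodule.finrank_le (Submodule.span ℝ {x | x ∈ (L : Set (Fin n → ℝ)) ∧ enorm2 x < R})
      rw [Module.finrank_fin_fun] at this
      exact this
    have h2 : (2 : ℝ) ^ k = ∏ i ∈ Finset.Icc 1 n, if i ≤ k then (2 : ℝ) else 1 := by
      rw [Finset.prod_ite]
      have : (Finset.Icc 1 n).filter (fun i => i ≤ k) = Finset.Icc 1 k := by
        ext i; simp; omega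
      rw [this]; simp
    rw [h2, ← Finset.prod_mul_distrib]
    apply Finset.prod_le_prod
    · intro i _; positivity
    intro i hi
    have hp := hpos i hi
    rw [Finset.mem_Icc] at hi
    split_ifs with hik
    · have hlt := succMin_lt _ R i hi.1 hik
      have h1 : 1 ≤ R / succMin (L : Set (Fin n → ℝ)) i := by
        rw [le_div_iff₀ hp]; linarith
      have e : 2 * (R / 2) / succMin (L : Set (Fin n → ℝ)) i = R / succMin (L : Set (Fin n → ℝ)) i := by
        ring
      rw [e, max_eq_right h1, mul_div_assoc]
      exact le_max_right _ _
    · rw [one_mul]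
      apply max_le (le_max_left _ _)
      by_cases hR0 : 0 ≤ R
      · apply le_max_of_le_right
        gcongr
        linarith
      · apply le_max_of_le_left
        rw [div_le_iff₀ hp]
        linarith

theorem choose_rho {n : ℕ} (hn : 0 < n) (P : Fin n → ℝ) (l : ℕ → ℝ)
    (hpos : ∀ i ∈ Finset.Icc 1 n, 0 < l i)
    (hmono : ∀ i j, 1 ≤ i → i ≤ j → j ≤ n → l i ≤ l j) :
    ∃ (ρ : ℝ) (S : Finset (Fin n)), 0 < ρ ∧ (∀ i ∈ S, ρ ≤ P i) ∧ (∀ i ∉ S, P i ≤ ρ) ∧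
      (∀ i ∈ Finset.Icc 1 n, i ≤ S.card → l i ≤ ρ) ∧
      (∀ i ∈ Finset.Icc 1 n, ¬ i ≤ S.card → ρ ≤ l i) := by
  classical
  obtain ⟨σ, hσ⟩ : ∃ σ : Equiv.Perm (Fin n), ∀ i j, i ≤ j → P (σ j) ≤ P (σ i) := by
    refine ⟨Tuple.sort (fun i => - P i), fun i j hij => ?_⟩
    have := Tuple.monotone_sort (fun i => - P i) hij
    simpa using this
  let p : ℕ → Prop := fun s => ∀ h : s - 1 < n, 1 ≤ s → l s ≤ P (σ ⟨s - 1, h⟩)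
  set s := Nat.findGreatest p n with hs
  have hp0 : p 0 := fun _ h => by omega
  have hps : p s := Nat.findGreatest_spec (Nat.zero_le n) hp0
  have hsn : s ≤ n := Nat.findGreatest_le n
  have hnext : ∀ h : s < n, P (σ ⟨s, h⟩) < l (s + 1) := by
    intro h
    have := Nat.findGreatest_is_greatest (P := p) (k := s + 1) (n := n) (by omega) (by omega)
    by_contra hc
    exact this (fun _ _ => not_lt.1 hc)
  let S : Finset (Fin n) := (Finset.univ.filter (fun i : Fin n => i.val < s)).map σ.toEmbedding
  have hcard : S.card = s := by
    rw [Finset.card_map, Fin.card_filter_val_lt]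
    exact min_eq_right hsn
  have hS : ∀ i, i ∈ S ↔ (σ.symm i).val < s := by
    intro i
    constructor
    · intro h
      obtain ⟨j, hj, rfl⟩ := Finset.mem_map.1 h
      simpa using hj
    · intro h
      exact Finset.mem_map.2 ⟨σ.symm i, by simpa using h, by simp⟩
  have hPi : ∀ i, P i = P (σ (σ.symm i)) := fun i => by simp
  suffices H : ∃ ρ : ℝ, 0 < ρ ∧ (∀ h : s - 1 < n, 1 ≤ s → ρ ≤ P (σ ⟨s - 1, h⟩)) ∧
      (∀ h : s < n, P (σ ⟨s, h⟩) ≤ ρ) ∧ (1 ≤ s → l s ≤ ρ) ∧ (s < n → ρ ≤ l (s + 1)) by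
    obtain ⟨ρ, h0, h1, h2, h3, h4⟩ := H
    refine ⟨ρ, S, h0, ?_, ?_, ?_, ?_⟩
    · intro i hi
      have hi := (hS i).1 hi
      refine (h1 (by omega) (by omega)).trans ?_
      rw [hPi i]
      apply hσ
      rw [Fin.le_def]; simp; omega
    · intro i hi
      have hi : ¬ _ := fun h => hi ((hS i).2 h)
      have := (σ.symm i).isLt
      refine le_trans ?_ (h2 (by omega))
      rw [hPi i]
      apply hσ
      rw [Fin.le_def]; simp; omega
    · intro i hi his
      rw [Finset.mem_Icc] at hi
      rw [hcard] at his
      exact (hmono i s hi.1 his hsn).trans (h3 (by omega))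
    · intro i hi his
      rw [Finset.mem_Icc] at hi
      rw [hcard] at his
      exact (h4 (by omega)).trans (hmono (s + 1) i (by omega) (by omega) hi.2)
  rcases Nat.eq_zero_or_pos s with h0 | h1
  · refine ⟨l 1, hpos 1 (by simp; omega), fun _ h => by omega, fun h => ?_, fun h => by omega,
      fun h => by rw [h0]⟩
    have := hnext h
    have e : s + 1 = 1 := by omega
    rw [e] at this
    exact this.le
  · rcases lt_or_ge s n with hlt | hge
    · refine ⟨max (l s) (P (σ ⟨s, hlt⟩)), lt_max_of_lt_left (hpos s (by simp; omega)), ?_, ?_, ?_, ?_⟩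
      · intro h h'
        apply max_le (hps h h')
        apply hσ
        rw [Fin.le_def]; simp
      · intro _; exact le_max_right _ _
      · intro _; exact le_max_left _ _
      · intro _; exact max_le (hmono _ _ h1 (by omega) (by omega)) (hnext hlt).le
    · exact ⟨l s, hpos s (by simp; omega), hps, fun h => by omega, fun _ => le_rfl,
        fun h => by omega⟩

theorem stmt4 (n : ℕ) (hn : 0 < n) :
    ∃ c₀ : ℝ, 0 < c₀ ∧
      -- a full-rank lattice in `ℝ^n` is the `ℤ`-span of an `ℝ`-basis `b`
      ∀ b : Fin n → (Fin n → ℝ), LinearIndependent ℝ b →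
      ∀ P : Fin n → ℝ, (∀ i, 0 ≤ P i) →
        (Set.ncard ((↑(Submodule.span ℤ (Set.range b)) : Set (Fin n → ℝ)) ∩
            {v | ∀ i, |v i| ≤ P i}) : ℝ) ≤
          c₀ * (1 + ∑ s ∈ Finset.Icc 1 n,
            sSup ((fun S : Finset (Fin n) => ∏ i ∈ S, P i) '' {S | S.card = s}) /
              ∏ r ∈ Finset.Icc 1 s,
                succMin (↑(Submodule.span ℤ (Set.range b)) : Set (Fin n → ℝ)) r) := by
  classical
  have hn' : (1 : ℝ) ≤ n := by exact_mod_cast hn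
  refine ⟨(8 * n) ^ n, by positivity, ?_⟩
  intro b hb P hP
  have hd : DiscreteTopology (Submodule.span ℤ (Set.range b)) := by
    have : Nonempty (Fin n) := ⟨⟨0, hn⟩⟩
    have h := (inferInstance : DiscreteTopology (Submodule.span ℤ (Set.range
      (basisOfLinearIndependentOfCardEqFinrank hb (by simp)))))
    rwa [coe_basisOfLinearIndependentOfCardEqFinrank] at h
  have hbL : ∀ i, b i ∈ Submodule.span ℤ (Set.range b) := fun i => Submodule.subset_span ⟨i, rfl⟩
  set L := Submodule.span ℤ (Set.range b) with hL
  have hne : ∀ s ≤ n, {r : ℝ | 0 < r ∧ ∃ w : Fin s → Fin n → ℝ, (∀ k, w k ∈ (L : Set (Fin n → ℝ))) ∧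
      LinearIndependent ℝ w ∧ ∀ k, enorm2 (w k) ≤ r}.Nonempty := by
    intro s hs
    have h0 : 0 ≤ ∑ i, enorm2 (b i) := Finset.sum_nonneg (fun i _ => enorm2_nonneg _)
    refine ⟨1 + ∑ i, enorm2 (b i), by linarith, fun j => b (Fin.castLE hs j), fun k => hbL _,
      hb.comp _ (Fin.castLE_injective hs), fun k => ?_⟩
    have := Finset.single_le_sum (f := fun i => enorm2 (b i)) (fun i _ => enorm2_nonneg _)
      (Finset.mem_univ (Fin.castLE hs k))
    linarith
  have hmono : ∀ i j, 1 ≤ i → i ≤ j → j ≤ n →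
      succMin (L : Set (Fin n → ℝ)) i ≤ succMin (L : Set (Fin n → ℝ)) j := by
    intro i j _ hij hj
    apply csInf_le_csInf (succMin_bddBelow _ _) (hne j hj)
    rintro r ⟨hr, w, hw, hli, hle⟩
    exact ⟨hr, fun k => w (Fin.castLE hij k), fun k => hw _,
      hli.comp _ (Fin.castLE_injective hij), fun k => hle _⟩
  obtain ⟨ε, hε, hεL⟩ : ∃ ε > 0, ∀ x ∈ L, enorm2 x < ε → x = 0 := by
    obtain ⟨ε, hε, h⟩ := Metric.isOpen_singleton_iff.1 (isOpen_discrete ({0} : Set L))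
    refine ⟨ε, hε, fun x hx hlt => ?_⟩
    have := h ⟨x, hx⟩ (by
      rw [dist_zero_right]
      change ‖x‖ < ε
      rw [pi_norm_lt_iff hε]
      intro i
      exact lt_of_le_of_lt (abs_le_enorm2 x i) hlt)
    exact congrArg Subtype.val this
  have hpos : ∀ i ∈ Finset.Icc 1 n, 0 < succMin (L : Set (Fin n → ℝ)) i := by
    intro i hi
    rw [Finset.mem_Icc] at hi
    refine lt_of_lt_of_le hε (le_csInf (hne i hi.2) ?_)
    rintro r ⟨hr, w, hw, hli, hle⟩
    by_contra hlt
    exact hli.ne_zero ⟨0, hi.1⟩ (hεL _ (hw _) (lt_of_le_of_lt (hle _) (not_le.1 hlt)))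
  obtain ⟨ρ, S, hρ, hS1, hS2, hl1, hl2⟩ := choose_rho hn P (succMin (L : Set (Fin n → ℝ))) hpos hmono
  have hsn : S.card ≤ n := by simpa using Finset.card_le_univ S
  -- nonnegativity of the terms
  have hbdd : ∀ s, BddAbove ((fun S : Finset (Fin n) => ∏ i ∈ S, P i) '' {S | S.card = s}) :=
    fun s => (Set.toFinite _).bddAbove
  have hterm : ∀ s ∈ Finset.Icc 1 n,
      0 ≤ sSup ((fun S : Finset (Fin n) => ∏ i ∈ S, P i) '' {S | S.card = s}) /
        ∏ r ∈ Finset.Icc 1 s, succMin (L : Set (Fin n → ℝ)) r := by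
    intro s hs
    rw [Finset.mem_Icc] at hs
    apply div_nonneg
    · apply Real.sSup_nonneg
      rintro x ⟨T, -, rfl⟩
      exact Finset.prod_nonneg (fun i _ => hP i)
    · apply Finset.prod_nonneg
      intro r hr
      rw [Finset.mem_Icc] at hr
      exact (hpos r (by simp; omega)).le
  have hmain : (∏ i ∈ S, P i) / ∏ r ∈ Finset.Icc 1 S.card, succMin (L : Set (Fin n → ℝ)) r ≤
      1 + ∑ s ∈ Finset.Icc 1 n,
            sSup ((fun S : Finset (Fin n) => ∏ i ∈ S, P i) '' {S | S.card = s}) /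
              ∏ r ∈ Finset.Icc 1 s, succMin (L : Set (Fin n → ℝ)) r := by
    rcases Nat.eq_zero_or_pos S.card with h0 | h1
    · have : S = ∅ := Finset.card_eq_zero.1 h0
      have h3 := Finset.sum_nonneg hterm
      rw [h0, this]
      simpa using h3
    · have h3 := Finset.single_le_sum hterm (Finset.mem_Icc.2 ⟨h1, hsn⟩)
      have h4 : (∏ i ∈ S, P i) / ∏ r ∈ Finset.Icc 1 S.card, succMin (L : Set (Fin n → ℝ)) r ≤
          sSup ((fun T : Finset (Fin n) => ∏ i ∈ T, P i) '' {T | T.card = S.card}) /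
              ∏ r ∈ Finset.Icc 1 S.card, succMin (L : Set (Fin n → ℝ)) r := by
        apply div_le_div_of_nonneg_right
        · exact le_csSup (hbdd _) ⟨S, rfl, rfl⟩
        · apply Finset.prod_nonneg
          intro r hr
          rw [Finset.mem_Icc] at hr
          exact (hpos r (by simp; omega)).le
      linarith
  refine le_trans ?_ (mul_le_mul_of_nonneg_left hmain (by positivity))
  -- the counting
  by_cases hfin : ((L : Set (Fin n → ℝ)) ∩ {v | ∀ i, |v i| ≤ P i}).Finite
  swap
  · rw [Set.Infinite.ncard hfin]
    have h5 : 0 ≤ ∏ r ∈ Finset.Icc 1 S.card, succMin (L : Set (Fin n → ℝ)) r := by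
      apply Finset.prod_nonneg
      intro r hr
      rw [Finset.mem_Icc] at hr
      exact (hpos r (by simp; omega)).le
    have h6 : 0 ≤ ∏ i ∈ S, P i := Finset.prod_nonneg (fun i _ => hP i)
    simp only [Nat.cast_zero]
    positivity
  rw [Set.ncard_eq_toFinset_card _ hfin]
  set A := hfin.toFinset with hAdef
  have hAmem : ∀ a ∈ A, a ∈ L ∧ ∀ i, |a i| ≤ P i := fun a ha => by
    simpa [hAdef] using ha
  set B : ℝ := ∏ i ∈ Finset.Icc 1 n, max 1 (2 * (n * ρ) / succMin (L : Set (Fin n → ℝ)) i) with hBdef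
  have hB0 : 0 ≤ B := Finset.prod_nonneg (fun i _ => by positivity)
  let T : Finset (Fin n → ℤ) := Fintype.piFinset (fun i => Finset.Icc ⌊-P i / ρ⌋ ⌊P i / ρ⌋)
  have key : A.card ≤ ⌊B⌋₊ * T.card := by
    apply Finset.card_le_mul_card_image_of_maps_to (f := fun a i => ⌊a i / ρ⌋)
    · intro a ha
      simp only [T, Fintype.mem_piFinset, Finset.mem_Icc]
      intro i
      have := abs_le.1 ((hAmem a ha).2 i)
      constructor <;> apply Int.floor_le_floor <;> gcongr
      · exact this.1
      · exact this.2
    · intro t _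
      apply Nat.le_floor
      have h1 := hpos 1 (by simp; omega)
      obtain ⟨j, hj⟩ := pow_unbounded_of_one_lt
        (n * ρ / succMin (L : Set (Fin n → ℝ)) 1) (one_lt_two)
      apply ball_bound L hpos hn j (n * ρ)
      · rw [div_lt_iff₀ h1] at hj; exact hj.le
      · intro a ha; exact (hAmem a (Finset.mem_filter.1 ha).1).1
      · intro a ha a' ha'
        apply enorm2_lt hn
        intro i
        have e1 := congrFun (Finset.mem_filter.1 ha).2 i
        have e2 := congrFun (Finset.mem_filter.1 ha').2 i
        have := Int.abs_sub_lt_one_of_floor_eq_floor (e1.trans e2.symm)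
        rw [← sub_div, abs_div, abs_of_pos hρ, div_lt_one hρ] at this
        simpa using this
  have hT : (T.card : ℝ) ≤ ∏ i : Fin n, (if i ∈ S then 4 * (P i / ρ) else 4) := by
    simp only [T, Fintype.card_piFinset]
    push_cast
    apply Finset.prod_le_prod
    · intro i _; positivity
    intro i _
    have hle : (⌊-P i / ρ⌋ : ℤ) ≤ ⌊P i / ρ⌋ + 1 := by
      have : (⌊-P i / ρ⌋ : ℤ) ≤ ⌊P i / ρ⌋ := by
        apply Int.floor_le_floor; gcongr; linarith [hP i]
      linarith
    have hc : ((Finset.Icc ⌊-P i / ρ⌋ ⌊P i / ρ⌋).card : ℝ) ≤ 2 * (P i / ρ) + 2 := by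
      have h := Int.card_Icc_of_le _ _ hle
      have h' : ((Finset.Icc ⌊-P i / ρ⌋ ⌊P i / ρ⌋).card : ℝ) =
          (⌊P i / ρ⌋ : ℝ) + 1 - (⌊-P i / ρ⌋ : ℝ) := by exact_mod_cast h
      have f1 := Int.floor_le (P i / ρ)
      have f2 := Int.lt_floor_add_one (-P i / ρ)
      rw [h']
      rw [neg_div] at f2 ⊢
      linarith
    split_ifs with hi
    · have : 1 ≤ P i / ρ := by rw [le_div_iff₀ hρ]; linarith [hS1 i hi]
      linarith
    · have : P i / ρ ≤ 1 := by rw [div_le_iff₀ hρ]; linarith [hS2 i hi]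
      linarith
  have hT2 : (∏ i : Fin n, (if i ∈ S then 4 * (P i / ρ) else 4)) =
      4 ^ n * ((∏ i ∈ S, P i) / ρ ^ S.card) := by
    have : ∀ i : Fin n, (if i ∈ S then 4 * (P i / ρ) else 4) = 4 * (if i ∈ S then P i / ρ else 1) := by
      intro i; split_ifs <;> simp
    simp only [this]
    rw [Finset.prod_mul_distrib, Finset.prod_ite_mem, Finset.univ_inter, Finset.prod_div_distrib]
    simp
  have hB2 : B ≤ (2 * n) ^ n * (ρ ^ S.card /
      ∏ r ∈ Finset.Icc 1 S.card, succMin (L : Set (Fin n → ℝ)) r) := by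
    have e1 : ∀ i ∈ Finset.Icc 1 n, max 1 (2 * (n * ρ) / succMin (L : Set (Fin n → ℝ)) i) ≤
        2 * n * (if i ≤ S.card then ρ / succMin (L : Set (Fin n → ℝ)) i else 1) := by
      intro i hi
      have hp := hpos i hi
      have e2 : 2 * (n * ρ) / succMin (L : Set (Fin n → ℝ)) i =
        2 * n * (ρ / succMin (L : Set (Fin n → ℝ)) i) := by ring
      rw [e2]
      split_ifs with h
      · have : 1 ≤ ρ / succMin (L : Set (Fin n → ℝ)) i := by
          rw [le_div_iff₀ hp]; linarith [hl1 i hi h]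
        apply max_le _ le_rfl
        nlinarith
      · have : ρ / succMin (L : Set (Fin n → ℝ)) i ≤ 1 := by
          rw [div_le_iff₀ hp]; linarith [hl2 i hi h]
        apply max_le
        · linarith
        · gcongr
    refine (Finset.prod_le_prod (fun i _ => by positivity) e1).trans_eq ?_
    rw [Finset.prod_mul_distrib, Finset.prod_ite]
    have : (Finset.Icc 1 n).filter (fun i => i ≤ S.card) = Finset.Icc 1 S.card := by
      ext i; simp; omega
    rw [this, Finset.prod_div_distrib]
    simp
  have hQ : 0 ≤ (∏ i ∈ S, P i) / ρ ^ S.card :=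
    div_nonneg (Finset.prod_nonneg (fun i _ => hP i)) (by positivity)
  calc (A.card : ℝ) ≤ ⌊B⌋₊ * T.card := by exact_mod_cast key
    _ ≤ B * (4 ^ n * ((∏ i ∈ S, P i) / ρ ^ S.card)) := by
        rw [← hT2]
        exact mul_le_mul (Nat.floor_le hB0) hT (by positivity) hB0
    _ ≤ ((2 * n) ^ n * (ρ ^ S.card /
      ∏ r ∈ Finset.Icc 1 S.card, succMin (L : Set (Fin n → ℝ)) r)) *
        (4 ^ n * ((∏ i ∈ S, P i) / ρ ^ S.card)) := by gcongr
    _ = _ := by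
        have hρs : ρ ^ S.card ≠ 0 := by positivity
        have e : ((8 : ℝ) * n) ^ n = (2 * n) ^ n * 4 ^ n := by rw [← mul_pow]; congr 1; ring
        rw [e]
        field_simp
end

section
/- Let M, N be positive integers and let L ∈ ℝ^{M×N} have the property that for each i the entries L_{i1},…,L_{iN} together with 1 are linearly independent over ℚ. Let ε, T > 0 and Q ∈ [1,∞)^N, and for i = 1,…,M set Z^i := (H ∩ {x ∈ ℝ^M : x_i = 0}) × ∏_{j=1}^N [−Q_j, Q_j]. Then there exists a constant c₀ > 0 depending only on M such that #(Λ_L ∩ Z^i) ≤ c₀ (1+T)^M for every i = 1,…,M. -/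
/-- The set `Z^i = (H ∩ {x_i = 0}) × ∏ [-Q_j, Q_j]`. -/
def setZi (M N : ℕ) (ε T : ℝ) (Q : Fin N → ℝ) (i : Fin M) : Set (Fin M ⊕ Fin N → ℝ) :=
  {v | (∏ i', |v (Sum.inl i')|) < ε ∧ (∀ i', |v (Sum.inl i')| ≤ T) ∧
    v (Sum.inl i) = 0 ∧ ∀ j, |v (Sum.inr j)| ≤ Q j}

theorem stmt5 (M : ℕ) (hM : 0 < M) :
    ∃ c₀ : ℝ, 0 < c₀ ∧
      ∀ N : ℕ, 0 < N →
      ∀ L : Matrix (Fin M) (Fin N) ℝ, rowUnitIndep M N L →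
      ∀ ε T : ℝ, 0 < ε → 0 < T →
      ∀ Q : Fin N → ℝ, (∀ j, 1 ≤ Q j) →
      ∀ i : Fin M,
        (Set.ncard (latticeL M N L ∩ setZi M N ε T Q i) : ℝ) ≤ c₀ * (1 + T) ^ M := by
  refine ⟨2 ^ M, by positivity, ?_⟩
  intro N _ L hL ε T _ hT Q _ i
  classical
  let S : Finset (Fin M → ℤ) := Fintype.piFinset (fun _ => Finset.Icc (-⌊T⌋) ⌊T⌋)
  let f : (Fin M → ℤ) → (Fin M ⊕ Fin N → ℝ) := fun p => Sum.elim (fun k => (p k : ℝ)) (fun _ => 0)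
  have hsub : latticeL M N L ∩ setZi M N ε T Q i ⊆ ((S.image f : Finset _) : Set _) := by
    rintro v ⟨⟨p, q, hp, hq⟩, -, hb, h0, -⟩
    have hli := Fintype.linearIndependent_iff.mp (hL i)
      (Fin.cons (p i : ℚ) (fun j => (q j : ℚ))) (by
        rw [Fin.sum_univ_succ]
        simp only [Fin.cons_zero, Fin.cons_succ, Rat.smul_def]
        rw [hp i] at h0
        push_cast
        rw [← h0, add_comm, mul_one]
        congr 1
        exact Finset.sum_congr rfl (fun j _ => mul_comm _ _))
    have hq0 : ∀ j, q j = 0 := by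
      intro j
      have := hli j.succ
      simpa using this
    have hv : ∀ k, v (Sum.inl k) = p k := by
      intro k
      rw [hp k]
      simp [hq0]
    rw [Finset.coe_image]
    refine ⟨p, ?_, ?_⟩
    · simp only [S, Finset.mem_coe, Fintype.mem_piFinset, Finset.mem_Icc]
      intro k
      have h := hb k
      rw [hv k, abs_le] at h
      refine ⟨?_, Int.le_floor.mpr h.2⟩
      have : -p k ≤ ⌊T⌋ := Int.le_floor.mpr (by push_cast; linarith [h.1])
      linarith
    · funext x
      rcases x with k | j
      · simp [f, hv]
      · simp [f, hq, hq0]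
  have h1 : (latticeL M N L ∩ setZi M N ε T Q i).ncard ≤ S.card := by
    refine (Set.ncard_le_ncard hsub (Finset.finite_toSet _)).trans ?_
    rw [Set.ncard_coe_finset]
    exact Finset.card_image_le
  have h2 : (S.card : ℝ) ≤ (2 * (1 + T)) ^ M := by
    have hf : (0 : ℤ) ≤ ⌊T⌋ := Int.floor_nonneg.mpr hT.le
    have hc : (((⌊T⌋ + 1 - -⌊T⌋).toNat : ℕ) : ℝ) ≤ 2 * (1 + T) := by
      have h3 : (((⌊T⌋ + 1 - -⌊T⌋).toNat : ℤ)) = ⌊T⌋ + 1 - -⌊T⌋ := Int.toNat_of_nonneg (by linarith)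
      have h4 : (((⌊T⌋ + 1 - -⌊T⌋).toNat : ℕ) : ℝ) = (⌊T⌋ : ℝ) + 1 - -(⌊T⌋ : ℝ) := by
        exact_mod_cast h3
      rw [h4]
      linarith [Int.floor_le T]
    simp only [S, Fintype.card_piFinset, Int.card_Icc, Finset.prod_const, Finset.card_univ,
      Fintype.card_fin]
    rw [Nat.cast_pow]
    exact pow_le_pow_left₀ (Nat.cast_nonneg _) hc M
  rw [← mul_pow]
  exact le_trans (by exact_mod_cast h1) h2
end

section
/- Let M, N be positive integers, let φ : [0,∞) → (0,1] be non-increasing, and let L ∈ ℝ^{M×N} be φ-multiplicatively badly approximable. Let ε, T > 0 and Q ∈ [1,∞)^N with Q := (Q_1⋯Q_N)^{1/N}, and assume ε Q^N / φ(Q) < 1. Then Λ_L ∩ Z ⊆ C, i.e. every lattice point of Λ_L lying in Z has its last N coordinates equal to zero. -/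
theorem stmt6 (M N : ℕ) (hM : 0 < M) (hN : 0 < N)
    (φ : ℝ → ℝ) (hφanti : AntitoneOn φ (Set.Ici 0))
    (hφmem : ∀ x : ℝ, 0 ≤ x → φ x ∈ Set.Ioc (0 : ℝ) 1)
    (L : Matrix (Fin M) (Fin N) ℝ) (hbad : multBadlyApprox M N φ L)
    (Q : Fin N → ℝ) (hQ : ∀ j, 1 ≤ Q j) (ε T : ℝ) (hε : 0 < ε) (hT : 0 < T)
    (hsmall : ε * geomMean N Q ^ N / φ (geomMean N Q) < 1) :
    latticeL M N L ∩ setZ M N ε T Q ⊆ setC M N := by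
  rintro v ⟨⟨p, q, hp, hq⟩, hprod, -, hv⟩ j
  by_contra hj
  have hq0 : q ≠ 0 := by
    rintro rfl
    exact hj (by simp [hq])
  have h1 := hbad q hq0
  have hPle : (∏ j, max 1 |(q j : ℝ)|) ≤ ∏ j, Q j := by
    refine Finset.prod_le_prod (fun j _ => by positivity) (fun j _ => max_le (hQ j) ?_)
    rw [← hq]
    exact hv j
  have hP0 : 0 < ∏ j, max 1 |(q j : ℝ)| :=
    Finset.prod_pos (fun j _ => lt_of_lt_of_le one_pos (le_max_left _ _))
  have hQ0 : 0 < ∏ j, Q j := hP0.trans_le hPle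
  have hG0 : 0 ≤ geomMean N Q := Real.rpow_nonneg hQ0.le _
  have hGN : geomMean N Q ^ N = ∏ j, Q j := by
    unfold geomMean
    rw [one_div]
    exact Real.rpow_inv_natCast_pow hQ0.le hN.ne'
  have h2 : φ (geomMean N Q) ≤ φ ((∏ j, max 1 |(q j : ℝ)|) ^ ((1 : ℝ) / (N : ℝ))) := by
    refine hφanti (Set.mem_Ici.2 (Real.rpow_nonneg hP0.le _)) (Set.mem_Ici.2 hG0) ?_
    exact Real.rpow_le_rpow hP0.le hPle (by positivity)
  have hD : (∏ i, distNearestInt (∑ j, L i j * (q j : ℝ))) ≤ ∏ i, |v (Sum.inl i)| := by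
    refine Finset.prod_le_prod (fun i _ => abs_nonneg _) (fun i _ => ?_)
    rw [hp]
    have := round_le (∑ j, L i j * (q j : ℝ)) (-(p i))
    simpa [distNearestInt] using this
  have hφ := (hφmem _ hG0).1
  rw [div_lt_one hφ, hGN] at hsmall
  have h3 : (∏ j, max 1 |(q j : ℝ)|) * ∏ i, distNearestInt (∑ j, L i j * (q j : ℝ))
      ≤ (∏ j, Q j) * ε :=
    mul_le_mul hPle (hD.trans hprod.le) (Finset.prod_nonneg fun i _ => abs_nonneg _) hQ0.le
  linarith [mul_comm ε (∏ j, Q j)]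
end
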